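/- arXiv:1807.07802 — 3 statements merged into one kernel-verified Lean document; each statement's English description precedes it below -/
import Mathlib

section
/- Every slender finitely generated Coxeter group is coherent. -/
def Group.Slender (G : Type*) [Group G] : Prop := ∀ H : Subgroup G, H.FG

def Group.FinitelyPresented (G : Type*) [Group G] : Prop :=
  ∃ (n : ℕ) (rels : Set (FreeGroup (Fin n))), rels.Finite ∧ Nonempty (PresentedGroup rels ≃* G)

def Group.Coherent (G : Type*) [Group G] : Prop :=
  ∀ H : Subgroup G, H.FG → Group.FinitelyPresented H

def SimpleGraph.NoInducedCycleGT3 {V : Type*} (Γ : SimpleGraph V) : Prop :=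
  ∀ n : ℕ, 4 ≤ n → IsEmpty (SimpleGraph.cycleGraph n ↪g Γ)

/-- The restriction of a Coxeter matrix to a set of indices
(corresponding to an induced subgraph of the Coxeter graph). -/
def CoxeterMatrix.restrict {V : Type*} (M : CoxeterMatrix V) (S : Set V) : CoxeterMatrix S where
  M a b := M a b
  isSymm := Matrix.IsSymm.ext fun a b => M.isSymm.apply a b
  diagonal a := M.diagonal a
  off_diagonal a b h := M.off_diagonal a b (fun hc => h (Subtype.ext hc))

/-- `M` is the Coxeter matrix associated to the simplicial graph `Γ` with edge labeling
`ψ : E → {2,3,4,...}` (recorded by the values of `M` on adjacent pairs): non-adjacent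
distinct vertices get the label `0` (that is, `∞`: no relation). -/
def CoxeterMatrix.IsMatrixOf {V : Type*} (M : CoxeterMatrix V) (Γ : SimpleGraph V) : Prop :=
  (∀ v w, Γ.Adj v w → 2 ≤ M v w) ∧ (∀ v w, v ≠ w → ¬Γ.Adj v w → M v w = 0)


theorem FPExt.core {P G Q : Type*} [Group P] [Group G] [Group Q] {a b : Type*}
    (φ : G →* Q) (f : FreeGroup a →* φ.ker) (hf : Function.Surjective f)
    (R : Set (FreeGroup a)) (hR : f.ker = Subgroup.normalClosure R)
    (g : FreeGroup b →* Q) (hg : Function.Surjective g)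
    (R' : Set (FreeGroup b)) (hR' : g.ker = Subgroup.normalClosure R')
    (X : FreeGroup a →* P) (Y : FreeGroup b →* P) (Ψ : P →* G)
    (hX : ∀ x, Ψ (X x) = f x) (hY : ∀ y, φ (Ψ (Y y)) = g y)
    (htop : X.range ⊔ Y.range = ⊤)
    (hXR : ∀ r ∈ R, X r = 1) (hYR : ∀ r ∈ R', Y r ∈ X.range)
    (h1 : ∀ i j, Y (.of j) * X (.of i) * (Y (.of j))⁻¹ ∈ X.range)
    (h2 : ∀ i j, (Y (.of j))⁻¹ * X (.of i) * Y (.of j) ∈ X.range) :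
    Function.Bijective Ψ := by
  have hfr : X.range = Subgroup.closure (Set.range fun i => X (.of i)) := by
    rw [MonoidHom.range_eq_map, ← FreeGroup.closure_range_of, MonoidHom.map_closure,
      ← Set.range_comp]
    rfl
  have hfrY : Y.range = Subgroup.closure (Set.range fun i => Y (.of i)) := by
    rw [MonoidHom.range_eq_map, ← FreeGroup.closure_range_of, MonoidHom.map_closure,
      ← Set.range_comp]
    rfl
  have c1 : ∀ j, ∀ k ∈ X.range, Y (.of j) * k * (Y (.of j))⁻¹ ∈ X.range := by
    intro j k hk
    have : X.range ≤ X.range.comap (MulAut.conj (Y (.of j))).toMonoidHom := by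
      conv_lhs => rw [hfr]
      rw [Subgroup.closure_le]
      rintro _ ⟨i, rfl⟩
      exact h1 i j
    exact this hk
  have c2 : ∀ j, ∀ k ∈ X.range, (Y (.of j))⁻¹ * k * (Y (.of j)) ∈ X.range := by
    intro j k hk
    have : X.range ≤ X.range.comap (MulAut.conj (Y (.of j))⁻¹).toMonoidHom := by
      conv_lhs => rw [hfr]
      rw [Subgroup.closure_le]
      rintro _ ⟨i, rfl⟩
      simpa using h2 i j
    simpa using this hk
  have hN : X.range.Normal := by
    rw [← Subgroup.normalizer_eq_top_iff, eq_top_iff, ← htop, sup_le_iff]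
    refine ⟨Subgroup.le_normalizer, ?_⟩
    rw [hfrY, Subgroup.closure_le]
    rintro _ ⟨j, rfl⟩
    simp only [SetLike.mem_coe, Subgroup.mem_normalizer_iff]
    intro k
    refine ⟨c1 j k, fun h => ?_⟩
    have := c2 j _ h
    simpa [mul_assoc] using this
  -- map from Q to P/K
  let q := QuotientGroup.mk' X.range
  have hker : ∀ y, g y = 1 → Y y ∈ X.range := by
    intro y hy
    have : g.ker ≤ X.range.comap Y := by
      rw [hR']
      exact Subgroup.normalClosure_le_normal (N := X.range.comap Y) hYR
    exact this hy
  constructor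
  · rw [injective_iff_map_eq_one]
    intro p hp
    have hdec : ∃ x y, p = X x * Y y := by
      have : p ∈ X.range ⊔ Y.range := htop ▸ Subgroup.mem_top p
      rw [← SetLike.mem_coe, Subgroup.normal_mul] at this
      obtain ⟨_, ⟨x, rfl⟩, _, ⟨y, rfl⟩, h⟩ := this
      exact ⟨x, y, h.symm⟩
    obtain ⟨x, y, rfl⟩ := hdec
    have hy : g y = 1 := by
      have := congrArg φ hp
      rw [map_mul, map_mul, hY, hX] at this
      simpa [(f x).2, MonoidHom.mem_ker.1 (f x).2] using this
    obtain ⟨x', hx'⟩ := hker y hy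
    rw [← hx', ← map_mul] at hp ⊢
    rw [hX] at hp
    have : x * x' ∈ f.ker := by
      rw [MonoidHom.mem_ker]; exact Subtype.ext hp
    rw [hR] at this
    have hle : Subgroup.normalClosure R ≤ X.ker :=
      Subgroup.normalClosure_le_normal hXR
    exact hle this
  · intro t
    obtain ⟨y, hy⟩ := hg (φ t)
    have : t * (Ψ (Y y))⁻¹ ∈ φ.ker := by
      rw [MonoidHom.mem_ker, map_mul, map_inv, hY, hy]; simp
    obtain ⟨x, hx⟩ := hf ⟨_, this⟩
    refine ⟨X x * Y y, ?_⟩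
    rw [map_mul, hX, hx]; simp

theorem FPExt.ext {G Q : Type*} [Group G] [Group Q] (φ : G →* Q) (hφ : Function.Surjective φ)
    (h1 : Group.IsFinitelyPresented φ.ker) (h2 : Group.IsFinitelyPresented Q) :
    Group.IsFinitelyPresented G := by
  obtain ⟨n, f, hf, R, hRf, hR⟩ := h1.out
  obtain ⟨m, g, hg, R', hR'f, hR'⟩ := h2.out
  let gh : FreeGroup (Fin m) →* G := FreeGroup.lift fun j => Function.surjInv hφ (g (.of j))
  have hgh : ∀ y, φ (gh y) = g y := by
    have : φ.comp gh = g := by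
      ext j
      simp [gh, Function.surjInv_eq]
    intro y
    exact DFunLike.congr_fun this y
  have l0 : ∀ r ∈ R', gh r ∈ φ.ker := by
    intro r hr
    rw [MonoidHom.mem_ker, hgh, ← MonoidHom.mem_ker, ← hR']
    exact Subgroup.subset_normalClosure hr
  have hn : φ.ker.Normal := inferInstance
  choose! A hA using fun (r : FreeGroup (Fin m)) (hr : r ∈ R') => hf ⟨gh r, l0 r hr⟩
  choose c1 hc1 using fun (i : Fin n) (j : Fin m) =>
    hf ⟨gh (.of j) * f (.of i) * (gh (.of j))⁻¹, hn.conj_mem _ (f (.of i)).2 _⟩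
  choose c2 hc2 using fun (i : Fin n) (j : Fin m) =>
    hf ⟨(gh (.of j))⁻¹ * f (.of i) * (gh (.of j)), by
      simpa using hn.conj_mem _ (f (.of i)).2 (gh (.of j))⁻¹⟩
  let ix : FreeGroup (Fin n) →* FreeGroup (Fin n ⊕ Fin m) := FreeGroup.map Sum.inl
  let iy : FreeGroup (Fin m) →* FreeGroup (Fin n ⊕ Fin m) := FreeGroup.map Sum.inr
  let S1 : Set (FreeGroup (Fin n ⊕ Fin m)) := ix '' R
  let S2 : Set (FreeGroup (Fin n ⊕ Fin m)) := (fun r => iy r * (ix (A r))⁻¹) '' R'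
  let S3 : Set (FreeGroup (Fin n ⊕ Fin m)) := Set.range fun p : Fin n × Fin m =>
    iy (.of p.2) * ix (.of p.1) * (iy (.of p.2))⁻¹ * (ix (c1 p.1 p.2))⁻¹
  let S4 : Set (FreeGroup (Fin n ⊕ Fin m)) := Set.range fun p : Fin n × Fin m =>
    (iy (.of p.2))⁻¹ * ix (.of p.1) * (iy (.of p.2)) * (ix (c2 p.1 p.2))⁻¹
  let S := S1 ∪ S2 ∪ (S3 ∪ S4)
  have hS : S.Finite := ((hRf.image _).union (hR'f.image _)).union
    ((Set.finite_range _).union (Set.finite_range _))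
  have : Finite S := hS
  let gens : Fin n ⊕ Fin m → G := Sum.elim (fun i => (f (.of i) : G)) (fun j => gh (.of j))
  have e1 : ∀ x, FreeGroup.lift gens (ix x) = f x := by
    have : (FreeGroup.lift gens).comp ix = φ.ker.subtype.comp f := by
      ext i; simp [gens, ix]
    intro x
    exact DFunLike.congr_fun this x
  have e2 : ∀ x, FreeGroup.lift gens (iy x) = gh x := by
    have : (FreeGroup.lift gens).comp iy = gh := by
      ext i; simp [gens, iy]
    intro x
    exact DFunLike.congr_fun this x
  have hrel : ∀ r ∈ S, FreeGroup.lift gens r = 1 := by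
    rintro r ((⟨r, hr, rfl⟩ | ⟨r, hr, rfl⟩) | (⟨p, rfl⟩ | ⟨p, rfl⟩))
    · rw [e1]
      have : f r = 1 := by
        rw [← MonoidHom.mem_ker, ← hR]; exact Subgroup.subset_normalClosure hr
      simp [this]
    · simp [e1, e2, hA r hr]
    · simp [e1, e2, hc1]
    · simp [e1, e2, hc2]
  let Ψ : PresentedGroup S →* G := PresentedGroup.toGroup hrel
  have hΨ : ∀ x, Ψ (PresentedGroup.mk S x) = FreeGroup.lift gens x := fun x => rfl
  have one_of : ∀ r ∈ S, PresentedGroup.mk S r = 1 := by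
    intro r hr
    exact (PresentedGroup.mk_eq_one_iff).2 (Subgroup.subset_normalClosure hr)
  have key := FPExt.core φ f hf R hR.symm g hg R' hR'.symm
    ((PresentedGroup.mk S).comp ix) ((PresentedGroup.mk S).comp iy) Ψ
    (fun x => by simp only [MonoidHom.comp_apply, hΨ, e1])
    (fun x => by simp only [MonoidHom.comp_apply, hΨ, e2, hgh])
    (by
      rw [eq_top_iff]
      have : (⊤ : Subgroup (PresentedGroup S)) = Subgroup.closure (Set.range PresentedGroup.of) :=
        (PresentedGroup.closure_range_of S).symm
      rw [this, Subgroup.closure_le]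
      rintro _ ⟨i | j, rfl⟩
      · exact Subgroup.mem_sup_left ⟨.of i, by simp [ix]; rfl⟩
      · exact Subgroup.mem_sup_right ⟨.of j, by simp [iy]; rfl⟩)
    (fun r hr => one_of _ (.inl (.inl ⟨r, hr, rfl⟩)))
    (fun r hr => ⟨A r, by
      have := one_of _ (.inl (.inr ⟨r, hr, rfl⟩))
      rw [map_mul, map_inv, mul_inv_eq_one] at this
      exact this.symm⟩)
    (fun i j => ⟨c1 i j, by
      have := one_of _ (.inr (.inl ⟨(i, j), rfl⟩))
      simp only [map_mul, map_inv] at this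
      rw [mul_inv_eq_one] at this
      exact this.symm⟩)
    (fun i j => ⟨c2 i j, by
      have := one_of _ (.inr (.inr ⟨(i, j), rfl⟩))
      simp only [map_mul, map_inv] at this
      rw [mul_inv_eq_one] at this
      exact this.symm⟩)
  exact Group.IsFinitelyPresented.equiv (MulEquiv.ofBijective Ψ key)

/-- every subgroup is finitely presented -/
def HFP (G : Type*) [Group G] : Prop := ∀ H : Subgroup G, Group.IsFinitelyPresented H

theorem HFP.of_injective {G Q : Type*} [Group G] [Group Q] (φ : G →* Q)
    (hφ : Function.Injective φ) (h : HFP Q) : HFP G := by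
  intro H
  have := h (H.map φ)
  exact Group.IsFinitelyPresented.equiv (H.equivMapOfInjective φ hφ).symm

theorem HFP.ext {G Q : Type*} [Group G] [Group Q] (φ : G →* Q)
    (h1 : HFP φ.ker) (h2 : HFP Q) : HFP G := by
  intro H
  let ψ : H →* Q := φ.comp H.subtype
  refine FPExt.ext ψ.rangeRestrict ψ.rangeRestrict_surjective ?_ (h2 _)
  let θ : ψ.rangeRestrict.ker →* φ.ker :=
    (H.subtype.comp ψ.rangeRestrict.ker.subtype).codRestrict φ.ker (by
      rintro ⟨x, hx⟩
      rw [MonoidHom.ker_rangeRestrict] at hx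
      exact hx)
  have hθ : Function.Injective θ := by
    intro x y hxy
    have := congrArg Subtype.val hxy
    exact Subtype.ext (Subtype.ext this)
  have := h1 θ.range
  exact Group.IsFinitelyPresented.equiv (MonoidHom.ofInjective hθ).symm

theorem HFP.of_finite (G : Type*) [Group G] [Finite G] : HFP G := fun _ => inferInstance

theorem HFP.int : HFP (Multiplicative ℤ) := by
  intro H
  rcases finite_or_infinite H with h | h
  · infer_instance
  · have : IsCyclic H := inferInstance
    exact Group.IsFinitelyPresented.equiv (mulEquivOfCyclicCardEq (G := Multiplicative ℤ) (by
      rw [Nat.card_eq_zero_of_infinite, Nat.card_eq_zero_of_infinite]))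

theorem HFP.pi (n : ℕ) : HFP (Fin n → Multiplicative ℤ) := by
  induction n with
  | zero => exact HFP.of_finite _
  | succ n ih =>
    refine HFP.ext (Pi.evalMonoidHom (fun _ => Multiplicative ℤ) 0) ?_ HFP.int
    let θ : (Pi.evalMonoidHom (fun _ : Fin (n+1) => Multiplicative ℤ) 0).ker →*
      (Fin n → Multiplicative ℤ) :=
      { toFun := fun x j => x.1 j.succ
        map_one' := rfl
        map_mul' := fun _ _ => rfl }
    refine HFP.of_injective θ ?_ ih
    rintro ⟨x, hx⟩ ⟨y, hy⟩ hxy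
    apply Subtype.ext
    funext j
    refine Fin.cases ?_ (fun j => congrFun hxy j) j
    rw [MonoidHom.mem_ker] at hx hy
    exact hx.trans hy.symm

section Refl
variable {E : Type*} [AddCommGroup E] [Module ℝ E]

/-- Reflection along `a`. -/
noncomputable def rf (B : E →ₗ[ℝ] E →ₗ[ℝ] ℝ) (a : E) : Module.End ℝ E :=
  LinearMap.id - ((2 : ℝ) • B a).smulRight a

theorem rf_apply (B : E →ₗ[ℝ] E →ₗ[ℝ] ℝ) (a v : E) : rf B a v = v - (2 * B a v) • a := by
  simp [rf]

variable {B : E →ₗ[ℝ] E →ₗ[ℝ] ℝ}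

theorem rf_self {a : E} (ha : B a a = 1) : rf B a a = -a := by
  rw [rf_apply, ha, mul_one, two_smul]; abel

theorem rf_rf {a : E} (ha : B a a = 1) : rf B a * rf B a = 1 := by
  ext v
  simp only [Module.End.mul_apply, rf_apply, map_sub, map_smul, ha, Module.End.one_apply,
    smul_eq_mul]
  module

theorem rf_isom (hs : ∀ x y, B x y = B y x) {a : E} (ha : B a a = 1) (x y : E) : B (rf B a x) (rf B a y) = B x y := by
  simp only [rf_apply, map_sub, map_smul, LinearMap.sub_apply, LinearMap.smul_apply, ha,
    smul_eq_mul, hs x a]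
  ring

theorem rf_neg (a : E) : rf B (-a) = rf B a := by
  ext v; simp [rf_apply]

theorem rf_mul_pow_isom (hs : ∀ x y, B x y = B y x) {a b : E} (ha : B a a = 1) (hb : B b b = 1) (n : ℕ) (x y : E) :
    B (((rf B a * rf B b) ^ n) x) (((rf B a * rf B b) ^ n) y) = B x y := by
  induction n generalizing x y with
  | zero => simp
  | succ n ih =>
    rw [pow_succ, Module.End.mul_apply, Module.End.mul_apply _ _ y, ih]
    simp only [Module.End.mul_apply, rf_isom hs ha, rf_isom hs hb]

theorem rf_mul_pow_eq_one (hs : ∀ x y, B x y = B y x) {a b : E} (ha : B a a = 1) (hb : B b b = 1) (hab : |B a b| < 1) (n : ℕ)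
    (h1 : ((rf B a * rf B b) ^ n) a = a) (h2 : ((rf B a * rf B b) ^ n) b = b) :
    (rf B a * rf B b) ^ n = 1 := by
  ext v
  have : ∀ k : ℕ, ∃ p q : ℝ, ((rf B a * rf B b) ^ k) v = v + p • a + q • b := by
    intro k
    induction k with
    | zero => exact ⟨0, 0, by simp⟩
    | succ k ih =>
      obtain ⟨p, q, h⟩ := ih
      rw [pow_succ', Module.End.mul_apply, h, Module.End.mul_apply, rf_apply B b, rf_apply]
      refine ⟨p - 2 * B a (v + p • a + q • b - (2 * B b (v + p • a + q • b)) • b),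
        q - 2 * B b (v + p • a + q • b), ?_⟩
      module
  obtain ⟨p, q, h⟩ := this n
  have i1 := rf_mul_pow_isom hs ha hb n a v
  have i2 := rf_mul_pow_isom hs ha hb n b v
  rw [h1, h] at i1
  rw [h2, h] at i2
  simp only [map_add, map_smul, smul_eq_mul, ha, hb, hs b a] at i1 i2
  have hc : B a b ^ 2 < 1 := by
    rw [← sq_abs]
    nlinarith [abs_nonneg (B a b)]
  set c := B a b
  have hp : p = 0 := by
    have : p * (1 - c ^ 2) = 0 := by linear_combination i1 - c * i2
    rcases mul_eq_zero.1 this with h | h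
    · exact h
    · linarith
  have hq : q = 0 := by
    have : q * (1 - c ^ 2) = 0 := by linear_combination i2 - c * i1
    rcases mul_eq_zero.1 this with h | h
    · exact h
    · linarith
  simp [h, hp, hq]

theorem rf_trig (hs : ∀ x y, B x y = B y x) {a b : E} (ha : B a a = 1) (hb : B b b = 1) (θ : ℝ) (hab : B a b = - Real.cos θ)
    (k : ℕ) : Real.sin θ • ((rf B a * rf B b) ^ k) a =
      Real.sin ((2 * k + 1) * θ) • a + Real.sin (2 * k * θ) • b := by
  induction k with
  | zero => simp
  | succ k ih =>
    rw [pow_succ', Module.End.mul_apply, ← map_smul, ih]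
    simp only [Module.End.mul_apply, rf_apply, map_sub, map_add, map_smul, ha, hb, hs b a, hab,
      smul_eq_mul]
    have e1 : Real.sin (2 * (k + 1 : ℕ) * θ) = 2 * Real.cos θ * Real.sin ((2 * k + 1) * θ)
        - Real.sin (2 * k * θ) := by
      have h1 : (2 * (k + 1 : ℕ) * θ) = (2 * k + 1) * θ + θ := by push_cast; ring
      have h2 : (2 * k * θ) = (2 * k + 1) * θ - θ := by ring
      rw [h1, h2, Real.sin_add, Real.sin_sub]; ring
    have e2 : Real.sin ((2 * (k + 1 : ℕ) + 1) * θ) = 2 * Real.cos θ * Real.sin (2 * (k + 1 : ℕ) * θ)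
        - Real.sin ((2 * k + 1) * θ) := by
      have h1 : ((2 * (k + 1 : ℕ) + 1) * θ) = (2 * (k + 1 : ℕ)) * θ + θ := by ring
      have h2 : ((2 * k + 1) * θ) = (2 * (k + 1 : ℕ)) * θ - θ := by push_cast; ring
      rw [h1, h2, Real.sin_add, Real.sin_sub]; ring
    rw [e2, e1]
    module

theorem rf_braid (hs : ∀ x y, B x y = B y x) {a b : E} (ha : B a a = 1) (hb : B b b = 1) (m : ℕ) (hm : 2 ≤ m)
    (hab : B a b = - Real.cos (Real.pi / m)) : (rf B a * rf B b) ^ m = 1 := by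
  have hm0 : (0 : ℝ) < m := by positivity
  have hm2 : (2 : ℝ) ≤ m := by exact_mod_cast hm
  have hpos : 0 < Real.pi / m := by positivity
  have hlt : Real.pi / m < Real.pi := by
    rw [div_lt_iff₀ hm0]; nlinarith [Real.pi_pos]
  have hsin := Real.sin_pos_of_pos_of_lt_pi hpos hlt
  have key : ∀ a b : E, B a a = 1 → B b b = 1 → B a b = - Real.cos (Real.pi / m) →
      ((rf B a * rf B b) ^ m) a = a := by
    intro a b ha hb hab
    have := rf_trig hs ha hb _ hab m
    have h1 : Real.sin ((2 * m + 1) * (Real.pi / m)) = Real.sin (Real.pi / m) := by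
      have : (2 * m + 1) * (Real.pi / m) = Real.pi / m + 2 * Real.pi := by field_simp; ring
      rw [this, Real.sin_add_two_pi]
    have h2 : Real.sin (2 * m * (Real.pi / m)) = 0 := by
      have : 2 * m * (Real.pi / m) = 2 * Real.pi := by field_simp
      rw [this, Real.sin_two_pi]
    rw [h1, h2, zero_smul, add_zero] at this
    exact smul_right_injective E hsin.ne' this
  refine rf_mul_pow_eq_one hs ha hb ?_ m (key a b ha hb hab) ?_
  · rw [hab, abs_neg, abs_lt]
    have h3 := Real.sin_sq_add_cos_sq (Real.pi / m)
    constructor <;> nlinarith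
  · have h1 := key b a hb ha (by rw [hs, hab])
    have h2 : (rf B a * rf B b) ^ m * (rf B b * rf B a) ^ m = 1 := by
      have hc : (rf B a * rf B b) * (rf B b * rf B a) = 1 := by
        rw [mul_assoc, ← mul_assoc (rf B b), rf_rf hb, one_mul, rf_rf ha]
      have hc' : (rf B b * rf B a) * (rf B a * rf B b) = 1 := by
        rw [mul_assoc, ← mul_assoc (rf B a), rf_rf ha, one_mul, rf_rf hb]
      have : Commute (rf B a * rf B b) (rf B b * rf B a) := hc.trans hc'.symm
      rw [← this.mul_pow, hc, one_pow]
    have := congrArg (fun f : Module.End ℝ E => f b) h2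
    simpa [Module.End.mul_apply, h1] using this
end Refl

section Geom
variable {ι : Type} [Fintype ι] [DecidableEq ι] (M : CoxeterMatrix ι)

/-- The canonical bilinear form. -/
noncomputable def gB : (ι → ℝ) →ₗ[ℝ] (ι → ℝ) →ₗ[ℝ] ℝ :=
  Matrix.toBilin' (Matrix.of fun i j => - Real.cos (Real.pi / M i j))

/-- The simple root. -/
abbrev sr (i : ι) : ι → ℝ := Pi.single i 1

theorem gB_sr (i j : ι) : gB M (sr i) (sr j) = - Real.cos (Real.pi / M i j) := by
  simp only [gB, sr, Matrix.toBilin'_single, Matrix.of_apply]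

theorem gB_sr_self (i : ι) : gB M (sr i) (sr i) = 1 := by
  simp [gB_sr]

theorem gB_symm (x y : ι → ℝ) : gB M x y = gB M y x := by
  simp only [gB, Matrix.toBilin'_apply, Matrix.of_apply]
  rw [Finset.sum_comm]
  refine Finset.sum_congr rfl fun i _ => Finset.sum_congr rfl fun j _ => ?_
  rw [M.symmetric i j]; ring

theorem geom_liftable : M.IsLiftable (fun i => rf (gB M) (sr i)) := by
  intro i j
  by_cases hij : i = j
  · subst hij
    rw [M.diagonal, pow_one, rf_rf (gB_sr_self M i)]
  · rcases Nat.eq_zero_or_pos (M i j) with h | h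
    · rw [h, pow_zero]
    · have := M.off_diagonal i j hij
      exact rf_braid (gB_symm M) (gB_sr_self M i) (gB_sr_self M j) _ (by omega) (gB_sr M i j)

/-- The geometric representation. -/
noncomputable def rho : M.Group →* Module.End ℝ (ι → ℝ) :=
  M.toCoxeterSystem.lift ⟨_, geom_liftable M⟩

theorem rho_simple (i : ι) : rho M (M.toCoxeterSystem.simple i) = rf (gB M) (sr i) :=
  M.toCoxeterSystem.lift_apply_simple (geom_liftable M) i

theorem rho_isom (w : M.Group) (x y : ι → ℝ) : gB M (rho M w x) (rho M w y) = gB M x y := by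
  refine M.toCoxeterSystem.simple_induction_left (p := fun w => ∀ x y,
    gB M (rho M w x) (rho M w y) = gB M x y) w ?_ ?_ x y
  · intro x y; simp
  · intro w i ih x y
    rw [map_mul, Module.End.mul_apply, Module.End.mul_apply, rho_simple,
      rf_isom (gB_symm M) (gB_sr_self M i), ih]

theorem rho_inv_apply (w : M.Group) (x : ι → ℝ) : rho M w (rho M w⁻¹ x) = x := by
  rw [← Module.End.mul_apply, ← map_mul]; simp

theorem rho_inv_apply' (w : M.Group) (x : ι → ℝ) : rho M w⁻¹ (rho M w x) = x := by
  rw [← Module.End.mul_apply, ← map_mul]; simp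

theorem rho_conj (w t : M.Group) (a : ι → ℝ) (h : rho M t = rf (gB M) a) :
    rho M (w * t * w⁻¹) = rf (gB M) (rho M w a) := by
  refine LinearMap.ext fun v => ?_
  rw [map_mul, map_mul, Module.End.mul_apply, Module.End.mul_apply, h, rf_apply, rf_apply, map_sub,
    map_smul, rho_inv_apply]
  have := rho_isom M w a (rho M w⁻¹ v)
  rw [rho_inv_apply] at this
  rw [this]

/-- `a` is a root. -/
def IsRoot' (a : ι → ℝ) : Prop := ∃ w i, a = rho M w (sr i)

variable {M}

theorem IsRoot'.norm {a : ι → ℝ} (h : IsRoot' M a) : gB M a a = 1 := by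
  obtain ⟨w, i, rfl⟩ := h
  rw [rho_isom, gB_sr_self]

theorem IsRoot'.map {a : ι → ℝ} (h : IsRoot' M a) (w : M.Group) : IsRoot' M (rho M w a) := by
  obtain ⟨v, i, rfl⟩ := h
  exact ⟨w * v, i, by rw [map_mul]; rfl⟩

theorem IsRoot'.neg {a : ι → ℝ} (h : IsRoot' M a) : IsRoot' M (-a) := by
  obtain ⟨v, i, rfl⟩ := h
  refine ⟨v * M.toCoxeterSystem.simple i, i, ?_⟩
  rw [map_mul, Module.End.mul_apply, rho_simple, rf_self (gB_sr_self M i), map_neg]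

theorem IsRoot'.exists_refl {a : ι → ℝ} (h : IsRoot' M a) : ∃ t, rho M t = rf (gB M) a := by
  obtain ⟨v, i, rfl⟩ := h
  exact ⟨_, rho_conj M v _ _ (rho_simple M i)⟩

theorem IsRoot'.ne_zero {a : ι → ℝ} (h : IsRoot' M a) : a ≠ 0 := by
  rintro rfl
  have := h.norm
  simp at this


/-- Chebyshev-like sequence. -/
noncomputable def chq (c : ℝ) : ℕ → ℝ
  | 0 => 0
  | 1 => 1
  | (k + 2) => 2 * c * chq c (k + 1) - chq c k

theorem chq_sin (θ : ℝ) (k : ℕ) : chq (Real.cos θ) k * Real.sin θ = Real.sin (k * θ) := by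
  induction k using Nat.twoStepInduction with
  | zero => simp [chq]
  | one => simp [chq]
  | more k h0 h1 =>
    have e1 : Real.sin ((k + 2 : ℕ) * θ) = 2 * Real.cos θ * Real.sin ((k + 1 : ℕ) * θ)
        - Real.sin (k * θ) := by
      have h1 : ((k + 2 : ℕ) * θ) = (k + 1 : ℕ) * θ + θ := by push_cast; ring
      have h2 : (k * θ) = (k + 1 : ℕ) * θ - θ := by push_cast; ring
      rw [h1, h2, Real.sin_add, Real.sin_sub]; ring
    rw [chq, e1, ← h0, ← h1]; ring

theorem chq_one (k : ℕ) : chq 1 k = k := by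
  induction k using Nat.twoStepInduction with
  | zero => simp [chq]
  | one => simp [chq]
  | more k h0 h1 => rw [chq, h0, h1]; push_cast; ring

theorem chq_nonneg (m k : ℕ) (hm : m ≠ 1) (hk : m ≠ 0 → k ≤ m) :
    0 ≤ chq (Real.cos (Real.pi / m)) k := by
  rcases Nat.eq_zero_or_pos m with rfl | h0
  · simp [chq_one]
  · have hm0 : (0 : ℝ) < m := by positivity
    have hm2 : (2 : ℝ) ≤ m := by exact_mod_cast (by omega : 2 ≤ m)
    have hpos : 0 < Real.pi / m := by positivity
    have hlt : Real.pi / m < Real.pi := by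
      rw [div_lt_iff₀ hm0]; nlinarith [Real.pi_pos]
    have hsin := Real.sin_pos_of_pos_of_lt_pi hpos hlt
    have hk' : (k : ℝ) ≤ m := by exact_mod_cast hk h0.ne'
    have h := chq_sin (Real.pi / m) k
    have h2 : 0 ≤ Real.sin (k * (Real.pi / m)) := by
      apply Real.sin_nonneg_of_nonneg_of_le_pi (by positivity)
      calc k * (Real.pi / m) ≤ m * (Real.pi / m) := by gcongr
        _ = Real.pi := by field_simp
    rw [← h] at h2
    exact nonneg_of_mul_nonneg_left h2 hsin

open CoxeterSystem in
theorem rho_alt (i j : ι) (k : ℕ) :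
    rho M (M.toCoxeterSystem.wordProd (alternatingWord i j k)) (sr i) =
      if Even k then chq (Real.cos (Real.pi / M i j)) (k + 1) • sr i +
          chq (Real.cos (Real.pi / M i j)) k • sr j
      else chq (Real.cos (Real.pi / M i j)) (k + 1) • sr j +
          chq (Real.cos (Real.pi / M i j)) k • sr i := by
  induction k with
  | zero => simp [alternatingWord, chq]
  | succ k ih =>
    rw [alternatingWord_succ', wordProd_cons, map_mul, Module.End.mul_apply, ih, rho_simple]
    have h1 := gB_sr M i j
    have h2 : gB M (sr j) (sr i) = _ := (gB_symm M _ _).trans h1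
    by_cases hk : Even k
    · have hk' : ¬ Even (k + 1) := by simpa [Nat.even_add_one] using hk
      rw [if_pos hk, if_pos hk, if_neg hk']
      simp only [rf_apply, map_add, map_smul, gB_sr_self, h2, chq, smul_eq_mul]
      module
    · have hk' : Even (k + 1) := by simpa [Nat.even_add_one] using hk
      rw [if_neg hk, if_neg hk, if_pos hk']
      simp only [rf_apply, map_add, map_smul, gB_sr_self, h1, chq, smul_eq_mul]
      module

open CoxeterSystem in
theorem rho_pos_aux (n : ℕ) : ∀ (w : M.Group) (i : ι), M.toCoxeterSystem.length w = n →
    ¬ M.toCoxeterSystem.IsRightDescent w i → 0 ≤ rho M w (sr i) := by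
  induction n using Nat.strong_induction_on with
  | _ n IH =>
  intro w i hn hi
  set cs := M.toCoxeterSystem with hcs
  by_cases hw : w = 1
  · subst hw
    simp [sr]
  obtain ⟨j, hj⟩ := cs.exists_rightDescent_of_ne_one hw
  have hij : i ≠ j := by rintro rfl; exact hi hj
  let P : ℕ → Prop := fun k => ∃ v, w = v * cs.wordProd (alternatingWord i j k) ∧
    cs.length w = cs.length v + k
  have hP1 : P 1 := by
    refine ⟨w * cs.simple j, by simp [alternatingWord], ?_⟩
    have := cs.isRightDescent_iff.1 hj
    omega
  have hb : ∀ k, P k → k ≤ cs.length w := by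
    rintro k ⟨v, -, h⟩; omega
  classical
  obtain ⟨K, hPK, hPK1, hK1⟩ : ∃ K, P K ∧ ¬ P (K + 1) ∧ 1 ≤ K := by
    refine ⟨Nat.findGreatest P (cs.length w), Nat.findGreatest_spec (hb 1 hP1) hP1, ?_,
      Nat.le_findGreatest (hb 1 hP1) hP1⟩
    intro h
    have := Nat.le_findGreatest (hb _ h) h
    omega
  obtain ⟨v, hv, hl⟩ := hPK
  obtain ⟨K', rfl⟩ : ∃ K', K = K' + 1 := ⟨K - 1, by omega⟩
  -- next letter
  have d1 : ¬ cs.IsRightDescent v (if Even (K' + 1) then j else i) := by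
    intro h
    apply hPK1
    refine ⟨v * cs.simple (if Even (K' + 1) then j else i), ?_, ?_⟩
    · rw [alternatingWord_succ', wordProd_cons, ← mul_assoc, simple_mul_simple_cancel_right]
      exact hv
    · have := cs.isRightDescent_iff.1 h
      omega
  have d2 : ¬ cs.IsRightDescent v (if Even K' then j else i) := by
    intro h
    have h1 := cs.isRightDescent_iff.1 h
    have h2 : w = v * cs.simple (if Even K' then j else i) *
        cs.wordProd (alternatingWord i j K') := by
      rw [hv, alternatingWord_succ', wordProd_cons, mul_assoc]
    have h3 := cs.length_mul_le (v * cs.simple (if Even K' then j else i))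
      (cs.wordProd (alternatingWord i j K'))
    have h4 := cs.length_wordProd_le (alternatingWord i j K')
    rw [length_alternatingWord] at h4
    rw [← h2] at h3
    omega
  have di : ¬ cs.IsRightDescent v i ∧ ¬ cs.IsRightDescent v j := by
    by_cases he : Even K'
    · have he' : ¬ Even (K' + 1) := by simpa [Nat.even_add_one] using he
      rw [if_neg he'] at d1
      rw [if_pos he] at d2
      exact ⟨d1, d2⟩
    · have he' : Even (K' + 1) := by simpa [Nat.even_add_one] using he
      rw [if_pos he'] at d1
      rw [if_neg he] at d2
      exact ⟨d2, d1⟩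
  have pi := IH (cs.length v) (by omega) v i rfl di.1
  have pj := IH (cs.length v) (by omega) v j rfl di.2
  have hKM : M i j ≠ 0 → K' + 1 + 1 ≤ M i j := by
    intro hM
    by_contra hlt
    have hnr := cs.not_isReduced_alternatingWord j i (m := K' + 1 + 1) (by rwa [M.symmetric])
      (by rw [M.symmetric]; omega)
    have hle := cs.length_wordProd_le (alternatingWord j i (K' + 1 + 1))
    have hlt' : cs.length (cs.wordProd (alternatingWord j i (K' + 1 + 1))) < K' + 1 + 1 := by
      unfold CoxeterSystem.IsReduced at hnr
      rw [length_alternatingWord] at hnr hle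
      omega
    have h1 := cs.not_isRightDescent_iff.1 hi
    have h2 : w * cs.simple i = v * cs.wordProd (alternatingWord j i (K' + 1 + 1)) := by
      rw [alternatingWord_succ j i, wordProd_concat, hv, mul_assoc]
    have h3 := cs.length_mul_le v (cs.wordProd (alternatingWord j i (K' + 1 + 1)))
    rw [← h2] at h3
    omega
  have n1 := chq_nonneg (M i j) (K' + 1 + 1) (M.off_diagonal i j hij) hKM
  have n2 := chq_nonneg (M i j) (K' + 1) (M.off_diagonal i j hij) (fun h => by have := hKM h; omega)
  rw [hv, map_mul, Module.End.mul_apply, rho_alt]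
  split_ifs <;> rw [map_add, map_smul, map_smul] <;>
    exact add_nonneg (smul_nonneg n1 (by assumption)) (smul_nonneg n2 (by assumption))

theorem rho_pos {w : M.Group} {i : ι} (h : ¬ M.toCoxeterSystem.IsRightDescent w i) :
    0 ≤ rho M w (sr i) := rho_pos_aux _ w i rfl h

theorem rho_neg {w : M.Group} {i : ι} (h : M.toCoxeterSystem.IsRightDescent w i) :
    rho M w (sr i) ≤ 0 := by
  rw [CoxeterSystem.isRightDescent_iff_not_isRightDescent_mul] at h
  have := rho_pos h
  rwa [map_mul, Module.End.mul_apply, rho_simple, rf_self (gB_sr_self M i), map_neg,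
    Left.nonneg_neg_iff] at this

theorem IsRoot'.pos_or_neg {a : ι → ℝ} (h : IsRoot' M a) : 0 ≤ a ∨ a ≤ 0 := by
  obtain ⟨w, i, rfl⟩ := h
  by_cases hd : M.toCoxeterSystem.IsRightDescent w i
  · exact .inr (rho_neg hd)
  · exact .inl (rho_pos hd)

theorem IsRoot'.not_both {a : ι → ℝ} (h : IsRoot' M a) (h1 : 0 ≤ a) (h2 : a ≤ 0) : False :=
  h.ne_zero (le_antisymm h2 h1)

theorem eq_one_of_pos {w : M.Group} (h : ∀ i, 0 ≤ rho M w (sr i)) : w = 1 := by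
  by_contra hw
  obtain ⟨j, hj⟩ := M.toCoxeterSystem.exists_rightDescent_of_ne_one hw
  exact IsRoot'.not_both ⟨w, j, rfl⟩ (h j) (rho_neg hj)

theorem sr_nonneg (i : ι) : 0 ≤ sr i := by simp [sr]

variable (M) in
/-- Inversion set. -/
def NN (w : M.Group) : Set (ι → ℝ) := {a | IsRoot' M a ∧ 0 ≤ a ∧ rho M w a ≤ 0}

theorem NN_finite (w : M.Group) : (NN M w).Finite := by
  refine M.toCoxeterSystem.simple_induction_right (p := fun w => (NN M w).Finite) w ?_ ?_
  · refine Set.finite_empty.subset ?_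
    rintro a ⟨h1, h2, h3⟩
    exact h1.not_both h2 (by simpa using h3)
  · intro w i ih
    refine ((ih.image (rho M (M.toCoxeterSystem.simple i))).union
      (Set.finite_singleton (sr i))).subset ?_
    rintro a ⟨h1, h2, h3⟩
    set b := rho M (M.toCoxeterSystem.simple i) a with hb
    have hab : rho M (M.toCoxeterSystem.simple i) b = a := by
      rw [hb, ← Module.End.mul_apply, ← map_mul, CoxeterSystem.simple_mul_simple_self, map_one, Module.End.one_apply]
    have hbr : IsRoot' M b := h1.map _
    rw [map_mul, Module.End.mul_apply, ← hb] at h3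
    rcases hbr.pos_or_neg with hp | hn
    · exact .inl ⟨b, ⟨hbr, hp, h3⟩, hab⟩
    · right
      rw [rho_simple, rf_apply] at hb
      have hz : ∀ j, j ≠ i → a j = 0 := by
        intro j hj
        have e1 : b j = a j := by rw [hb]; simp [sr, hj]
        exact le_antisymm (e1 ▸ hn j) (h2 j)
      have ha : a = a i • sr i := by
        funext j
        by_cases hj : j = i
        · subst hj; simp [sr]
        · simp [sr, hj, hz j hj]
      have hnorm := h1.norm
      rw [ha] at hnorm
      simp only [map_smul, LinearMap.smul_apply, gB_sr_self, smul_eq_mul, mul_one] at hnorm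
      have h0 : 0 ≤ a i := h2 i
      have h11 : a i = 1 := by nlinarith
      rw [h11, one_smul] at ha
      exact ha


end Geom

section Congr

theorem one_add_pow_aux {R : Type*} [Ring R] (X : R) (n : ℕ) :
    ∃ Y, (1 + X) ^ n = 1 + n • X + X * X * Y := by
  induction n with
  | zero => exact ⟨0, by simp⟩
  | succ n ih =>
    obtain ⟨Y, h⟩ := ih
    refine ⟨n • 1 + Y + X * Y, ?_⟩
    rw [pow_succ', h]
    simp only [nsmul_eq_mul, mul_add, add_mul, one_mul, mul_one, Nat.cast_add, Nat.cast_one]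
    have e1 : X * (↑n * X) = n * (X * X) := by rw [← mul_assoc, ← Nat.cast_comm, mul_assoc]
    have e2 : X * X * (n : R) = n * (X * X) := (Nat.cast_comm n (X * X)).symm
    rw [e1, e2]
    simp only [mul_assoc]
    abel

theorem mat_prime {n : Type*} [Fintype n] [DecidableEq n] (X : Matrix n n ℤ) (p q : ℕ)
    (hp : p.Prime) (hq : q.Prime) (hpq : p ≠ q) (hX : ∀ i j, (p : ℤ) ∣ X i j)
    (h : (1 + X) ^ q = 1) : X = 0 := by
  obtain ⟨Y, hY⟩ := one_add_pow_aux X q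
  rw [h] at hY
  have hY' : ∀ i j, (q : ℤ) * X i j = - (X * X * Y) i j := by
    intro i j
    have hZ : q • X = - (X * X * Y) := by
      rw [add_assoc, left_eq_add] at hY
      exact eq_neg_of_add_eq_zero_left hY
    have := congrFun (congrFun hZ i) j
    simpa [Matrix.smul_apply, nsmul_eq_mul] using this
  have key : ∀ k : ℕ, ∀ i j, (p : ℤ) ^ (k + 1) ∣ X i j := by
    intro k
    induction k with
    | zero => simpa using hX
    | succ k ih =>
      intro i j
      have h1 : (p : ℤ) ^ (k + 1 + 1) ∣ q * X i j := by
        rw [hY', Matrix.mul_apply, dvd_neg]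
        refine Finset.dvd_sum fun l _ => Dvd.dvd.mul_right ?_ _
        rw [Matrix.mul_apply]
        refine Finset.dvd_sum fun m _ => ?_
        refine (pow_dvd_pow (p : ℤ) (by omega : k + 1 + 1 ≤ (k + 1) + (k + 1))).trans ?_
        rw [pow_add]
        exact mul_dvd_mul (ih _ _) (ih _ _)
      have hc : IsCoprime ((p : ℤ) ^ (k + 1 + 1)) q := by
        apply IsCoprime.pow_left
        exact Nat.isCoprime_iff_coprime.2 ((Nat.coprime_primes hp hq).2 hpq)
      exact hc.dvd_of_dvd_mul_left h1
  ext i j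
  by_contra hne
  have h2 := Int.le_of_dvd (abs_pos.2 hne) ((dvd_abs _ _).2 (key (X i j).natAbs i j))
  have h3 : (X i j).natAbs + 1 < p ^ ((X i j).natAbs + 1) := Nat.lt_pow_self hp.one_lt
  have h4 : ((p ^ ((X i j).natAbs + 1) : ℕ) : ℤ) ≤ ((X i j).natAbs : ℤ) := by
    push_cast; exact h2
  have h5 : p ^ ((X i j).natAbs + 1) ≤ (X i j).natAbs := by exact_mod_cast h4
  omega

theorem mat_tf {n : Type*} [Fintype n] [DecidableEq n] (k : ℕ) : ∀ (X : Matrix n n ℤ), 0 < k →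
    X.map (Int.castRingHom (ZMod 6)) = 1 → X ^ k = 1 → X = 1 := by
  induction k using induction_on_primes with
  | zero => intro X h; omega
  | one => intro X _ _ h; simpa using h
  | prime_mul q m hq ih =>
    intro X h0 h1 h2
    have hm : 0 < m := Nat.pos_of_mul_pos_left h0 
    have h3 : (X ^ m).map (Int.castRingHom (ZMod 6)) = 1 := by
      have := map_pow (Int.castRingHom (ZMod 6)).mapMatrix X m
      simp only [RingHom.mapMatrix_apply, h1, one_pow] at this
      exact this
    have h6 : ∀ i j, (6 : ℤ) ∣ (X ^ m - 1) i j := by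
      intro i j
      have := congrFun (congrFun h3 i) j
      refine (ZMod.intCast_zmod_eq_zero_iff_dvd _ 6).1 ?_
      simp only [Matrix.map_apply, Int.coe_castRingHom] at this
      rw [Matrix.sub_apply, Int.cast_sub, this, Matrix.one_apply, Matrix.one_apply]
      split_ifs <;> simp
    apply ih X hm h1
    have hq' : (1 + (X ^ m - 1)) ^ q = 1 := by
      rw [add_sub_cancel, ← pow_mul, mul_comm, h2]
    rw [← sub_eq_zero]
    by_cases hq2 : q = 2
    · exact mat_prime _ 3 q Nat.prime_three hq (by omega)
        (fun i j => (by norm_num : ((3 : ℕ) : ℤ) ∣ 6).trans (h6 i j)) hq'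
    · exact mat_prime _ 2 q Nat.prime_two hq (by omega)
        (fun i j => (by norm_num : ((2 : ℕ) : ℤ) ∣ 6).trans (h6 i j)) hq'

end Congr

section Geom
variable {ι : Type} [Fintype ι] [DecidableEq ι] {M : CoxeterMatrix ι}

variable (M) in
/-- Ring of entries. -/
noncomputable def entA : Subalgebra ℤ ℝ :=
  Algebra.adjoin ℤ (Set.range fun p : ι × ι => 2 * Real.cos (Real.pi / M p.1 p.2))

theorem entA_fg : (Subalgebra.toSubmodule (entA M)).FG := by
  apply fg_adjoin_of_finite (Set.finite_range _)
  rintro _ ⟨p, rfl⟩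
  have := Real.isIntegral_two_mul_cos_rat_mul_pi (1 / (M p.1 p.2 : ℚ))
  have e : (((1 / (M p.1 p.2 : ℚ)) : ℚ) : ℝ) * Real.pi = Real.pi / M p.1 p.2 := by
    push_cast; ring
  rw [e] at this
  exact this

variable (M) in
/-- The lattice. -/
noncomputable def lat : Submodule ℤ (ι → ℝ) :=
  Submodule.pi Set.univ fun _ => Subalgebra.toSubmodule (entA M)

theorem mem_lat {v : ι → ℝ} : v ∈ lat M ↔ ∀ i, v i ∈ entA M := by
  simp [lat, Submodule.mem_pi]

theorem lat_finite : Module.Finite ℤ (lat M) := by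
  have : Module.Finite ℤ (Subalgebra.toSubmodule (entA M)) := Module.Finite.iff_fg.2 entA_fg
  let f : (ι → Subalgebra.toSubmodule (entA M)) →ₗ[ℤ] lat M :=
    { toFun := fun v => ⟨fun i => v i, mem_lat.2 fun i => (v i).2⟩
      map_add' := fun _ _ => rfl
      map_smul' := fun _ _ => rfl }
  refine Module.Finite.of_surjective f ?_
  rintro ⟨v, hv⟩
  exact ⟨fun i => ⟨v i, mem_lat.1 hv i⟩, rfl⟩

theorem rho_lat (w : M.Group) : ∀ v ∈ lat M, rho M w v ∈ lat M := by
  refine M.toCoxeterSystem.simple_induction_left (p := fun w => ∀ v ∈ lat M,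
    rho M w v ∈ lat M) w ?_ ?_
  · intro v hv; simpa using hv
  · intro w i ih v hv
    rw [map_mul, Module.End.mul_apply, rho_simple]
    replace hv := mem_lat.1 (ih v hv)
    generalize rho M w v = u at hv
    rw [rf_apply, mem_lat]
    intro j
    simp only [Pi.sub_apply, Pi.smul_apply, smul_eq_mul]
    refine sub_mem (hv j) (mul_mem ?_ ?_)
    · have : 2 * gB M (sr i) u = ∑ j, -(2 * Real.cos (Real.pi / M i j)) * u j := by
        conv_lhs => rw [← Finset.univ_sum_single u]
        rw [map_sum, Finset.mul_sum]
        refine Finset.sum_congr rfl fun j _ => ?_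
        have : (Pi.single j (u j) : ι → ℝ) = u j • sr j := by
          rw [sr, ← Pi.single_smul]; simp
        rw [this, map_smul, gB_sr, smul_eq_mul]; ring
      rw [this]
      refine sum_mem fun j _ => mul_mem (neg_mem ?_) (hv j)
      exact Algebra.subset_adjoin ⟨(i, j), rfl⟩
    · by_cases h : j = i
      · subst h; simp [sr, one_mem]
      · simp [sr, h, zero_mem]

theorem sr_mem_lat (i : ι) : sr i ∈ lat M := by
  rw [mem_lat]
  intro j
  by_cases h : j = i
  · subst h; simp [sr, one_mem]
  · simp [sr, h, zero_mem]

variable (M) in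
/-- Integral representation. -/
noncomputable def rhoZ : M.Group →* Module.End ℤ (lat M) where
  toFun w := ((rho M w).restrictScalars ℤ).restrict (rho_lat w)
  map_one' := by ext v; simp
  map_mul' w w' := by
    refine LinearMap.ext fun v => Subtype.ext ?_
    change rho M (w * w') v = rho M w (rho M w' v)
    rw [map_mul]; rfl

theorem rhoZ_coe (w : M.Group) (v : lat M) : ((rhoZ M w v : lat M) : ι → ℝ) = rho M w v := rfl

theorem rho_eq_one_of_rhoZ {w : M.Group} (h : rhoZ M w = 1) : w = 1 := by
  apply eq_one_of_pos
  intro i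
  have := rhoZ_coe w ⟨sr i, sr_mem_lat i⟩
  rw [h] at this
  rw [← this]
  exact sr_nonneg i

variable (M) in
theorem exists_congr_subgroup : ∃ (Q : Type) (_ : Group Q) (_ : Finite Q) (φ : M.Group →* Q),
    ∀ g, φ g = 1 → ∀ n, 0 < n → g ^ n = 1 → g = 1 := by
  have : Module.Finite ℤ (lat M) := lat_finite
  have : Module.Free ℤ (lat M) := Module.free_of_finite_type_torsion_free'
  let b := Module.finBasis ℤ (lat M)
  let n := Fin (Module.finrank ℤ (lat M))
  let σ : M.Group →* Matrix n n ℤ :=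
    ((LinearMap.toMatrixAlgEquiv b : Module.End ℤ (lat M) ≃ₐ[ℤ] Matrix n n ℤ) :
      Module.End ℤ (lat M) →* Matrix n n ℤ).comp (rhoZ M)
  have hσ : ∀ w, σ w = 1 → w = 1 := by
    intro w hw
    apply rho_eq_one_of_rhoZ
    apply (LinearMap.toMatrixAlgEquiv b).injective
    rw [map_one]; exact hw
  let τ : M.Group →* Matrix n n (ZMod 6) :=
    (((Int.castRingHom (ZMod 6)).mapMatrix : Matrix n n ℤ →+* Matrix n n (ZMod 6)) :
      Matrix n n ℤ →* Matrix n n (ZMod 6)).comp σ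
  have : Finite (Matrix n n (ZMod 6))ˣ := inferInstance
  refine ⟨(Matrix n n (ZMod 6))ˣ, inferInstance, this, τ.toHomUnits, ?_⟩
  intro g hg k hk hgk
  apply hσ
  apply mat_tf k _ hk
  · have := congrArg Units.val hg
    exact this
  · rw [← map_pow, hgk, map_one]

theorem rho_inj {w w' : M.Group} (h : rho M w = rho M w') : w = w' := by
  have : w⁻¹ * w' = 1 := by
    apply eq_one_of_pos
    intro i
    rw [map_mul, Module.End.mul_apply, ← h, rho_inv_apply']
    exact sr_nonneg i
  exact (inv_mul_eq_one.1 this)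

theorem seq_contra (y : ℕ → ℝ) (k : ℝ) (hk : k < 2) (hy : ∀ n, 0 < y n)
    (hr : ∀ n, y (n + 2) + y n = k * y (n + 1)) : False := by
  have hd : ∀ n, y (n + 2) - y (n + 1) = (y (n + 1) - y n) - (2 - k) * y (n + 1) := by
    intro n; linear_combination hr n
  have hc : 0 < 2 - k := by linarith
  by_cases h : ∃ n, y (n + 1) - y n < 0
  · obtain ⟨n, hn⟩ := h
    have h1 : ∀ m, y (n + m + 1) - y (n + m) ≤ y (n + 1) - y n := by
      intro m
      induction m with
      | zero => simp
      | succ m ih =>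
        have := hd (n + m)
        have h2 := mul_pos hc (hy (n + m + 1))
        rw [show n + (m + 1) + 1 = n + m + 2 by ring, show n + (m + 1) = n + m + 1 by ring]
        linarith
    have h2 : ∀ m : ℕ, y (n + m) ≤ y n + m * (y (n + 1) - y n) := by
      intro m
      induction m with
      | zero => simp
      | succ m ih =>
        have := h1 m
        rw [← add_assoc]; push_cast; linarith
    obtain ⟨m, hm⟩ := exists_nat_gt (y n / -(y (n + 1) - y n))
    rw [div_lt_iff₀ (by linarith)] at hm
    have := h2 m
    have := hy (n + m)
    linarith
  · push Not at h
    have h1 : ∀ n, y 0 ≤ y n := by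
      intro n
      induction n with
      | zero => exact le_rfl
      | succ n ih => have := h n; linarith
    have h2 : ∀ n : ℕ, y (n + 1) - y n ≤ (y 1 - y 0) - n * ((2 - k) * y 0) := by
      intro n
      induction n with
      | zero => simp
      | succ n ih =>
        have := hd n
        have h3 := mul_le_mul_of_nonneg_left (h1 (n + 1)) hc.le
        push_cast
        rw [show n + 1 + 1 = n + 2 by ring]
        linarith
    obtain ⟨m, hm⟩ := exists_nat_gt ((y 1 - y 0) / ((2 - k) * y 0))
    rw [div_lt_iff₀ (mul_pos hc (hy 0))] at hm
    have := h2 m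
    have := h m
    linarith

theorem IsRoot'.sum_pos {a : ι → ℝ} (h : IsRoot' M a) (h0 : 0 ≤ a) : 0 < ∑ i, a i := by
  refine lt_of_le_of_ne (Finset.sum_nonneg fun i _ => h0 i) ?_
  intro h1
  apply h.ne_zero
  funext i
  exact (Finset.sum_eq_zero_iff_of_nonneg (fun i _ => h0 i)).1 h1.symm i (Finset.mem_univ i)

theorem IsRoot'.sum_neg {a : ι → ℝ} (h : IsRoot' M a) (h0 : a ≤ 0) : ∑ i, a i < 0 := by
  have := h.neg.sum_pos (neg_nonneg.2 h0)
  simpa using this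

theorem exists_pow_fix {a b : ι → ℝ} (ha : IsRoot' M a) (hb : IsRoot' M b)
    (hab : |gB M a b| < 1) (h : M.Group) (hh : rho M h = rf (gB M) a * rf (gB M) b) :
    ∃ m, 0 < m ∧ rho M (h ^ m) a = a := by
  by_contra hno
  push Not at hno
  have hinj : Function.Injective fun n : ℕ => rho M (h ^ n) a := by
    have aux : ∀ n m : ℕ, n < m → rho M (h ^ n) a ≠ rho M (h ^ m) a := by
      intro n m hnm he
      apply hno (m - n) (by omega)
      have : h ^ m = h ^ n * h ^ (m - n) := by rw [← pow_add]; congr 1; omega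
      rw [this, map_mul, Module.End.mul_apply] at he
      have := congrArg (rho M (h ^ n)⁻¹) he
      rw [rho_inv_apply', rho_inv_apply'] at this
      exact this.symm
    intro n m he
    rcases lt_trichotomy n m with h1 | h1 | h1
    · exact absurd he (aux _ _ h1)
    · exact h1
    · exact absurd he.symm (aux _ _ h1)
  set x : ℕ → ι → ℝ := fun n => rho M (h ^ n) a with hx
  have hxr : ∀ n, IsRoot' M (x n) := fun n => ha.map _
  have hsucc : ∀ n, rho M h (x n) = x (n + 1) := by
    intro n; rw [hx]; simp only; rw [← Module.End.mul_apply, ← map_mul, pow_succ']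
  have hfin : (x ⁻¹' (NN M h ∪ (fun v => -v) ⁻¹' NN M h)).Finite := by
    apply Set.Finite.preimage hinj.injOn
    exact (NN_finite h).union ((NN_finite h).preimage neg_injective.injOn)
  obtain ⟨N, hN⟩ := hfin.bddAbove
  have hN' : ∀ n, N + 1 ≤ n → n ∉ (x ⁻¹' (NN M h ∪ (fun v => -v) ⁻¹' NN M h)) := by
    intro n hn hm
    have := hN hm
    omega
  have hrec : ∀ n, x (n + 2) + x n = (4 * gB M a b ^ 2 - 2) • x (n + 1) := by
    intro n
    have e0 : rho M h (rho M h a) + a = (4 * gB M a b ^ 2 - 2) • rho M h a := by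
      rw [hh]
      simp only [Module.End.mul_apply, rf_apply, map_sub, map_smul, ha.norm, hb.norm,
        gB_symm M b a, smul_eq_mul]
      module
    have := congrArg (rho M (h ^ n)) e0
    rw [map_add, map_smul] at this
    rw [hx]; simp only
    rw [pow_add, pow_succ h n, pow_two]
    simpa only [map_mul, Module.End.mul_apply] using this
  have hk : 4 * gB M a b ^ 2 - 2 < 2 := by
    rw [← sq_abs]
    nlinarith [abs_nonneg (gB M a b)]
  have hrec' : ∀ n, ∑ i, x (n + 2) i + ∑ i, x n i = (4 * gB M a b ^ 2 - 2) * ∑ i, x (n + 1) i := by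
    intro n
    rw [← Finset.sum_add_distrib, Finset.mul_sum]
    refine Finset.sum_congr rfl fun i _ => ?_
    exact congrFun (hrec n) i
  rcases (hxr (N + 1)).pos_or_neg with h0 | h0
  · have : ∀ n, 0 ≤ x (N + 1 + n) := by
      intro n
      induction n with
      | zero => exact h0
      | succ n ih =>
        rcases (hxr (N + 1 + n + 1)).pos_or_neg with h1 | h1
        · exact h1
        · exact absurd (.inl ⟨hxr _, ih, by rwa [hsucc]⟩) (hN' (N + 1 + n) (by omega))
    refine seq_contra (fun n => ∑ i, x (N + 1 + n) i) _ hk (fun n => (hxr _).sum_pos (this n)) ?_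
    intro n
    exact hrec' (N + 1 + n)
  · have : ∀ n, x (N + 1 + n) ≤ 0 := by
      intro n
      induction n with
      | zero => exact h0
      | succ n ih =>
        rcases (hxr (N + 1 + n + 1)).pos_or_neg with h1 | h1
        · refine absurd (.inr ⟨(hxr _).neg, neg_nonneg.2 ih, ?_⟩) (hN' (N + 1 + n) (by omega))
          rw [map_neg, hsucc]; exact neg_nonpos.2 h1
        · exact h1
    refine seq_contra (fun n => - ∑ i, x (N + 1 + n) i) _ hk
      (fun n => neg_pos.2 ((hxr _).sum_neg (this n))) ?_
    intro n
    have := hrec' (N + 1 + n)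
    rw [show N + 1 + (n + 2) = N + 1 + n + 2 by ring, show N + 1 + (n + 1) = N + 1 + n + 1 by ring]
    linarith

theorem refl_mul_finite {a b : ι → ℝ} (ha : IsRoot' M a) (hb : IsRoot' M b)
    (hab : |gB M a b| < 1) (ta tb : M.Group) (hta : rho M ta = rf (gB M) a)
    (htb : rho M tb = rf (gB M) b) : ∃ n, 0 < n ∧ (ta * tb) ^ n = 1 := by
  have ha2 : ta * ta = 1 := rho_inj (by rw [map_mul, hta, rf_rf ha.norm, map_one])
  have hb2 : tb * tb = 1 := rho_inj (by rw [map_mul, htb, rf_rf hb.norm, map_one])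
  obtain ⟨m, hm, h1⟩ := exists_pow_fix ha hb hab (ta * tb) (by rw [map_mul, hta, htb])
  obtain ⟨m', hm', h2⟩ := exists_pow_fix hb ha (by rwa [gB_symm]) (tb * ta)
    (by rw [map_mul, hta, htb])
  have hinv : (tb * ta) = (ta * tb)⁻¹ := by
    rw [eq_comm, inv_eq_iff_mul_eq_one, mul_assoc, ← mul_assoc tb, hb2, one_mul, ha2]
  rw [hinv, inv_pow] at h2
  have h3 : rho M ((ta * tb) ^ m') b = b := by
    conv_lhs => rw [← h2]
    rw [rho_inv_apply]
  have fixpow : ∀ (g : M.Group) (v : ι → ℝ) (k : ℕ), rho M g v = v → rho M (g ^ k) v = v := by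
    intro g v k hg
    induction k with
    | zero => simp
    | succ k ih => rw [pow_succ, map_mul, Module.End.mul_apply, hg, ih]
  refine ⟨m * m', Nat.mul_pos hm hm', rho_inj ?_⟩
  have k1 := fixpow _ _ m' h1
  have k2 := fixpow _ _ m h3
  rw [← pow_mul] at k1 k2
  rw [mul_comm m' m] at k2
  rw [map_pow, map_mul, hta, htb] at k1 k2
  rw [map_pow, map_mul, hta, htb, map_one]
  exact rf_mul_pow_eq_one (gB_symm M) ha.norm hb.norm hab _ k1 k2

theorem one_le_abs_of_congr {Q : Type} [Group Q] (φ : M.Group →* Q)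
    (hφ : ∀ g, φ g = 1 → ∀ n, 0 < n → g ^ n = 1 → g = 1) (g : M.Group) (hg : φ g = 1)
    {a : ι → ℝ} (ha : IsRoot' M a) : 1 ≤ |gB M a (rho M g a)| := by
  by_contra hlt
  push Not at hlt
  obtain ⟨t, ht⟩ := ha.exists_refl
  have hr := rho_conj M g t a ht
  have h2 : t * t = 1 := rho_inj (by rw [map_mul, ht, rf_rf ha.norm, map_one])
  obtain ⟨n, hn, h1⟩ := refl_mul_finite ha (ha.map g) hlt t (g * t * g⁻¹) ht hr
  have h3 : t * (g * t * g⁻¹) = 1 := by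
    apply hφ _ _ n hn h1
    simp only [map_mul, map_inv, hg, one_mul, inv_one, mul_one]
    rw [← map_mul, h2, map_one]
  have h4 : rf (gB M) a = rf (gB M) (rho M g a) := by
    rw [← ht, ← hr]
    congr 1
    exact mul_left_cancel (h2.trans h3.symm)
  have h5 := congrArg (fun f : Module.End ℝ (ι → ℝ) => gB M a (f a)) h4
  simp only [rf_apply, map_sub, map_smul, ha.norm, smul_eq_mul] at h5
  rw [gB_symm M (rho M g a) a] at h5
  have h6 : gB M a (rho M g a) ^ 2 = 1 := by linarith
  rw [← sq_abs] at h6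
  nlinarith [abs_nonneg (gB M a (rho M g a))]

theorem reduced_list (γ : ℕ → ι → ℝ) (hr : ∀ n, IsRoot' M (γ n))
    (hB : ∀ n m, n ≠ m → gB M (γ n) (γ m) ≤ -1) (ρ : ℕ → M.Group)
    (hρ : ∀ n, rho M (ρ n) = rf (gB M) (γ n)) (N : ℕ) (l : List ℕ) (hl : ∀ k ∈ l, k < N)
    (hc : l.IsChain (· ≠ ·)) :
    ∃ c : ℕ → ℝ, (∀ j, 0 ≤ c j) ∧ (∀ k, l.head? = some k → ∀ j, c j ≤ c k) ∧
      rho M (l.map ρ).prod (γ N) = γ N + ∑ j ∈ Finset.range N, c j • γ j ∧ (l = [] → c = 0) := by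
  induction l with
  | nil => exact ⟨0, by simp, by simp, by simp, by simp⟩
  | cons k l ih =>
    obtain ⟨c, c0, c1, c2, c3⟩ := ih (fun k hk => hl k (List.mem_cons_of_mem _ hk)) hc.of_cons
    have hk : k < N := hl k List.mem_cons_self
    set v := γ N + ∑ j ∈ Finset.range N, c j • γ j with hv
    have hBv : gB M (γ k) v ≤ -1 + c k - ∑ j ∈ (Finset.range N).erase k, c j := by
      rw [hv, map_add, map_sum, ← Finset.add_sum_erase _ _ (Finset.mem_range.2 hk), map_smul,
        (hr k).norm, smul_eq_mul, mul_one]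
      have h1 := hB k N hk.ne
      have h2 : ∑ j ∈ (Finset.range N).erase k, gB M (γ k) (c j • γ j) ≤
          ∑ j ∈ (Finset.range N).erase k, -c j := by
        refine Finset.sum_le_sum fun j hj => ?_
        rw [map_smul, smul_eq_mul]
        have := hB k j (Finset.ne_of_mem_erase hj).symm
        nlinarith [c0 j]
      rw [Finset.sum_neg_distrib] at h2
      linarith
    have hmax : ∀ j, c j ≤ c k - 2 * gB M (γ k) v := by
      cases l with
      | nil =>
        have := c3 rfl
        subst this
        simp at hBv
        intro j
        simp
        linarith
      | cons k' l =>
        have hkk : k ≠ k' := by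
          have := List.isChain_cons_cons.1 hc
          exact this.1
        have hk' : k' < N := hl k' (by simp)
        have h1 : c k' ≤ ∑ j ∈ (Finset.range N).erase k, c j :=
          Finset.single_le_sum (f := c) (fun j _ => c0 j)
            (Finset.mem_erase.2 ⟨hkk.symm, Finset.mem_range.2 hk'⟩)
        intro j
        have h2 := c1 k' rfl j
        have h3 := c1 k' rfl k
        linarith
    refine ⟨fun j => c j + if j = k then -(2 * gB M (γ k) v) else 0, ?_, ?_, ?_, by simp⟩
    · intro j
      have := hmax k
      have := c0 j
      have := c0 k
      have := hmax j
      simp only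
      split_ifs with h
      · subst h; linarith
      · linarith
    · intro k1 hk1
      simp only [List.head?_cons, Option.some.injEq] at hk1
      subst hk1
      intro j
      have := hmax j
      simp only [if_true]
      split_ifs with h
      · subst h; linarith
      · linarith
    · rw [List.map_cons, List.prod_cons, map_mul, Module.End.mul_apply, c2, hρ, rf_apply]
      simp only [add_smul, Finset.sum_add_distrib, ite_smul, zero_smul, Finset.sum_ite_eq',
        Finset.mem_range, hk, if_true]
      rw [hv]; module

theorem closure_list (ρ : ℕ → M.Group) (hρ : ∀ n, ρ n * ρ n = 1) (N : ℕ) (w : M.Group)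
    (hw : w ∈ Subgroup.closure (ρ '' {i | i < N})) :
    ∃ l : List ℕ, (∀ k ∈ l, k < N) ∧ l.IsChain (· ≠ ·) ∧ w = (l.map ρ).prod := by
  have step : ∀ k < N, ∀ w, (∃ l : List ℕ, (∀ k ∈ l, k < N) ∧ l.IsChain (· ≠ ·) ∧
      w = (l.map ρ).prod) → (∃ l : List ℕ, (∀ k ∈ l, k < N) ∧ l.IsChain (· ≠ ·) ∧
      ρ k * w = (l.map ρ).prod) := by
    rintro k hk w ⟨l, h1, h2, rfl⟩
    cases l with
    | nil => exact ⟨[k], by simpa using hk, by simp, by simp⟩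
    | cons k' l =>
      by_cases h : k = k'
      · subst h
        refine ⟨l, fun j hj => h1 j (List.mem_cons_of_mem _ hj), h2.of_cons, ?_⟩
        rw [List.map_cons, List.prod_cons, ← mul_assoc, hρ, one_mul]
      · refine ⟨k :: k' :: l, ?_, List.isChain_cons_cons.2 ⟨h, h2⟩, by simp⟩
        intro j hj
        rcases List.mem_cons.1 hj with rfl | hj
        · exact hk
        · exact h1 j hj
  induction hw using Subgroup.closure_induction_left with
  | one => exact ⟨[], by simp, by simp, by simp⟩
  | mul_left x hx y _ ih =>
    obtain ⟨k, hk, rfl⟩ := hx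
    exact step k hk y ih
  | inv_mul_cancel x hx y _ ih =>
    obtain ⟨k, hk, rfl⟩ := hx
    have : (ρ k)⁻¹ = ρ k := inv_eq_of_mul_eq_one_left (hρ k)
    rw [this]
    exact step k hk y ih

theorem not_slender_of_seq (γ : ℕ → ι → ℝ) (hr : ∀ n, IsRoot' M (γ n))
    (hB : ∀ n m, n ≠ m → gB M (γ n) (γ m) ≤ -1) (hs : ∀ H : Subgroup M.Group, H.FG) : False := by
  choose ρ hρ using fun n => (hr n).exists_refl
  have hρ2 : ∀ n, ρ n * ρ n = 1 := fun n =>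
    rho_inj (by rw [map_mul, hρ, rf_rf (hr n).norm, map_one])
  obtain ⟨S, hS⟩ := hs (Subgroup.closure (Set.range ρ))
  have hmono : ∀ N N' : ℕ, N ≤ N' → Subgroup.closure (ρ '' {i | i < N}) ≤
      Subgroup.closure (ρ '' {i | i < N'}) := fun N N' h =>
    Subgroup.closure_mono (Set.image_mono fun i (hi : i < N) => lt_of_lt_of_le hi h)
  have hex : ∀ w ∈ Subgroup.closure (Set.range ρ), ∃ N : ℕ,
      w ∈ Subgroup.closure (ρ '' {i | i < N}) := by
    intro w hw
    induction hw using Subgroup.closure_induction with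
    | mem x hx =>
      obtain ⟨k, rfl⟩ := hx
      exact ⟨k + 1, Subgroup.subset_closure ⟨k, Nat.lt_succ_self k, rfl⟩⟩
    | one => exact ⟨0, one_mem _⟩
    | mul x y _ _ h1 h2 =>
      obtain ⟨n, h1⟩ := h1
      obtain ⟨m, h2⟩ := h2
      exact ⟨max n m, mul_mem (hmono _ _ (le_max_left _ _) h1) (hmono _ _ (le_max_right _ _) h2)⟩
    | inv x _ h1 =>
      obtain ⟨n, h1⟩ := h1
      exact ⟨n, inv_mem h1⟩
  have hS' : ∀ s ∈ S, ∃ N : ℕ, s ∈ Subgroup.closure (ρ '' {i | i < N}) := fun s h =>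
    hex s (hS ▸ Subgroup.subset_closure h)
  choose! f hf using hS'
  obtain ⟨N, hN⟩ : ∃ N, ∀ s ∈ S, f s ≤ N := ⟨S.sup f, fun s h => Finset.le_sup h⟩
  have hmem : ρ N ∈ Subgroup.closure (ρ '' {i | i < N}) := by
    have h1 : ρ N ∈ Subgroup.closure (Set.range ρ) := Subgroup.subset_closure ⟨N, rfl⟩
    rw [← hS] at h1
    refine (Subgroup.closure_le _).2 ?_ h1
    intro s h
    exact hmono _ _ (hN s h) (hf s h)
  obtain ⟨l, l1, l2, l3⟩ := closure_list ρ hρ2 N _ hmem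
  obtain ⟨c, c0, -, c2, -⟩ := reduced_list γ hr hB ρ hρ N l l1 l2
  rw [← l3, hρ, rf_self (hr N).norm] at c2
  have h1 := congrArg (gB M (γ (N + 1))) c2
  rw [map_neg, map_add, map_sum] at h1
  have h2 := hB (N + 1) N (by omega)
  have h3 : ∑ j ∈ Finset.range N, gB M (γ (N + 1)) (c j • γ j) ≤ 0 := by
    refine Finset.sum_nonpos fun j hj => ?_
    rw [map_smul, smul_eq_mul]
    have := hB (N + 1) j (by have := Finset.mem_range.1 hj; omega)
    nlinarith [c0 j]
  linarith

theorem not_slender_of_facing {α β γ : ι → ℝ} (ha : IsRoot' M α) (hb : IsRoot' M β)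
    (hc : IsRoot' M γ) (hab : gB M α β ≤ -1) (hac : gB M α γ ≤ -1) (hbc : gB M β γ ≤ -1)
    (hs : ∀ H : Subgroup M.Group, H.FG) : False := by
  obtain ⟨ta, hta⟩ := ha.exists_refl
  obtain ⟨tb, htb⟩ := hb.exists_refl
  have key : ∀ k : ℕ, ∃ p q : ℝ, rho M ((ta * tb) ^ k) γ = γ + p • α + q • β ∧ 0 ≤ q ∧ q ≤ p ∧
      (0 < k → 2 ≤ p) := by
    intro k
    induction k with
    | zero => exact ⟨0, 0, by simp, le_rfl, le_rfl, by simp⟩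
    | succ k ih =>
      obtain ⟨p, q, h, hq, hpq, -⟩ := ih
      rw [pow_succ', map_mul, Module.End.mul_apply, h, map_mul, Module.End.mul_apply, hta, htb]
      have hba := gB_symm M β α
      set q' := -q - 2 * gB M β γ - 2 * p * gB M α β with hq'
      refine ⟨-p - 2 * gB M α γ - 2 * q' * gB M α β, q', ?_, ?_, ?_, fun _ => ?_⟩
      · simp only [rf_apply, map_add, map_sub, map_smul, ha.norm, hb.norm, hba, smul_eq_mul]
        rw [hq']; module
      all_goals
        have h1 : q' ≥ p + 2 := by nlinarith
        nlinarith
  refine not_slender_of_seq (fun n => rho M ((ta * tb) ^ n) γ) (fun n => hc.map _) ?_ hs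
  have aux : ∀ n m : ℕ, n < m →
      gB M (rho M ((ta * tb) ^ n) γ) (rho M ((ta * tb) ^ m) γ) ≤ -1 := by
    intro n m hnm
    have e : (ta * tb) ^ m = (ta * tb) ^ n * (ta * tb) ^ (m - n) := by
      rw [← pow_add]; congr 1; omega
    rw [e, map_mul, Module.End.mul_apply, rho_isom]
    obtain ⟨p, q, h, hq, hpq, hp⟩ := key (m - n)
    have hp := hp (by omega)
    rw [h]
    simp only [map_add, map_smul, hc.norm, smul_eq_mul]
    rw [gB_symm M γ α, gB_symm M γ β]
    nlinarith
  intro n m hnm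
  rcases lt_or_gt_of_ne hnm with h | h
  · exact aux n m h
  · rw [gB_symm]; exact aux m n h

theorem nested {γ δ : ι → ℝ} (hc : IsRoot' M γ) (hd : IsRoot' M δ) (hc0 : 0 ≤ γ) (hd0 : 0 ≤ δ)
    (hB : gB M γ δ ≤ -1) (g : M.Group) (h1 : rho M g γ ≤ 0) (h2 : rho M g δ ≤ 0) : False := by
  obtain ⟨tc, htc⟩ := hc.exists_refl
  obtain ⟨td, htd⟩ := hd.exists_refl
  have step : ∀ p q : ℝ, 0 ≤ q → q + 1 ≤ p → ∃ p' q' : ℝ,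
      rho M (tc * td) (p • γ + q • δ) = p' • γ + q' • δ ∧ 0 ≤ q' ∧ q' + 1 ≤ p' ∧ q < q' ∧
        p < p' := by
    intro p q hq hpq
    have hdc := gB_symm M δ γ
    set q' := -q - 2 * p * gB M γ δ with hq'
    have e1 : q' ≥ p + 1 := by nlinarith
    have e2 : -p - 2 * q' * gB M γ δ ≥ q' + 1 := by nlinarith
    refine ⟨-p - 2 * q' * gB M γ δ, q', ?_, by linarith, by linarith, by linarith, by linarith⟩
    rw [map_mul, Module.End.mul_apply, htc, htd]
    simp only [rf_apply, map_add, map_sub, map_smul, hc.norm, hd.norm, hdc, smul_eq_mul]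
    rw [hq']; module
  have key : ∀ k : ℕ, ∃ p q : ℝ, rho M ((tc * td) ^ k) γ = p • γ + q • δ ∧ 0 ≤ q ∧ q + 1 ≤ p := by
    intro k
    induction k with
    | zero => exact ⟨1, 0, by simp, le_rfl, by simp⟩
    | succ k ih =>
      obtain ⟨p, q, h, hq, hpq⟩ := ih
      obtain ⟨p', q', h', hq', hpq', -⟩ := step p q hq hpq
      exact ⟨p', q', by rw [pow_succ', map_mul, Module.End.mul_apply, h, h'], hq', hpq'⟩
  have hsum : ∀ p q : ℝ, ∑ i, (p • γ + q • δ) i = p * ∑ i, γ i + q * ∑ i, δ i := by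
    intro p q
    simp [Finset.sum_add_distrib, Finset.mul_sum]
  have hmono : StrictMono fun k : ℕ => ∑ i, rho M ((tc * td) ^ k) γ i := by
    refine strictMono_nat_of_lt_succ fun k => ?_
    obtain ⟨p, q, h, hq, hpq⟩ := key k
    obtain ⟨p', q', h', hq', hpq', hl1, hl2⟩ := step p q hq hpq
    rw [pow_succ', map_mul, Module.End.mul_apply, h, h', hsum, hsum]
    have s1 := hc.sum_pos hc0
    have s2 := hd.sum_pos hd0
    nlinarith
  have hinj : Function.Injective fun k : ℕ => rho M ((tc * td) ^ k) γ := by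
    intro n m hnm
    apply hmono.injective
    simp only at hnm ⊢
    rw [hnm]
  refine Set.infinite_of_injective_forall_mem hinj (s := NN M g) ?_ (NN_finite g)
  intro k
  obtain ⟨p, q, h, hq, hpq⟩ := key k
  refine ⟨hc.map _, ?_, ?_⟩
  · rw [h]
    exact add_nonneg (smul_nonneg (by linarith) hc0) (smul_nonneg hq hd0)
  · rw [h, map_add, map_smul, map_smul]
    exact add_nonpos (smul_nonpos_of_nonneg_of_nonpos (by linarith) h1)
      (smul_nonpos_of_nonneg_of_nonpos hq h2)

section Coc
variable {G : Type} [Group G] (f : G →* M.Group)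

/-- Positive part of the orbit. -/
def posP (i : ι) : Set (ι → ℝ) := {v | (∃ g : G, v = rho M (f g) (sr i)) ∧ 0 ≤ v}

open Classical in
/-- Its indicator. -/
noncomputable def chi (i : ι) (v : ι → ℝ) : ℤ := if v ∈ posP f i then 1 else 0

theorem orb_iff (i : ι) (g : G) (v : ι → ℝ) : (∃ h : G, rho M (f g) v = rho M (f h) (sr i)) ↔
    ∃ h : G, v = rho M (f h) (sr i) := by
  constructor
  · rintro ⟨h, e⟩
    refine ⟨g⁻¹ * h, ?_⟩
    rw [map_mul, map_inv, map_mul, Module.End.mul_apply, ← e, rho_inv_apply']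
  · rintro ⟨h, rfl⟩
    exact ⟨g * h, by rw [map_mul, map_mul]; rfl⟩

theorem chi_support (i : ι) (g : G) :
    (Function.support fun x => chi f i (rho M (f g) x) - chi f i x).Finite := by
  refine ((NN_finite (f g)).union ((NN_finite (f g)).preimage
    (neg_injective (G := ι → ℝ)).injOn)).subset ?_
  intro x hx
  rw [Function.mem_support] at hx
  by_cases hO : ∃ h : G, x = rho M (f h) (sr i)
  · have hxr : IsRoot' M x := by
      obtain ⟨h, e⟩ := hO
      exact ⟨f h, i, e⟩
    have hO' := (orb_iff f i g x).2 hO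
    rcases hxr.pos_or_neg with h1 | h1 <;> rcases (hxr.map (f g)).pos_or_neg with h2 | h2
    · exfalso; apply hx
      rw [chi, chi, if_pos ⟨hO', h2⟩, if_pos ⟨hO, h1⟩, sub_self]
    · exact .inl ⟨hxr, h1, h2⟩
    · refine .inr ⟨hxr.neg, neg_nonneg.2 h1, ?_⟩
      rw [map_neg]; exact neg_nonpos.2 h2
    · exfalso; apply hx
      rw [chi, chi, if_neg (fun h => (hxr.map (f g)).not_both h.2 h2),
        if_neg (fun h => hxr.not_both h.2 h1), sub_self]
  · exfalso; apply hx
    rw [chi, chi, if_neg (fun h => hO ((orb_iff f i g x).1 h.1)), if_neg (fun h => hO h.1), sub_self]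

/-- The cocycle. -/
noncomputable def coc (i : ι) : G →* Multiplicative ℤ :=
  MonoidHom.mk' (fun g => Multiplicative.ofAdd (∑ᶠ x, (chi f i (rho M (f g⁻¹) x) - chi f i x))) <| by
    intro g h
    rw [← ofAdd_add]
    congr 1
    have e1 : ∀ x, chi f i (rho M (f (g * h)⁻¹) x) - chi f i x =
        (chi f i (rho M (f g⁻¹) x) - chi f i x) + (chi f i (rho M (f h⁻¹) (rho M (f g⁻¹) x))
          - chi f i (rho M (f g⁻¹) x)) := by
      intro x
      rw [mul_inv_rev, map_mul, map_mul, Module.End.mul_apply]; ring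
    let E : (ι → ℝ) ≃ (ι → ℝ) :=
      { toFun := rho M (f g⁻¹)
        invFun := rho M (f g)
        left_inv := fun x => by rw [map_inv]; exact rho_inv_apply M _ _
        right_inv := fun x => by rw [map_inv]; exact rho_inv_apply' M _ _ }
    rw [finsum_congr e1, finsum_add_distrib (chi_support f i _)]
    · congr 1
      exact finsum_comp_equiv E (f := fun y => chi f i (rho M (f h⁻¹) y) - chi f i y)
    · exact (chi_support f i h⁻¹).preimage E.injective.injOn

theorem coc_eq_one (hpos : ∀ g i, 1 ≤ gB M (sr i) (rho M (f g) (sr i))) (i : ι) (g : G)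
    (h : coc f i g = 1) : 0 ≤ rho M (f g⁻¹) (sr i) := by
  by_contra hn
  have hr : IsRoot' M (rho M (f g⁻¹) (sr i)) := ⟨_, _, rfl⟩
  have hneg := hr.pos_or_neg.resolve_left hn
  have h0 : ∑ᶠ x, (chi f i (rho M (f g⁻¹) x) - chi f i x) = 0 := Multiplicative.ofAdd.injective h
  rw [finsum_eq_sum_of_support_subset _ (s := (chi_support f i g⁻¹).toFinset) (by simp)] at h0
  have hroot : IsRoot' M (sr i) := ⟨1, i, by simp⟩
  have hei : chi f i (rho M (f g⁻¹) (sr i)) - chi f i (sr i) = -1 := by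
    rw [chi, chi, if_neg (fun h => hn h.2), if_pos ⟨⟨1, by simp⟩, sr_nonneg i⟩]; rfl
  have hle : ∀ x, chi f i (rho M (f g⁻¹) x) - chi f i x ≤ 0 := by
    intro x
    by_cases hx : rho M (f g⁻¹) x ∈ posP f i
    · by_cases hx' : x ∈ posP f i
      · rw [chi, chi, if_pos hx, if_pos hx', sub_self]
      · exfalso
        obtain ⟨k, rfl⟩ := (orb_iff f i g⁻¹ x).1 hx.1
        have hxr : IsRoot' M (rho M (f k) (sr i)) := ⟨_, _, rfl⟩
        have hx0 := hxr.pos_or_neg.resolve_left fun h => hx' ⟨⟨k, rfl⟩, h⟩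
        refine nested hroot hxr.neg (sr_nonneg i) (neg_nonneg.2 hx0) ?_ (f g⁻¹) hneg ?_
        · rw [map_neg]; have := hpos k i; linarith
        · rw [map_neg]; exact neg_nonpos.2 hx.2
    · rw [chi, if_neg hx, chi]; split_ifs <;> simp
  have hlt : ∑ x ∈ (chi_support f i g⁻¹).toFinset, (chi f i (rho M (f g⁻¹) x) - chi f i x) <
      ∑ x ∈ (chi_support f i g⁻¹).toFinset, 0 := by
    refine Finset.sum_lt_sum (fun x _ => hle x) ⟨sr i, ?_, by rw [hei]; norm_num⟩
    rw [Set.Finite.mem_toFinset, Function.mem_support, hei]; norm_num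
  rw [h0, Finset.sum_const_zero] at hlt
  exact lt_irrefl _ hlt

theorem HFP_of_pos (hf : Function.Injective f)
    (hpos : ∀ g i, 1 ≤ gB M (sr i) (rho M (f g) (sr i))) : HFP G := by
  let e := Fintype.equivFin ι
  let Ψ : G →* (Fin (Fintype.card ι) → Multiplicative ℤ) := MonoidHom.pi fun k => coc f (e.symm k)
  refine HFP.of_injective Ψ ?_ (HFP.pi _)
  rw [injective_iff_map_eq_one]
  intro g hg
  have : f g⁻¹ = 1 := by
    apply eq_one_of_pos
    intro i
    apply coc_eq_one f hpos
    have h1 : coc f (e.symm (e i)) g = 1 := congrFun hg (e i)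
    rwa [Equiv.symm_apply_apply] at h1
  have := hf (this.trans (map_one f).symm)
  exact inv_eq_one.1 this
end Coc

theorem sign_aux (hs : ∀ H : Subgroup M.Group, H.FG) {x y z : ι → ℝ} (hx : IsRoot' M x)
    (hy : IsRoot' M y) (hz : IsRoot' M z) (h1 : 1 ≤ |gB M x y|) (h2 : 1 ≤ |gB M y z|)
    (h3 : 1 ≤ |gB M x z|) :
    (if 0 ≤ gB M x z then 1 else -1 : ℤˣ) =
      (if 0 ≤ gB M x y then 1 else -1) * (if 0 ≤ gB M y z then 1 else -1) := by
  have nf : ∀ {α β γ : ι → ℝ}, IsRoot' M α → IsRoot' M β → IsRoot' M γ → gB M α β ≤ -1 →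
      gB M β γ ≤ -1 → gB M α γ ≤ -1 → False := fun ha hb hc hab hbc hac =>
    not_slender_of_facing ha hb hc hab hac hbc hs
  have n1 := nf hx hy hz
  have n2 := nf hx.neg hy hz
  have n3 := nf hx hy.neg hz
  have n4 := nf hx hy hz.neg
  simp only [map_neg, LinearMap.neg_apply] at n1 n2 n3 n4
  rw [le_abs] at h1 h2 h3
  have fin : ¬ ((if 0 ≤ gB M x z then 1 else -1 : ℤˣ) =
      (if 0 ≤ gB M x y then 1 else -1) * (if 0 ≤ gB M y z then 1 else -1)) → False := by
    intro hne
    rcases h1 with h1 | h1 <;> rcases h2 with h2 | h2 <;> rcases h3 with h3 | h3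
    · exact hne (by rw [if_pos (by linarith), if_pos (by linarith), if_pos (by linarith)]; rfl)
    · exact n3 (by linarith) (by linarith) (by linarith)
    · exact n2 (by linarith) (by linarith) (by linarith)
    · exact hne (by rw [if_neg (by linarith), if_pos (by linarith), if_neg (by linarith)]; rfl)
    · exact n4 (by linarith) (by linarith) (by linarith)
    · exact hne (by rw [if_neg (by linarith), if_neg (by linarith), if_pos (by linarith)]; rfl)
    · exact hne (by rw [if_pos (by linarith), if_neg (by linarith), if_neg (by linarith)]; rfl)
    · exact n1 (by linarith) (by linarith) (by linarith)
  exact not_not.1 fin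

theorem HFP_of_slender (hs : ∀ H : Subgroup M.Group, H.FG) : HFP M.Group := by
  obtain ⟨Q, _, _, φ, hφ⟩ := exists_congr_subgroup M
  refine HFP.ext φ ?_ (HFP.of_finite Q)
  have hroot : ∀ i, IsRoot' M (sr i) := fun i => ⟨1, i, by simp⟩
  have habs : ∀ (g : φ.ker) (i : ι), 1 ≤ |gB M (sr i) (rho M (g : M.Group) (sr i))| := fun g i =>
    one_le_abs_of_congr φ hφ g g.2 (hroot i)
  let ε : φ.ker →* (ι → ℤˣ) := MonoidHom.mk'
    (fun g i => if 0 ≤ gB M (sr i) (rho M (g : M.Group) (sr i)) then 1 else -1) <| by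
    intro g h
    funext i
    have e : gB M (rho M (g : M.Group) (sr i)) (rho M ((g * h : φ.ker) : M.Group) (sr i)) =
        gB M (sr i) (rho M (h : M.Group) (sr i)) := by
      rw [Subgroup.coe_mul, map_mul, Module.End.mul_apply, rho_isom]
    have := sign_aux hs (hroot i) ((hroot i).map (g : M.Group))
      ((hroot i).map ((g * h : φ.ker) : M.Group)) (habs g i) (by rw [e]; exact habs h i)
      (habs (g * h) i)
    rw [e] at this
    exact this
  refine HFP.ext ε ?_ (HFP.of_finite _)
  refine HFP_of_pos (φ.ker.subtype.comp ε.ker.subtype)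
    (φ.ker.subtype_injective.comp ε.ker.subtype_injective) ?_
  intro g i
  have h1 : ε g = 1 := g.2
  have h2 : (if 0 ≤ gB M (sr i) (rho M (g.1 : M.Group) (sr i)) then 1 else -1 : ℤˣ) = 1 :=
    congrFun h1 i
  have h3 := habs g.1 i
  split_ifs at h2 with h
  · rwa [abs_of_nonneg h] at h3
  · exact absurd h2 (by decide)
end Geom

/-- Every slender finitely generated Coxeter group is coherent. -/
theorem coxeterGroup_coherent_of_slender
    {V : Type} [Fintype V] (M : CoxeterMatrix V)
    (h : Group.Slender M.Group) :
    Group.Coherent M.Group := by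
  classical
  intro H _
  have := HFP_of_slender (M := M) h H
  obtain ⟨n, s, hs, ⟨e⟩⟩ := this.exists_mulEquiv_presentedGroup
  exact ⟨n, s, hs, ⟨e.symm⟩⟩
end

section
/- Let A ∗_C B be an amalgamated free product of groups. If A and B are coherent and C is slender, then A ∗_C B is coherent. In particular, the free product of two coherent groups is coherent. -/
theorem ker_fng {L V : Type} [Group L] [Group V] (hL : Group.FG L)
    (hV : Group.FinitelyPresented V) (θ : L →* V) (hθ : Function.Surjective θ) :
    ∃ T : Set L, T.Finite ∧ T ⊆ θ.ker ∧ θ.ker ≤ Subgroup.normalClosure T := by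
  obtain ⟨n, rels, hrels, ⟨e⟩⟩ := hV
  let p : FreeGroup (Fin n) →* V := e.toMonoidHom.comp (PresentedGroup.mk rels)
  have hp : Function.Surjective p := e.surjective.comp (PresentedGroup.mk_surjective rels)
  have hpk : ∀ w, p w = 1 → w ∈ Subgroup.normalClosure rels := by
    intro w hw
    have h1 : PresentedGroup.mk rels w = 1 := e.injective (by simpa [p] using hw)
    exact (QuotientGroup.eq_one_iff w).1 h1
  have hpk' : ∀ w ∈ rels, p w = 1 := by
    intro w hw
    have h1 : PresentedGroup.mk rels w = 1 :=
      (QuotientGroup.eq_one_iff w).2 (Subgroup.subset_normalClosure hw)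
    simp [p, h1]
  choose s hs using hθ
  let η : FreeGroup (Fin n) →* L := FreeGroup.lift (fun i => s (p (FreeGroup.of i)))
  have hη : ∀ w, θ (η w) = p w := by
    intro w
    have : θ.comp η = p := by
      ext i
      simp [η, hs]
    exact DFunLike.congr_fun this w
  choose r hr using hp
  obtain ⟨S, hS, hSf⟩ := Group.fg_iff.1 hL
  let T : Set L := η '' rels ∪ (fun x => x⁻¹ * η (r (θ x))) '' S
  refine ⟨T, (hrels.image _).union (hSf.image _), ?_, ?_⟩
  · rintro x (⟨w, hw, rfl⟩ | ⟨x, hx, rfl⟩)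
    · simpa [MonoidHom.mem_ker, hη] using hpk' w hw
    · simp [MonoidHom.mem_ker, hη, hr]
  · let M := Subgroup.normalClosure T
    have key : ∀ l : L, ∃ w, (QuotientGroup.mk' M) (η w) = QuotientGroup.mk' M l := by
      intro l
      have hl : l ∈ ((QuotientGroup.mk' M).comp η).range.comap (QuotientGroup.mk' M) := by
        have : (⊤ : Subgroup L) ≤ ((QuotientGroup.mk' M).comp η).range.comap (QuotientGroup.mk' M) := by
          rw [← hS, Subgroup.closure_le]
          intro x hx
          refine ⟨r (θ x), ?_⟩
          symm
          exact QuotientGroup.eq.2 (Subgroup.subset_normalClosure (Or.inr ⟨x, hx, rfl⟩))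
        exact this trivial
      obtain ⟨w, hw⟩ := hl
      exact ⟨w, hw⟩
    intro l hl
    obtain ⟨w, hw⟩ := key l
    have h2 : (η w)⁻¹ * l ∈ M := QuotientGroup.eq.1 hw
    have hTk : M ≤ θ.ker := by
      refine Subgroup.normalClosure_le_normal ?_
      rintro x (⟨w, hw, rfl⟩ | ⟨x, hx, rfl⟩)
      · simpa [MonoidHom.mem_ker, hη] using hpk' w hw
      · simp [MonoidHom.mem_ker, hη, hr]
    have h3 : p w = 1 := by
      have := hTk h2
      rw [MonoidHom.mem_ker] at this hl
      simpa [hl, hη] using this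
    have h4 : η w ∈ M := by
      have : Subgroup.normalClosure rels ≤ M.comap η := by
        refine Subgroup.normalClosure_le_normal ?_
        intro x hx
        exact Subgroup.subset_normalClosure (Or.inl ⟨x, hx, rfl⟩)
      exact this (hpk w h3)
    simpa using mul_mem h4 h2

theorem half_equiv {C Y K I : Type} [Group C] [MulAction C Y]
    (hfree : ∀ (c : C) (y : Y), c • y = y → c = 1) (α : K → Y)
    (hα : ∀ (c : C) k k', c • α k = α k' → k = k') (u : Y → I) (hu : Function.Injective u)
    (v : I → Y) (hv : ∀ (c : C) i i', c • v i = v i' → i = i')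
    (hvα : ∀ (c : C) i k, c • v i ≠ α k) :
    ∃ Φ : C × (K ⊕ I) ≃ Y, (∀ c c' z, Φ (c * c', z) = c • Φ (c', z)) ∧
      ∀ k, Φ (1, Sum.inl k) = α k := by
  let O := {o : MulAction.orbitRel.Quotient C Y // ∀ k, (Quotient.mk _ (α k)) ≠ o}
  let a : I → O := fun i => ⟨Quotient.mk _ (v i), fun k hk => by
    obtain ⟨c, hc⟩ := MulAction.orbitRel_apply.1 (Quotient.exact hk)
    exact hvα c i k hc⟩
  have ha : Function.Injective a := by
    intro i i' h
    have h' := Subtype.ext_iff.1 h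
    obtain ⟨c, hc⟩ := MulAction.orbitRel_apply.1 (Quotient.exact h')
    exact (hv c i' i hc).symm
  let b : O → I := fun o => u o.1.out
  have hb : Function.Injective b := by
    intro o o' h
    have := hu h
    apply Subtype.ext
    rw [← Quotient.out_eq o.1, ← Quotient.out_eq o'.1, this]
  obtain ⟨σ⟩ := Function.Embedding.antisymm ⟨a, ha⟩ ⟨b, hb⟩
  let base : K ⊕ I → Y := Sum.elim α (fun i => (σ i).1.out)
  have hbase : ∀ (c : C) z z', c • base z = base z' → z = z' := by
    rintro c (k | i) (k' | i') h
    · rw [hα c k k' h]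
    · exfalso
      apply (σ i').2 k
      have h' : c • α k = (σ i').1.out := h
      rw [← Quotient.out_eq (σ i').1, ← h']
      exact Quotient.sound (MulAction.orbitRel_apply.2 ⟨c⁻¹, by simp⟩)
    · exfalso
      apply (σ i).2 k'
      have h' : c • (σ i).1.out = α k' := h
      rw [← Quotient.out_eq (σ i).1, ← h']
      exact Quotient.sound (MulAction.orbitRel_apply.2 ⟨c, by simp⟩)
    · have h' : c • (σ i).1.out = (σ i').1.out := h
      have : (σ i') = (σ i) := by
        apply Subtype.ext
        rw [← Quotient.out_eq (σ i).1, ← Quotient.out_eq (σ i').1, ← h']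
        exact Quotient.sound (MulAction.orbitRel_apply.2 ⟨c, by simp⟩)
      rw [σ.injective this]
  have hbij : Function.Bijective (fun x : C × (K ⊕ I) => x.1 • base x.2) := by
    constructor
    · rintro ⟨c, z⟩ ⟨c', z'⟩ h
      have h : c • base z = c' • base z' := h
      have h1 : (c'⁻¹ * c) • base z = base z' := by
        rw [mul_smul, h, inv_smul_smul]
      have h2 := hbase _ _ _ h1
      subst h2
      have h3 := hfree _ _ h1
      rw [inv_mul_eq_one] at h3
      rw [h3]
    · intro y
      by_cases hy : ∃ k, (Quotient.mk (MulAction.orbitRel C Y) (α k)) = Quotient.mk _ y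
      · obtain ⟨k, hk⟩ := hy
        obtain ⟨c, hc⟩ := MulAction.orbitRel_apply.1 (Quotient.exact hk.symm)
        exact ⟨(c, Sum.inl k), hc⟩
      · push Not at hy
        obtain ⟨i, hi⟩ := σ.surjective ⟨Quotient.mk _ y, hy⟩
        have : Quotient.mk (MulAction.orbitRel C Y) y = Quotient.mk _ ((σ i).1.out) := by
          rw [Quotient.out_eq, hi]
        obtain ⟨c, hc⟩ := MulAction.orbitRel_apply.1 (Quotient.exact this)
        exact ⟨(c, Sum.inr i), hc⟩
  refine ⟨Equiv.ofBijective _ hbij, ?_, ?_⟩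
  · intro c c' z
    simp [mul_smul]
  · intro k
    simp [base]

theorem list_inj {X A Z : Type} (s : X ⊕ A → Z) (hs : Function.Injective s) :
    Function.Injective (Sum.elim (fun x => [s (Sum.inl x)])
      (fun p => s (Sum.inr p.2) :: p.1) : X ⊕ (Σ _ : List Z, A) → List Z) := by
  rintro (x | ⟨i, a⟩) (x' | ⟨i', a'⟩) h
  · simp only [Sum.elim_inl, List.cons.injEq, and_true] at h
    rw [Sum.inl_injective (hs h)]
  · simp only [Sum.elim_inl, Sum.elim_inr, List.cons.injEq] at h
    exact absurd (hs h.1) (by simp)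
  · simp only [Sum.elim_inl, Sum.elim_inr, List.cons.injEq] at h
    exact absurd (hs h.1) (by simp)
  · simp only [Sum.elim_inr, List.cons.injEq] at h
    rw [Sum.inr_injective (hs h.1), h.2]

theorem glue {A B C P : Type} [Group A] [Group B] [Group C] [Group P]
    (f : C →* A) (g : C →* B) (hf : Function.Injective f) (hg : Function.Injective g)
    (jA : A →* P) (jB : B →* P)
    (hP : ∀ (Q : Type) [Group Q] (kA : A →* Q) (kB : B →* Q), kA.comp f = kB.comp g →
        ∃! h : P →* Q, h.comp jA = kA ∧ h.comp jB = kB)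
    {X Y K : Type} [MulAction A X] [MulAction B Y]
    (hX : ∀ (a : A) (x : X), a • x = x → a = 1) (hY : ∀ (b : B) (y : Y), b • y = y → b = 1)
    (α : K → X) (β : K → Y)
    (hαβ : ∀ c k k', f c • α k = α k' ↔ g c • β k = β k') :
    ∃ (Ω : Type) (_ : MulAction P Ω) (ι : X → Ω) (κ : Y → Ω),
      Function.Injective ι ∧ (∀ a x, ι (a • x) = jA a • ι x) ∧
      (∀ b y, κ (b • y) = jB b • κ y) ∧ ∀ k, ι (α k) = κ (β k) := by
  let I := List ((X ⊕ A) ⊕ (Y ⊕ B))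
  let X' := X ⊕ (Σ _ : I, A)
  let Y' := Y ⊕ (Σ _ : I, B)
  let sK : Setoid K := ⟨fun k k' => ∃ c, f c • α k = α k',
    ⟨fun k => ⟨1, by simp⟩, fun {k k'} ⟨c, hc⟩ => ⟨c⁻¹, by simp [← hc]⟩,
      fun {k k' k''} ⟨c, hc⟩ ⟨d, hd⟩ => ⟨d * c, by simp [mul_smul, hc, hd]⟩⟩⟩
  let _ : MulAction C X' := MulAction.compHom X' f
  let _ : MulAction C Y' := MulAction.compHom Y' g
  have sX : ∀ (c : C) (x : X'), c • x = f c • x := fun _ _ => rfl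
  have sY : ∀ (c : C) (x : Y'), c • x = g c • x := fun _ _ => rfl
  obtain ⟨Φ, hΦ, hΦα⟩ := half_equiv (C := C) (Y := X') (K := Quotient sK) (I := I)
    (by
      rintro c (x | ⟨i, a⟩) h
      · rw [sX, Sum.smul_inl] at h
        exact hf ((hX _ _ (Sum.inl_injective h)).trans (map_one f).symm)
      · rw [sX, Sum.smul_inr] at h
        have := Sum.inr_injective h
        simp [Sigma.smul_mk] at this
        exact hf (this.trans (map_one f).symm))
    (fun k => Sum.inl (α k.out))
    (by
      intro c k k' h
      rw [sX, Sum.smul_inl] at h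
      have := Sum.inl_injective h
      rw [← Quotient.out_eq k, ← Quotient.out_eq k']
      exact Quotient.sound ⟨c, this⟩)
    (Sum.elim (fun x => [Sum.inl (Sum.inl x)]) (fun p => Sum.inl (Sum.inr p.2) :: p.1))
    (list_inj _ (Sum.inl_injective))
    (fun i => Sum.inr ⟨i, 1⟩)
    (by
      intro c i i' h
      rw [sX, Sum.smul_inr] at h
      have := Sum.inr_injective h
      simp [Sigma.smul_mk] at this
      exact this.1)
    (by
      intro c i k h
      rw [sX, Sum.smul_inr] at h
      exact Sum.inr_ne_inl h)
  obtain ⟨Ψ, hΨ, hΨβ⟩ := half_equiv (C := C) (Y := Y') (K := Quotient sK) (I := I)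
    (by
      rintro c (x | ⟨i, a⟩) h
      · rw [sY, Sum.smul_inl] at h
        exact hg ((hY _ _ (Sum.inl_injective h)).trans (map_one g).symm)
      · rw [sY, Sum.smul_inr] at h
        have := Sum.inr_injective h
        simp [Sigma.smul_mk] at this
        exact hg (this.trans (map_one g).symm))
    (fun k => Sum.inl (β k.out))
    (by
      intro c k k' h
      rw [sY, Sum.smul_inl] at h
      have := Sum.inl_injective h
      rw [← Quotient.out_eq k, ← Quotient.out_eq k']
      exact Quotient.sound ⟨c, (hαβ _ _ _).2 this⟩)
    (Sum.elim (fun x => [Sum.inr (Sum.inl x)]) (fun p => Sum.inr (Sum.inr p.2) :: p.1))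
    (list_inj _ (Sum.inr_injective))
    (fun i => Sum.inr ⟨i, 1⟩)
    (by
      intro c i i' h
      rw [sY, Sum.smul_inr] at h
      have := Sum.inr_injective h
      simp [Sigma.smul_mk] at this
      exact this.1)
    (by
      intro c i k h
      rw [sY, Sum.smul_inr] at h
      exact Sum.inr_ne_inl h)
  let Θ : X' ≃ Y' := Φ.symm.trans Ψ
  have hΘ : ∀ (c : C) (x : X'), Θ (c • x) = c • Θ x := by
    intro c x
    obtain ⟨⟨c', z⟩, rfl⟩ := Φ.surjective x
    simp only [Θ, Equiv.trans_apply]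
    rw [← hΦ, Equiv.symm_apply_apply, Equiv.symm_apply_apply, hΨ]
  have hΘα : ∀ k, Θ (Sum.inl (α k)) = Sum.inl (β k) := by
    intro k
    obtain ⟨c, hc⟩ : ∃ c, f c • α (Quotient.mk sK k).out = α k :=
      Quotient.exact (Quotient.out_eq (Quotient.mk sK k))
    have e1 : (Sum.inl (α k) : X') = c • Φ (1, Sum.inl (Quotient.mk sK k)) := by
      rw [hΦα, sX, Sum.smul_inl, hc]
    have e2 : (Sum.inl (β k) : Y') = c • Ψ (1, Sum.inl (Quotient.mk sK k)) := by
      rw [hΨβ, sY, Sum.smul_inl, (hαβ _ _ _).1 hc]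
    rw [e1, hΘ, e2]
    simp [Θ]
  let kA : A →* Equiv.Perm X' := MulAction.toPermHom A X'
  let kB : B →* Equiv.Perm X' := Θ.symm.permCongrHom.toMonoidHom.comp (MulAction.toPermHom B Y')
  obtain ⟨h, ⟨h1, h2⟩, -⟩ := hP (Equiv.Perm X') kA kB (by
    ext c x
    have := hΘ c x
    rw [sX, sY] at this
    simp [kA, kB, Equiv.permCongrHom, ← this])
  refine ⟨X', MulAction.compHom X' h, Sum.inl, fun y => Θ.symm (Sum.inl y), Sum.inl_injective,
    ?_, ?_, ?_⟩
  · intro a x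
    change _ = h (jA a) _
    have : h (jA a) = kA a := DFunLike.congr_fun h1 a
    rw [this]
    rfl
  · intro a x
    change _ = h (jB a) _
    have : h (jB a) = kB a := DFunLike.congr_fun h2 a
    rw [this]
    simp [kB, Equiv.permCongrHom]
    rfl
  · intro k
    simp [← hΘα]

theorem side {A F X Q : Type} [Group A] [Group F] [MulAction (A × F) X]
    (hA : Group.Coherent A)
    (N : Subgroup F) (hN : ∀ (w : F) (x : X), ((1 : A), w) • x = x ↔ w ∈ N)
    [Finite Q] (q : Q → X) (R : Set (Q × Q × (A × F))) (hR : R.Finite)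
    (hRt : ∀ r ∈ R, r.2.2 • q r.1 = q r.2.1) :
    ∃ Y : Set F, Y.Finite ∧ Y ⊆ N ∧ ∀ N' : Subgroup F, N'.Normal → Y ⊆ N' → N' ≤ N →
      ∃ (Ω : Type) (_ : MulAction (A × F) Ω) (ω : Q → Ω) (π : Ω → X),
        (∀ (g : A × F) x, π (g • x) = g • π x) ∧ (∀ i, π (ω i) = q i) ∧
        (∀ r ∈ R, r.2.2 • ω r.1 = ω r.2.1) ∧
        ∀ (x : Ω) w, ((1 : A), w) • x = x ↔ w ∈ N' := by
  let sQ : Setoid Q := ⟨fun i i' => ∃ x : A × F, x • q i = q i',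
    ⟨fun k => ⟨1, by simp⟩, fun {k k'} ⟨c, hc⟩ => ⟨c⁻¹, by simp [← hc]⟩,
      fun {k k' k''} ⟨c, hc⟩ ⟨d, hd⟩ => ⟨d * c, by simp [mul_smul, hc, hd]⟩⟩⟩
  let j : Q → Q := fun i => (Quotient.mk sQ i).out
  have hj : ∀ i, ∃ x : A × F, x • q (j i) = q i :=
    fun i => Quotient.exact (Quotient.out_eq (Quotient.mk sQ i))
  choose t ht using hj
  have hjj : ∀ i i' (x : A × F), x • q i = q i' → j i = j i' := by
    intro i i' x h
    simp only [j]
    rw [Quotient.sound (s := sQ) ⟨x, h⟩]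
  let S : Q → Set (A × F) := fun p => (fun r : Q × Q × (A × F) => (t r.2.1)⁻¹ * r.2.2 * t r.1) ''
    {r ∈ R | j r.1 = p}
  have hSf : ∀ p, (S p).Finite := fun p => (hR.subset (Set.sep_subset _ _)).image _
  let L : Q → Subgroup (A × F) := fun p => Subgroup.closure (S p)
  have hL : ∀ p, L p ≤ MulAction.stabilizer (A × F) (q p) := by
    intro p
    rw [Subgroup.closure_le]
    rintro _ ⟨⟨i, i', x⟩, ⟨hr, rfl⟩, rfl⟩
    have h := hRt _ hr
    have h' := hjj _ _ _ h
    simp only [SetLike.mem_coe, MulAction.mem_stabilizer_iff] at h h' ⊢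
    rw [mul_smul, mul_smul, ht, h, inv_smul_eq_iff, h', ht]
  have hLN : ∀ p w, ((1 : A), w) ∈ L p → w ∈ N := fun p w h => (hN w (q p)).1 (hL p h)
  -- the finite set for each p
  have hY : ∀ p, ∃ Y : Set F, Y.Finite ∧ Y ⊆ N ∧ ∀ N' : Subgroup F, N'.Normal → Y ⊆ N' →
      ∀ w, ((1 : A), w) ∈ L p → w ∈ N' := by
    intro p
    let θ : L p →* (L p).map (MonoidHom.fst A F) := (MonoidHom.fst A F).subgroupMap (L p)
    have hθ : Function.Surjective θ := (MonoidHom.fst A F).subgroupMap_surjective (L p)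
    have hLfg : (L p).FG := ⟨(hSf p).toFinset, by simp [L]⟩
    have hLm : ((L p).map (MonoidHom.fst A F)).FG :=
      ⟨((hSf p).image (MonoidHom.fst A F)).toFinset, by simp [L, MonoidHom.map_closure]⟩
    have hk : ∀ x : L p, x ∈ θ.ker ↔ x.1.1 = 1 := by
      intro x
      rw [MonoidHom.mem_ker, Subtype.ext_iff]
      rfl
    obtain ⟨T, hTf, hTk, hT⟩ := ker_fng ((Group.fg_iff_subgroup_fg _).2 hLfg)
      (hA _ hLm) θ hθ
    refine ⟨(fun x : L p => x.1.2) '' T, hTf.image _, ?_, ?_⟩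
    · rintro _ ⟨⟨⟨a, w⟩, hx⟩, hxT, rfl⟩
      have : a = 1 := (hk _).1 (hTk hxT)
      subst this
      exact hLN p w hx
    · intro N' hN' hY w hw
      have h1 : (⟨(1, w), hw⟩ : L p) ∈ Subgroup.normalClosure T := hT ((hk _).2 rfl)
      have h2 : Subgroup.normalClosure T ≤ N'.comap ((MonoidHom.snd A F).comp (L p).subtype) := by
        refine Subgroup.normalClosure_le_normal ?_
        intro x hx
        exact hY ⟨x, hx, rfl⟩
      exact h2 h1
  choose Y hYf hYN hYL using hY
  refine ⟨⋃ p, Y p, Set.finite_iUnion hYf, Set.iUnion_subset hYN, ?_⟩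
  intro N' hN' hYN' hN'N
  let L' : Q → Subgroup (A × F) := fun p => L p ⊔ (⊥ : Subgroup A).prod N'
  have hL'1 : ∀ p w, ((1 : A), w) ∈ L' p ↔ w ∈ N' := by
    intro p w
    constructor
    · intro h
      obtain ⟨⟨a, y⟩, hy, ⟨b, z⟩, hz, hyz⟩ := Subgroup.mem_sup_of_normal_right.1 h
      rw [Subgroup.mem_prod] at hz
      obtain ⟨hz1, hz2⟩ := hz
      simp only [Subgroup.mem_bot] at hz1 hz2
      simp only [Prod.mk_mul_mk, Prod.mk.injEq, hz1, mul_one] at hyz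
      obtain ⟨h1, h2⟩ := hyz
      subst h1
      rw [← h2]
      exact mul_mem (hYL p N' hN' ((Set.subset_iUnion _ _).trans hYN') y hy) hz2
    · intro h
      exact (le_sup_right : _ ≤ L' p) (Subgroup.mem_prod.2 ⟨by simp, h⟩)
  have hL's : ∀ p, L' p ≤ MulAction.stabilizer (A × F) (q p) := by
    intro p
    refine sup_le (hL p) ?_
    rintro ⟨a, w⟩ h
    rw [Subgroup.mem_prod] at h
    obtain ⟨h1, h2⟩ := h
    simp only [Subgroup.mem_bot] at h1 h2
    subst h1
    exact (hN _ _).2 (hN'N h2)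
  let π : (Σ p : Q, (A × F) ⧸ L' p) → X := fun z => Quotient.liftOn' z.2 (fun g => g • q z.1) (by
    intro g g' h
    rw [QuotientGroup.leftRel_apply] at h
    have := hL's _ h
    rw [MulAction.mem_stabilizer_iff, mul_smul, inv_smul_eq_iff] at this
    exact this.symm)
  refine ⟨Σ p : Q, (A × F) ⧸ L' p, inferInstance, fun i => ⟨j i, ((t i : A × F) : (A × F) ⧸ L' (j i))⟩,
    π, ?_, ?_, ?_, ?_⟩
  · rintro g ⟨p, z⟩
    induction z using QuotientGroup.induction_on with
    | H z => exact mul_smul g z (q p)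
  · intro i
    exact ht i
  · rintro ⟨i, i', x⟩ hr
    have h' := hjj _ _ _ (hRt _ hr)
    simp only at h' ⊢
    rw [Sigma.smul_mk]
    have key : ∀ (p : Q) (hp : j i = p), (t i')⁻¹ * x * t i ∈ L' p →
        (⟨j i, x • ((t i : A × F) : (A × F) ⧸ L' (j i))⟩ : Σ p : Q, (A × F) ⧸ L' p) =
        ⟨p, ((t i' : A × F) : (A × F) ⧸ L' p)⟩ := by
      rintro p rfl h
      congr 1
      symm
      refine QuotientGroup.eq.2 ?_
      rw [mul_assoc] at h
      exact h
    refine key _ h' ((le_sup_left : _ ≤ L' _) (Subgroup.subset_closure ⟨_, ⟨hr, h'⟩, rfl⟩))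
  · rintro ⟨p, z⟩ w
    induction z using QuotientGroup.induction_on with
    | H z =>
      rw [Sigma.smul_mk, Sigma.mk.injEq, heq_eq_eq, eq_self, true_and, eq_comm]
      have : ((z : (A × F) ⧸ L' p) = ((1 : A), w) • (z : (A × F) ⧸ L' p)) ↔
        z⁻¹ * (((1 : A), w) * z) ∈ L' p := QuotientGroup.eq
      rw [this]
      obtain ⟨a, u⟩ := z
      have e : ((a, u) : A × F)⁻¹ * (((1 : A), w) * (a, u)) = (1, u⁻¹ * w * u) := by
        simp [mul_assoc]
      rw [e, hL'1]
      constructor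
      · intro h
        have := hN'.conj_mem _ h u
        simpa [mul_assoc] using this
      · intro h
        have := hN'.conj_mem _ h u⁻¹
        simpa [mul_assoc] using this

theorem common {C F X Q : Type} [Group C] [Group F] [MulAction (C × F) X]
    (hC : Group.Slender C) [Finite Q] (q : Q → X) :
    ∃ T : Set (Q × Q × (C × F)), T.Finite ∧ (∀ r ∈ T, r.2.2 • q r.1 = q r.2.1) ∧
      ∀ i i' (c : C) (w : F), (c, w) • q i = q i' → ∃ w' : F,
        ∀ (Ω : Type) (_ : MulAction (C × F) Ω) (ω : Q → Ω),
          (∀ r ∈ T, r.2.2 • ω r.1 = ω r.2.1) → (c, w') • ω i = ω i' := by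
  have h1 : ∀ i, ∃ G : Set (C × F), G.Finite ∧ G ⊆ MulAction.stabilizer (C × F) (q i) ∧
      (Subgroup.closure G).map (MonoidHom.fst C F) =
        (MulAction.stabilizer (C × F) (q i)).map (MonoidHom.fst C F) := by
    intro i
    obtain ⟨G, hG⟩ := hC ((MulAction.stabilizer (C × F) (q i)).map (MonoidHom.fst C F))
    have h2 : (G : Set C) ⊆ (MonoidHom.fst C F) '' (MulAction.stabilizer (C × F) (q i) : Set (C × F)) := by
      intro c hc
      have : c ∈ Subgroup.closure (G : Set C) := Subgroup.subset_closure hc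
      rw [hG] at this
      exact this
    classical
    obtain ⟨G', hG', hG'i⟩ := Finset.subset_set_image_iff.1 h2
    exact ⟨G', G'.finite_toSet, hG', by
      rw [MonoidHom.map_closure, ← Finset.coe_image, hG'i, hG]⟩
  choose G hGf hGs hGm using h1
  have h2 : ∀ i i', ∃ x : C × F, (∃ y : C × F, y • q i = q i') → x • q i = q i' := by
    intro i i'
    by_cases h : ∃ y : C × F, y • q i = q i'
    · exact ⟨h.choose, fun _ => h.choose_spec⟩
    · exact ⟨1, fun h' => absurd h' h⟩
  choose x hx using h2
  refine ⟨(⋃ i, (fun g => (i, i, g)) '' G i) ∪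
    {r ∈ Set.range (fun p : Q × Q => (p.1, p.2, x p.1 p.2)) | r.2.2 • q r.1 = q r.2.1}, ?_, ?_, ?_⟩
  · refine (Set.finite_iUnion fun i => (hGf i).image _).union ((Set.finite_range _).subset (Set.sep_subset _ _))
  · rintro r (hr | hr)
    · obtain ⟨i, g, hg, rfl⟩ := Set.mem_iUnion.1 hr
      exact hGs i hg
    · exact hr.2
  · intro i i' c w h
    have hxi := hx i i' ⟨_, h⟩
    have hm : (x i i')⁻¹ * (c, w) ∈ MulAction.stabilizer (C × F) (q i) := by
      rw [MulAction.mem_stabilizer_iff, mul_smul, h, ← hxi, inv_smul_smul]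
    have hm' : (x i i').1⁻¹ * c ∈ (Subgroup.closure (G i)).map (MonoidHom.fst C F) := by
      rw [hGm]
      exact ⟨_, hm, rfl⟩
    obtain ⟨⟨d, w'⟩, hd, hdw⟩ := hm'
    simp only [MonoidHom.coe_fst] at hdw
    refine ⟨(x i i').2 * w', ?_⟩
    intro Ω _ ω hω
    have e : (c, (x i i').2 * w') = x i i' * (d, w') := by
      ext <;> simp [hdw]
    have hst : Subgroup.closure (G i) ≤ MulAction.stabilizer (C × F) (ω i) := by
      rw [Subgroup.closure_le]
      intro g hg
      exact hω (i, i, g) (Or.inl (Set.mem_iUnion.2 ⟨i, g, hg, rfl⟩))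
    have h3 : (d, w') • ω i = ω i := hst hd
    rw [e, mul_smul, h3]
    exact hω (i, i', x i i') (Or.inr ⟨⟨(i, i'), rfl⟩, hxi⟩)

abbrev biAct {Γ F P : Type} [Group Γ] [Group F] [Group P] (j : Γ →* P) (ψ : F →* P) :
    MulAction (Γ × F) P where
  smul x p := j x.1 * p * (ψ x.2)⁻¹
  one_smul p := by
    change j 1 * p * (ψ 1)⁻¹ = p
    simp
  mul_smul x y p := by
    change j (x.1 * y.1) * p * (ψ (x.2 * y.2))⁻¹ = j x.1 * (j y.1 * p * (ψ y.2)⁻¹) * (ψ x.2)⁻¹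
    simp [mul_assoc]

theorem reach {A B P : Type} [Group A] [Group B] [Group P] (jA : A →* P) (jB : B →* P)
    (p : P) (hp : p ∈ jA.range ⊔ jB.range) :
    ∃ Q : Set P, Q.Finite ∧ 1 ∈ Q ∧ p ∈ Q ∧ ∀ pred : P → Prop, pred 1 →
      (∀ x ∈ Q, pred x → ∀ a, jA a * x ∈ Q → pred (jA a * x)) →
      (∀ x ∈ Q, pred x → ∀ b, jB b * x ∈ Q → pred (jB b * x)) → pred p := by
  have hp' : p ∈ Subgroup.closure ((jA.range : Set P) ∪ (jB.range : Set P)) := by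
    rw [Subgroup.closure_union, Subgroup.closure_eq, Subgroup.closure_eq]
    exact hp
  clear hp
  have step : ∀ x y : P, (x ∈ jA.range ∨ x ∈ jB.range) → (∃ Q : Set P, Q.Finite ∧ 1 ∈ Q ∧ y ∈ Q ∧ ∀ pred : P → Prop, pred 1 →
      (∀ x ∈ Q, pred x → ∀ a, jA a * x ∈ Q → pred (jA a * x)) →
      (∀ x ∈ Q, pred x → ∀ b, jB b * x ∈ Q → pred (jB b * x)) → pred y) →
      (∃ Q : Set P, Q.Finite ∧ 1 ∈ Q ∧ x * y ∈ Q ∧ ∀ pred : P → Prop, pred 1 →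
      (∀ x ∈ Q, pred x → ∀ a, jA a * x ∈ Q → pred (jA a * x)) →
      (∀ x ∈ Q, pred x → ∀ b, jB b * x ∈ Q → pred (jB b * x)) → pred (x * y)) := by
    rintro x y hx ⟨Q, hQf, h1, hy, hQ⟩
    refine ⟨insert (x * y) Q, hQf.insert _, Or.inr h1, Or.inl rfl, ?_⟩
    intro pred hp1 hA hB
    have hy' : pred y := hQ pred hp1 (fun z hz hpz a ha => hA z (Or.inr hz) hpz a (Or.inr ha))
      (fun z hz hpz a ha => hB z (Or.inr hz) hpz a (Or.inr ha))
    rcases hx with ⟨a, rfl⟩ | ⟨b, rfl⟩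
    · exact hA y (Or.inr hy) hy' a (Or.inl rfl)
    · exact hB y (Or.inr hy) hy' b (Or.inl rfl)
  induction hp' using Subgroup.closure_induction_left with
  | one => exact ⟨{1}, Set.finite_singleton _, rfl, rfl, fun pred h _ _ => h⟩
  | mul_left x hx y hy ih => exact step x y hx ih
  | inv_mul_cancel x hx y hy ih =>
    refine step x⁻¹ y ?_ ih
    exact hx.imp (fun h => inv_mem h) (fun h => inv_mem h)

theorem core {A B C P F ι : Type} [Group A] [Group B] [Group C] [Group P] [Group F]
    (f : C →* A) (g : C →* B) (hf : Function.Injective f) (hg : Function.Injective g)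
    (jA : A →* P) (jB : B →* P) (hfg' : ∀ c, jA (f c) = jB (g c))
    (hP : ∀ (Q : Type) [Group Q] (kA : A →* Q) (kB : B →* Q), kA.comp f = kB.comp g →
        ∃! h : P →* Q, h.comp jA = kA ∧ h.comp jB = kB)
    (hA : Group.Coherent A) (hB : Group.Coherent B) (hC : Group.Slender C)
    (hjA : Function.Injective jA) (hjB : Function.Injective jB)
    (hgen : ∀ p : P, p ∈ jA.range ⊔ jB.range)
    (ψ : F →* P) [Finite ι] (s : ι → F) (hs : Subgroup.closure (Set.range s) = ⊤) :
    ∃ Y : Set F, Y.Finite ∧ Y ⊆ ψ.ker ∧ ψ.ker ≤ Subgroup.normalClosure Y := by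
  choose Qs hQf hQ1 hQp hQ using fun i => reach jA jB (ψ (s i)) (hgen _)
  let Q : Set P := {1} ∪ ⋃ i, Qs i
  have hQfin : Q.Finite := (Set.finite_singleton _).union (Set.finite_iUnion hQf)
  have hQsub : ∀ i, Qs i ⊆ Q := fun i => (Set.subset_iUnion Qs i).trans Set.subset_union_right
  have : Finite Q := hQfin
  let q0 : Q := ⟨1, Or.inl rfl⟩
  let qs : ι → Q := fun i => ⟨ψ (s i), hQsub i (hQp i)⟩
  -- common relations
  obtain ⟨T, hTf, hTt, hT⟩ : ∃ T : Set (Q × Q × (C × F)), T.Finite ∧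
      (∀ r ∈ T, jA (f r.2.2.1) * (r.1 : P) * (ψ r.2.2.2)⁻¹ = r.2.1) ∧
      ∀ (i i' : Q) (c : C) (w : F), jA (f c) * (i : P) * (ψ w)⁻¹ = i' → ∃ w' : F,
        ∀ (Ω : Type) (_ : MulAction (C × F) Ω) (ω : Q → Ω),
          (∀ r ∈ T, r.2.2 • ω r.1 = ω r.2.1) → (c, w') • ω i = ω i' :=
    @common C F P Q _ _ (biAct (jA.comp f) ψ) hC _ (fun i => i)
  have moves : ∀ {Γ : Type} [Group Γ] (j : Γ →* P), Function.Injective j →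
      {r : Q × Q × (Γ × F) | j r.2.2.1 * (r.1 : P) = r.2.1 ∧ r.2.2.2 = 1}.Finite := by
    intro Γ _ j hj
    refine Set.Finite.of_finite_image (f := fun r => (r.1, r.2.1)) (Set.toFinite _) ?_
    rintro ⟨i, i', a, w⟩ ⟨h1, h2⟩ ⟨k, k', b, v⟩ ⟨h3, h4⟩ h
    simp only [Prod.mk.injEq] at h h1 h2 h3 h4 ⊢
    obtain ⟨rfl, rfl⟩ := h
    refine ⟨rfl, rfl, hj ?_, h2.trans h4.symm⟩
    rw [← h3] at h1
    exact mul_right_cancel h1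
  -- relations on the two sides
  let RA : Set (Q × Q × (A × F)) :=
    ((fun r : Q × Q × (C × F) => (r.1, r.2.1, (f r.2.2.1, r.2.2.2))) '' T ∪
      {r | jA r.2.2.1 * (r.1 : P) = r.2.1 ∧ r.2.2.2 = 1}) ∪
      Set.range (fun i => (q0, qs i, (1, (s i)⁻¹)))
  let RB : Set (Q × Q × (B × F)) :=
    (fun r : Q × Q × (C × F) => (r.1, r.2.1, (g r.2.2.1, r.2.2.2))) '' T ∪
      {r | jB r.2.2.1 * (r.1 : P) = r.2.1 ∧ r.2.2.2 = 1}
  have hRA : RA.Finite := ((hTf.image _).union (moves jA hjA)).union (Set.finite_range _)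
  have hRB : RB.Finite := (hTf.image _).union (moves jB hjB)
  have sideA := @side A F P Q _ _ (biAct jA ψ) hA
    ψ.ker
    (by
      intro w x
      change jA 1 * x * (ψ w)⁻¹ = x ↔ _
      rw [map_one, one_mul, mul_eq_left, inv_eq_one, MonoidHom.mem_ker])
    _ (fun i => i) RA hRA
    (by
      rintro _ ((⟨r, hr, rfl⟩ | ⟨h1, h2⟩) | ⟨i, rfl⟩)
      · exact hTt r hr
      · change jA _ * _ * (ψ _)⁻¹ = _
        rw [h2, map_one, inv_one, mul_one, h1]
      · change jA 1 * 1 * (ψ (s i)⁻¹)⁻¹ = ψ (s i)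
        simp)
  have sideB := @side B F P Q _ _ (biAct jB ψ) hB
    ψ.ker
    (by
      intro w x
      change jB 1 * x * (ψ w)⁻¹ = x ↔ _
      rw [map_one, one_mul, mul_eq_left, inv_eq_one, MonoidHom.mem_ker])
    _ (fun i => i) RB hRB
    (by
      rintro _ (⟨r, hr, rfl⟩ | ⟨h1, h2⟩)
      · have := hTt r hr
        rw [hfg'] at this
        exact this
      · change jB _ * _ * (ψ _)⁻¹ = _
        rw [h2, map_one, inv_one, mul_one, h1])
  obtain ⟨YA, hYAf, hYAN, sideA⟩ := sideA
  obtain ⟨YB, hYBf, hYBN, sideB⟩ := sideB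
  refine ⟨YA ∪ YB, hYAf.union hYBf, Set.union_subset hYAN hYBN, ?_⟩
  have hN'N : Subgroup.normalClosure (YA ∪ YB) ≤ ψ.ker :=
    Subgroup.normalClosure_le_normal (Set.union_subset hYAN hYBN)
  obtain ⟨X, _, ωA, πA, hπA, hπAω, hRA', hXN⟩ := sideA (Subgroup.normalClosure (YA ∪ YB))
    inferInstance (Set.subset_union_left.trans Subgroup.subset_normalClosure) hN'N
  obtain ⟨Y, _, ωB, πB, hπB, hπBω, hRB', hYN⟩ := sideB (Subgroup.normalClosure (YA ∪ YB))
    inferInstance (Set.subset_union_right.trans Subgroup.subset_normalClosure) hN'N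
  have hπA : ∀ (a : A) (w : F) x, πA ((a, w) • x) = jA a * πA x * (ψ w)⁻¹ := fun a w x => hπA (a, w) x
  have hπB : ∀ (a : B) (w : F) x, πB ((a, w) • x) = jB a * πB x * (ψ w)⁻¹ := fun a w x => hπB (a, w) x
  let _ : MulAction A X := MulAction.compHom X (MonoidHom.inl A F)
  let _ : MulAction B Y := MulAction.compHom Y (MonoidHom.inl B F)
  have sX : ∀ (a : A) (x : X), a • x = (a, (1 : F)) • x := fun _ _ => rfl
  have sY : ∀ (a : B) (x : Y), a • x = (a, (1 : F)) • x := fun _ _ => rfl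
  have compat : ∀ (c : C) (k k' : Q × F),
      f c • ((1 : A), k.2) • ωA k.1 = ((1 : A), k'.2) • ωA k'.1 ↔
      g c • ((1 : B), k.2) • ωB k.1 = ((1 : B), k'.2) • ωB k'.1 := by
    rintro c ⟨i, u⟩ ⟨i', u'⟩
    simp only [sX, sY]
    have eA : (f c, (1 : F)) • ((1 : A), u) • ωA i = ((1 : A), u') • ωA i' ↔
        (f c, u'⁻¹ * u) • ωA i = ωA i' := by
      rw [← inv_smul_eq_iff, smul_smul, smul_smul]
      simp
    have eB : (g c, (1 : F)) • ((1 : B), u) • ωB i = ((1 : B), u') • ωB i' ↔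
        (g c, u'⁻¹ * u) • ωB i = ωB i' := by
      rw [← inv_smul_eq_iff, smul_smul, smul_smul]
      simp
    rw [eA, eB]
    generalize u'⁻¹ * u = w
    by_cases hD : jA (f c) * (i : P) * (ψ w)⁻¹ = i'
    · obtain ⟨w', hw'⟩ := hT i i' c w hD
      have hwA : (f c, w') • ωA i = ωA i' :=
        hw' X (MulAction.compHom X (f.prodMap (MonoidHom.id F))) ωA
          (fun r hr => hRA' _ (Or.inl (Or.inl ⟨r, hr, rfl⟩)))
      have hwB : (g c, w') • ωB i = ωB i' :=
        hw' Y (MulAction.compHom Y (g.prodMap (MonoidHom.id F))) ωB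
          (fun r hr => hRB' _ (Or.inl ⟨r, hr, rfl⟩))
      have e1 : (f c, w) • ωA i = ωA i' ↔ w'⁻¹ * w ∈ Subgroup.normalClosure (YA ∪ YB) := by
        rw [← hXN (ωA i), ← hwA, ← inv_smul_eq_iff (g := (f c, w')), smul_smul]
        simp
      have e2 : (g c, w) • ωB i = ωB i' ↔ w'⁻¹ * w ∈ Subgroup.normalClosure (YA ∪ YB) := by
        rw [← hYN (ωB i), ← hwB, ← inv_smul_eq_iff (g := (g c, w')), smul_smul]
        simp
      rw [e1, e2]
    · constructor
      · intro h
        exfalso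
        apply hD
        have := congrArg πA h
        rwa [hπA, hπAω, hπAω] at this
      · intro h
        exfalso
        apply hD
        have := congrArg πB h
        rwa [hπB, hπBω, hπBω, ← hfg'] at this
  obtain ⟨Ω, _, ι', κ, hι, hιA, hκB, hικ⟩ := glue f g hf hg jA jB hP (X := X) (Y := Y)
    (K := Q × F)
    (by
      intro a x h
      have := congrArg πA h
      rw [sX, hπA, map_one, inv_one, mul_one, mul_eq_right] at this
      exact hjA (this.trans (map_one jA).symm))
    (by
      intro a x h
      have := congrArg πB h
      rw [sY, hπB, map_one, inv_one, mul_one, mul_eq_right] at this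
      exact hjB (this.trans (map_one jB).symm))
    (fun k => ((1 : A), k.2) • ωA k.1) (fun k => ((1 : B), k.2) • ωB k.1) compat
  let ξ : F → Q → Ω := fun u i => ι' (((1 : A), u) • ωA i)
  have hξB : ∀ u i, ξ u i = κ (((1 : B), u) • ωB i) := fun u i => hικ (i, u)
  have stepA : ∀ u (i i' : Q) a, jA a * (i : P) = i' → jA a • ξ u i = ξ u i' := by
    intro u i i' a h
    have h1 : (a, (1 : F)) • ωA i = ωA i' := hRA' (i, i', (a, 1)) (Or.inl (Or.inr ⟨h, rfl⟩))
    simp only [ξ]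
    rw [← hιA, ← h1, sX, smul_smul, smul_smul]
    simp
  have stepB : ∀ u (i i' : Q) b, jB b * (i : P) = i' → jB b • ξ u i = ξ u i' := by
    intro u i i' a h
    have h1 : (a, (1 : F)) • ωB i = ωB i' := hRB' (i, i', (a, 1)) (Or.inr ⟨h, rfl⟩)
    rw [hξB, hξB]
    rw [← hκB, ← h1, sY, smul_smul, smul_smul]
    simp
  have hs1 : ∀ i u, ψ (s i) • ξ u q0 = ξ u (qs i) := by
    intro i u
    have := hQ i (fun x => ∃ hx : x ∈ Q, x • ξ u q0 = ξ u ⟨x, hx⟩) ⟨q0.2, by simp [q0]⟩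
      (by
        rintro x hx ⟨hx', h⟩ a ha
        refine ⟨hQsub i ha, ?_⟩
        rw [mul_smul, h]
        exact stepA _ _ _ _ rfl)
      (by
        rintro x hx ⟨hx', h⟩ a ha
        refine ⟨hQsub i ha, ?_⟩
        rw [mul_smul, h]
        exact stepB _ _ _ _ rfl)
    exact this.2
  have hs2 : ∀ i u, ψ (s i) • ξ u q0 = ξ (u * (s i)⁻¹) q0 := by
    intro i u
    rw [hs1]
    have h1 : ((1 : A), (s i)⁻¹) • ωA q0 = ωA (qs i) :=
      hRA' (q0, qs i, (1, (s i)⁻¹)) (Or.inr ⟨i, rfl⟩)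
    simp only [ξ]
    rw [← h1, smul_smul]
    simp
  have hall : ∀ w : F, ∀ u, ψ w • ξ u q0 = ξ (u * w⁻¹) q0 := by
    intro w
    have hw : w ∈ Subgroup.closure (Set.range s) := by rw [hs]; trivial
    induction hw using Subgroup.closure_induction with
    | mem x hx =>
      obtain ⟨i, rfl⟩ := hx
      exact hs2 i
    | one => simp
    | mul x y _ _ hx hy =>
      intro u
      rw [map_mul, mul_smul, hy, hx]
      simp [mul_assoc]
    | inv x _ hx =>
      intro u
      rw [map_inv, inv_smul_eq_iff, hx]
      simp
  intro k hk
  have h1 := hall k⁻¹ 1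
  rw [MonoidHom.mem_ker] at hk
  rw [map_inv, hk, inv_one, one_smul] at h1
  have h2 := hι h1
  simp only [one_mul, inv_inv] at h2
  rw [← hXN (ωA q0), ← h2]
  exact one_smul (A × F) _

theorem amalg {A B C P : Type} [Group A] [Group B] [Group C] [Group P]
    (f : C →* A) (g : C →* B) (hf : Function.Injective f) (hg : Function.Injective g)
    (jA : A →* P) (jB : B →* P) (hfg : jA.comp f = jB.comp g)
    (hP : ∀ (Q : Type) [Group Q] (kA : A →* Q) (kB : B →* Q), kA.comp f = kB.comp g →
        ∃! h : P →* Q, h.comp jA = kA ∧ h.comp jB = kB)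
    (hA : Group.Coherent A) (hB : Group.Coherent B) (hC : Group.Slender C) :
    Group.Coherent P := by
  have hfg' : ∀ c, jA (f c) = jB (g c) := fun c => DFunLike.congr_fun hfg c
  -- injectivity of the structure maps
  have hjA : Function.Injective jA := by
    obtain ⟨Ω, _, ι, κ, hι, hιA, -, -⟩ := glue f g hf hg jA jB hP (X := A) (Y := B) (K := Empty)
      (fun a x h => by simpa using h) (fun a x h => by simpa using h) Empty.elim Empty.elim
      (fun c k => k.elim)
    rw [injective_iff_map_eq_one]
    intro a ha
    have := hιA a 1
    rw [ha, one_smul] at this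
    simpa using hι this
  have hjB : Function.Injective jB := by
    obtain ⟨Ω, _, ι, κ, hι, hιA, -, -⟩ := glue g f hg hf jB jA
      (fun Q _ kA kB h => by
        obtain ⟨h, h1, h2⟩ := hP Q kB kA h.symm
        exact ⟨h, h1.symm, fun y hy => h2 y hy.symm⟩)
      (X := B) (Y := A) (K := Empty)
      (fun a x h => by simpa using h) (fun a x h => by simpa using h) Empty.elim Empty.elim
      (fun c k => k.elim)
    rw [injective_iff_map_eq_one]
    intro a ha
    have := hιA a 1
    rw [ha, one_smul] at this
    simpa using hι this
  -- generation
  have hgen : ∀ p : P, p ∈ jA.range ⊔ jB.range := by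
    let M := jA.range ⊔ jB.range
    let kA : A →* M := jA.codRestrict M (fun a => (le_sup_left : jA.range ≤ M) ⟨a, rfl⟩)
    let kB : B →* M := jB.codRestrict M (fun a => (le_sup_right : jB.range ≤ M) ⟨a, rfl⟩)
    obtain ⟨h, ⟨h1, h2⟩, -⟩ := hP M kA kB (by
      ext c
      exact hfg' c)
    have huniq := (hP P jA jB hfg).unique (y₁ := M.subtype.comp h) (y₂ := MonoidHom.id P)
      ⟨by rw [MonoidHom.comp_assoc, h1]; rfl, by rw [MonoidHom.comp_assoc, h2]; rfl⟩
      ⟨rfl, rfl⟩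
    intro p
    have := DFunLike.congr_fun huniq p
    simp only [MonoidHom.comp_apply, MonoidHom.id_apply] at this
    rw [← this]
    exact (h p).2
  intro H hH
  obtain ⟨S, hS⟩ := hH
  let ψ : FreeGroup (Fin S.card) →* P := FreeGroup.lift (fun i => (S.equivFin.symm i : P))
  have hψr : ψ.range = H := by
    rw [FreeGroup.range_lift_eq_closure, ← hS]
    congr 1
    ext x
    constructor
    · rintro ⟨i, rfl⟩
      exact (S.equivFin.symm i).2
    · intro hx
      exact ⟨S.equivFin ⟨x, hx⟩, by simp⟩
  let N := ψ.ker
  suffices hmain : ∃ Y : Set (FreeGroup (Fin S.card)), Y.Finite ∧ Y ⊆ N ∧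
      N ≤ Subgroup.normalClosure Y by
    obtain ⟨Y, hYf, hYN, hNY⟩ := hmain
    have hN : Subgroup.normalClosure Y = N :=
      le_antisymm (Subgroup.normalClosure_le_normal hYN) hNY
    refine ⟨S.card, Y, hYf, ⟨?_⟩⟩
    exact (QuotientGroup.quotientMulEquivOfEq hN).trans
      ((QuotientGroup.quotientKerEquivRange ψ).trans (MulEquiv.subgroupCongr hψr))
  exact core f g hf hg jA jB hfg' hP hA hB hC hjA hjB hgen ψ FreeGroup.of
    (FreeGroup.closure_range_of _)

/-- If `A ∗_C B` is an amalgamated free product (that is, the pushout of two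
injective group homomorphisms `C → A` and `C → B`) with `A` and `B` coherent and `C` slender,
then `A ∗_C B` is coherent.  In particular, the free product of two coherent groups is
coherent. -/
theorem coherent_amalgamatedProduct_and_coherent_freeProduct :
    (∀ (A B C P : Type) [Group A] [Group B] [Group C] [Group P]
      (f : C →* A) (g : C →* B), Function.Injective f → Function.Injective g →
      ∀ (jA : A →* P) (jB : B →* P), jA.comp f = jB.comp g →
      -- `P` (together with `jA`, `jB`) is the pushout `A ∗_C B` of `f` and `g`:
      (∀ (Q : Type) [Group Q] (kA : A →* Q) (kB : B →* Q), kA.comp f = kB.comp g →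
        ∃! h : P →* Q, h.comp jA = kA ∧ h.comp jB = kB) →
      Group.Coherent A → Group.Coherent B → Group.Slender C → Group.Coherent P) ∧
    (∀ (A B : Type) [Group A] [Group B],
      Group.Coherent A → Group.Coherent B → Group.Coherent (Monoid.Coprod A B)) := by
  constructor
  · intro A B C P _ _ _ _ f g hf hg jA jB hfg hP hA hB hC
    exact amalg f g hf hg jA jB hfg hP hA hB hC
  · intro A B _ _ hA hB
    refine amalg (C := Unit) (1 : Unit →* A) (1 : Unit →* B) (Function.injective_of_subsingleton _)
      (Function.injective_of_subsingleton _) Monoid.Coprod.inl Monoid.Coprod.inr (by ext; simp)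
      ?_ hA hB ?_
    · intro Q _ kA kB _
      refine ⟨Monoid.Coprod.lift kA kB, ⟨by simp, by simp⟩, ?_⟩
      rintro h ⟨h1, h2⟩
      exact Monoid.Coprod.hom_ext (by simpa using h1) (by simpa using h2)
    · intro H
      exact ⟨∅, Subsingleton.elim _ _⟩
end

section
/- Let Γ = (V,E) be a finite simplicial graph with an edge labeling ψ : E → {2,3,4,...}, and let Γ₁, Γ₂ be induced subgraphs of Γ with Γ = Γ₁ ∪ Γ₂. Then the Coxeter group decomposes as the amalgamated free product C(Γ) = C(Γ₁) ∗_{C(Γ₁∩Γ₂)} C(Γ₂); consequently, if C(Γ₁) and C(Γ₂) are coherent and C(Γ₁∩Γ₂) is slender, then C(Γ) is coherent. -/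
/-- The canonical homomorphism between the Coxeter groups of two nested induced subgraphs of
the Coxeter graph, sending simple reflections to simple reflections. -/
def CoxeterMatrix.restrictHom {V : Type*} (M : CoxeterMatrix V) {S T : Set V} (hST : S ⊆ T) :
    (M.restrict S).Group →* (M.restrict T).Group :=
  (M.restrict S).toCoxeterSystem.lift
    ⟨fun i => (M.restrict T).simple ⟨↑i, hST i.2⟩,
     fun i i' => (M.restrict T).toCoxeterSystem.simple_mul_simple_pow ⟨↑i, hST i.2⟩ ⟨↑i', hST i'.2⟩⟩

/-- The canonical homomorphism from the Coxeter group of an induced subgraph of the Coxeter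
graph into the full Coxeter group, sending simple reflections to simple reflections. -/
def CoxeterMatrix.restrictIncl {V : Type*} (M : CoxeterMatrix V) (S : Set V) :
    (M.restrict S).Group →* M.Group :=
  (M.restrict S).toCoxeterSystem.lift
    ⟨fun i => M.simple ↑i,
     fun i i' => M.toCoxeterSystem.simple_mul_simple_pow ↑i ↑i'⟩



namespace CoxGeom

open Real

variable {B : Type} (M : CoxeterMatrix B)

/-- The cosine attached to a pair of generators (equal to one when the label is infinite). -/
noncomputable def co (s t : B) : ℝ := Real.cos (π / (M s t : ℝ))

lemma co_self (s : B) : co M s s = -1 := by simp [co]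

lemma co_comm (s t : B) : co M s t = co M t s := by simp [co, M.symmetric s t]

/-- Simple roots. -/
noncomputable def rt (s : B) : B →₀ ℝ := Finsupp.single s 1

/-- The linear form `2 B(α_s, -)`. -/
noncomputable def form (s : B) : (B →₀ ℝ) →ₗ[ℝ] ℝ :=
  Finsupp.lsum ℝ (fun t => (-2 * co M s t) • LinearMap.id)

lemma form_rt (s t : B) : form M s (rt t) = -2 * co M s t := by
  simp [form, rt]

/-- The simple reflections. -/
noncomputable def sg (s : B) : Module.End ℝ (B →₀ ℝ) :=
  LinearMap.id - (form M s).smulRight (rt s)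

lemma sg_apply (s : B) (z : B →₀ ℝ) : sg M s z = z - form M s z • rt s := by
  simp [sg]

lemma sg_rt (s t : B) : sg M s (rt t) = rt t + (2 * co M s t) • rt s := by
  rw [sg_apply, form_rt, sub_eq_add_neg, ← neg_smul]; congr 2; ring

lemma sg_rt_self (s : B) : sg M s (rt s) = - rt s := by
  rw [sg_rt, co_self]; module

lemma sg_mul_self (s : B) : sg M s * sg M s = 1 := by
  refine LinearMap.ext fun z => ?_
  rw [Module.End.mul_apply, sg_apply M s z, map_sub, map_smul, sg_rt_self, sg_apply]
  simp

/-- The coefficients `sin (k θ) / sin θ`. -/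
noncomputable def cf (c : ℝ) : ℕ → ℝ
  | 0 => 0
  | 1 => 1
  | (k + 2) => 2 * c * cf c (k + 1) - cf c k

lemma cf_mul_sin (θ : ℝ) (k : ℕ) : cf (Real.cos θ) k * Real.sin θ = Real.sin (k * θ) ∧
    cf (Real.cos θ) (k + 1) * Real.sin θ = Real.sin ((k + 1 : ℕ) * θ) := by
  induction k with
  | zero => simp [cf]
  | succ k ih =>
    refine ⟨ih.2, ?_⟩
    have e1 : ((k + 1 + 1 : ℕ) : ℝ) * θ = (k + 1 : ℕ) * θ + θ := by push_cast; ring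
    have e2 : (k : ℝ) * θ = (k + 1 : ℕ) * θ - θ := by push_cast; ring
    have h1 := ih.1
    have h2 := ih.2
    rw [e2, Real.sin_sub] at h1
    rw [e1, Real.sin_add, cf]
    linear_combination 2 * Real.cos θ * h2 - h1

lemma cf_one (k : ℕ) : cf 1 k = k ∧ cf 1 (k + 1) = (k + 1 : ℕ) := by
  induction k with
  | zero => simp [cf]
  | succ k ih =>
    refine ⟨ih.2, ?_⟩
    rw [cf, ih.1, ih.2]; push_cast; ring

lemma sin_pos_of {m : ℕ} (hm : 2 ≤ m) : 0 < Real.sin (π / (m : ℝ)) := by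
  have hm' : (2 : ℝ) ≤ m := by exact_mod_cast hm
  apply Real.sin_pos_of_pos_of_lt_pi
  · have := Real.pi_pos; positivity
  · rw [div_lt_iff₀ (by linarith)]
    nlinarith [Real.pi_pos]

lemma cf_nonneg (m : ℕ) (hm : m ≠ 1) (k : ℕ) (hk : m ≠ 0 → k ≤ m) :
    0 ≤ cf (Real.cos (π / (m : ℝ))) k := by
  rcases Nat.eq_zero_or_pos m with rfl | hpos
  · simp [(cf_one k).1]
  · have hm2 : 2 ≤ m := by omega
    have hs := sin_pos_of hm2
    have h := (cf_mul_sin (π / (m : ℝ)) k).1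
    have hk' : (k : ℝ) ≤ m := by exact_mod_cast hk (by omega)
    have hm' : (0 : ℝ) < m := by exact_mod_cast hpos
    have h2 : 0 ≤ Real.sin (k * (π / (m : ℝ))) := by
      apply Real.sin_nonneg_of_nonneg_of_le_pi
      · have := Real.pi_pos; positivity
      · rw [mul_div_assoc', div_le_iff₀ hm']
        nlinarith [Real.pi_pos]
    rw [← h] at h2
    exact nonneg_of_mul_nonneg_left h2 hs

/-- Product of an alternating word in the reflections. -/
lemma alt_rt (s t : B) (k : ℕ) :
    ((CoxeterSystem.alternatingWord s t k).map (sg M)).prod (rt s) =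
      cf (co M s t) (k + 1) • rt (if Even k then s else t) +
      cf (co M s t) k • rt (if Even k then t else s) := by
  induction k with
  | zero => simp [CoxeterSystem.alternatingWord, cf]
  | succ k ih =>
    rw [CoxeterSystem.alternatingWord_succ', List.map_cons, List.prod_cons, Module.End.mul_apply, ih]
    by_cases hk : Even k
    · have hk' : ¬ Even (k + 1) := by simpa [Nat.even_add_one] using hk
      simp only [hk, hk', if_true, if_false, map_add, map_smul, sg_rt, cf]
      rw [co_comm M t s, co_self]
      module
    · have hk' : Even (k + 1) := by simpa [Nat.even_add_one] using hk
      simp only [hk, hk', if_true, if_false, map_add, map_smul, sg_rt, cf]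
      rw [co_self]
      module

lemma alt_even (s t : B) (k : ℕ) :
    ((CoxeterSystem.alternatingWord s t (2 * k)).map (sg M)).prod = (sg M s * sg M t) ^ k := by
  induction k with
  | zero => simp [CoxeterSystem.alternatingWord]
  | succ k ih =>
    rw [show 2 * (k + 1) = 2 * k + 1 + 1 by ring, CoxeterSystem.alternatingWord_succ',
      CoxeterSystem.alternatingWord_succ', pow_succ']
    simp [ih, mul_assoc]

lemma pow_rt (s t : B) (hm : 2 ≤ M s t) : ((sg M s * sg M t) ^ (M s t)) (rt s) = rt s := by
  rw [← alt_even, alt_rt]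
  have hs := sin_pos_of hm
  have hm' : (M s t : ℝ) ≠ 0 := by
    have : M s t ≠ 0 := by omega
    exact_mod_cast this
  have h := cf_mul_sin (π / (M s t : ℝ)) (2 * M s t)
  have e1 : ((2 * M s t : ℕ) : ℝ) * (π / (M s t : ℝ)) = 2 * π := by
    push_cast; field_simp
  have e2 : ((2 * M s t + 1 : ℕ) : ℝ) * (π / (M s t : ℝ)) = π / (M s t : ℝ) + 2 * π := by
    push_cast; field_simp
    ring
  rw [e1, e2, Real.sin_two_pi, Real.sin_add_two_pi] at h
  have h1 : cf (co M s t) (2 * M s t) = 0 := by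
    rcases mul_eq_zero.mp h.1 with h | h
    · exact h
    · exact absurd h hs.ne'
  have h2 : cf (co M s t) (2 * M s t + 1) = 1 := by
    have := h.2
    exact (mul_eq_right₀ hs.ne').mp this
  rw [h1, h2]; simp

lemma pow_mul_pow_eq_one (s t : B) (k : ℕ) :
    (sg M s * sg M t) ^ k * (sg M t * sg M s) ^ k = 1 := by
  induction k with
  | zero => simp
  | succ k ih =>
    rw [pow_succ, pow_succ']
    calc _ = (sg M s * sg M t) ^ k * (sg M s * (sg M t * sg M t) * sg M s) * (sg M t * sg M s) ^ k := by
          simp only [mul_assoc]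
      _ = 1 := by rw [sg_mul_self, mul_one, sg_mul_self, mul_one, ih]

lemma liftable : M.IsLiftable (sg M) := by
  intro s t
  by_cases hst : s = t
  · subst hst; simp [sg_mul_self]
  by_cases h0 : M s t = 0
  · simp [h0]
  have h1 := M.off_diagonal s t hst
  have hm : 2 ≤ M s t := by omega
  have hs := sin_pos_of hm
  set m := M s t with hmdef
  have fs : ((sg M s * sg M t) ^ m) (rt s) = rt s := pow_rt M s t hm
  have ft : ((sg M s * sg M t) ^ m) (rt t) = rt t := by
    have h2 : ((sg M t * sg M s) ^ m) (rt t) = rt t := by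
      rw [hmdef, M.symmetric s t]
      exact pow_rt M t s (by rw [M.symmetric t s]; exact hm)
    have h3 := congrArg (fun f => f (rt t)) (pow_mul_pow_eq_one M s t m)
    simp only [Module.End.mul_apply, h2, Module.End.one_apply] at h3
    exact h3
  refine LinearMap.ext fun z => ?_
  set c := co M s t with hc
  have hc2 : 1 - c ^ 2 ≠ 0 := by
    have : 1 - c ^ 2 = Real.sin (π / (m : ℝ)) ^ 2 := by
      rw [Real.sin_sq]; rfl
    rw [this]; positivity
  set p := form M s z with hp
  set q := form M t z with hq
  set a := (p + c * q) / (2 * (1 - c ^ 2)) with ha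
  set b := (q + c * p) / (2 * (1 - c ^ 2)) with hb
  set u := z - a • rt s - b • rt t with hu
  have us : form M s u = 0 := by
    rw [hu, map_sub, map_sub, map_smul, map_smul, form_rt, form_rt, co_self, ← hc, ← hp, ha, hb,
      smul_eq_mul, smul_eq_mul]
    field_simp; ring
  have ut : form M t u = 0 := by
    rw [hu, map_sub, map_sub, map_smul, map_smul, form_rt, form_rt, co_self, co_comm M t s,
      ← hc, ← hq, ha, hb, smul_eq_mul, smul_eq_mul]
    field_simp; ring
  have fu : ∀ k : ℕ, ((sg M s * sg M t) ^ k) u = u := by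
    intro k
    induction k with
    | zero => simp
    | succ k ih =>
      rw [pow_succ, Module.End.mul_apply, Module.End.mul_apply, sg_apply M t u, ut, zero_smul,
        sub_zero, sg_apply, us, zero_smul, sub_zero, ih]
  have hz : z = u + a • rt s + b • rt t := by rw [hu]; abel
  rw [hz, map_add, map_add, map_smul, map_smul, fs, ft, fu]
  simp

/-- The geometric representation. -/
noncomputable def rep : M.Group →* Module.End ℝ (B →₀ ℝ) :=
  M.toCoxeterSystem.lift ⟨sg M, liftable M⟩

lemma rep_simple (s : B) : rep M (M.toCoxeterSystem.simple s) = sg M s :=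
  M.toCoxeterSystem.lift_apply_simple (liftable M) s

lemma rep_wordProd (l : List B) : rep M (M.toCoxeterSystem.wordProd l) = (l.map (sg M)).prod := by
  induction l with
  | nil => simp
  | cons a l ih => rw [CoxeterSystem.wordProd_cons, map_mul, rep_simple, ih]; simp

/-- Positivity of a vector. -/
def NonNeg (z : B →₀ ℝ) : Prop := ∀ i, 0 ≤ z i

lemma alt_strip (s t : B) (w : M.Group) (k : ℕ) (v : M.Group)
    (h : w = v * M.toCoxeterSystem.wordProd (CoxeterSystem.alternatingWord s t k))
    (hl : M.toCoxeterSystem.length w = M.toCoxeterSystem.length v + k) (j : ℕ) (hj : j ≤ k) :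
    ∃ v', w = v' * M.toCoxeterSystem.wordProd (CoxeterSystem.alternatingWord s t j) ∧
      M.toCoxeterSystem.length w = M.toCoxeterSystem.length v' + j := by
  induction k generalizing v with
  | zero => obtain rfl : j = 0 := by omega
            exact ⟨v, h, hl⟩
  | succ k ih =>
    by_cases hjk : j = k + 1
    · subst hjk; exact ⟨v, h, hl⟩
    · rw [CoxeterSystem.alternatingWord_succ', CoxeterSystem.wordProd_cons, ← mul_assoc] at h
      refine ih _ h ?_ (by omega)
      have h1 := M.toCoxeterSystem.length_mul_le v (M.toCoxeterSystem.simple (if Even k then t else s))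
      rw [CoxeterSystem.length_simple] at h1
      have h2 := M.toCoxeterSystem.length_mul_le (v * M.toCoxeterSystem.simple (if Even k then t else s))
        (M.toCoxeterSystem.wordProd (CoxeterSystem.alternatingWord s t k))
      rw [← h] at h2
      have h3 := M.toCoxeterSystem.length_wordProd_le (CoxeterSystem.alternatingWord s t k)
      rw [CoxeterSystem.length_alternatingWord] at h3
      omega

theorem rep_nonneg (n : ℕ) : ∀ (w : M.Group) (s : B), M.toCoxeterSystem.length w = n →
    ¬ M.toCoxeterSystem.IsRightDescent w s → NonNeg (rep M w (rt s)) := by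
  induction n using Nat.strong_induction_on with
  | _ n IH =>
  intro w s hn hs
  by_cases hw : w = 1
  · subst hw
    classical
    intro i
    simp only [map_one, Module.End.one_apply, rt, Finsupp.single_apply]
    split_ifs <;> norm_num
  obtain ⟨t, ht⟩ := M.toCoxeterSystem.exists_rightDescent_of_ne_one hw
  have hst : s ≠ t := by rintro rfl; exact hs ht
  -- maximal stripping
  let p : ℕ → Prop := fun k => ∃ v, w = v * M.toCoxeterSystem.wordProd (CoxeterSystem.alternatingWord s t k) ∧
      M.toCoxeterSystem.length w = M.toCoxeterSystem.length v + k
  have hp0 : p 1 := by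
    refine ⟨w * M.toCoxeterSystem.simple t, ?_, ?_⟩
    · rw [show CoxeterSystem.alternatingWord s t 1 = [t] from rfl, CoxeterSystem.wordProd_singleton,
        CoxeterSystem.simple_mul_simple_cancel_right]
    · have := M.toCoxeterSystem.isRightDescent_iff.mp ht
      omega
  have hbd : ∀ k, p k → k ≤ M.toCoxeterSystem.length w := by
    rintro k ⟨v, -, h⟩; omega
  classical
  let k := Nat.findGreatest p (M.toCoxeterSystem.length w)
  have hk1 : 1 ≤ k := Nat.le_findGreatest (hbd 1 hp0) hp0
  have hpk : p k := Nat.findGreatest_spec (hbd 1 hp0) hp0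
  have hmax : ¬ p (k + 1) := by
    intro h
    have := Nat.le_findGreatest (hbd _ h) h
    change k + 1 ≤ k at this
    omega
  obtain ⟨v, hv, hl⟩ := hpk
  -- next letter is not a descent
  have hx : ¬ M.toCoxeterSystem.IsRightDescent v (if Even k then t else s) := by
    intro hd
    apply hmax
    refine ⟨v * M.toCoxeterSystem.simple (if Even k then t else s), ?_, ?_⟩
    · rw [CoxeterSystem.alternatingWord_succ', CoxeterSystem.wordProd_cons, ← mul_assoc,
        CoxeterSystem.simple_mul_simple_cancel_right]
      exact hv
    · have := M.toCoxeterSystem.isRightDescent_iff.mp hd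
      omega
  have hy : ¬ M.toCoxeterSystem.IsRightDescent v (if Even k then s else t) := by
    intro hd
    obtain ⟨j, hj⟩ : ∃ j, k = j + 1 := ⟨k - 1, by omega⟩
    have hd' := M.toCoxeterSystem.isRightDescent_iff.mp hd
    have e : (if Even k then s else t) = (if Even j then t else s) := by
      simp only [hj, Nat.even_add_one]; by_cases h : Even j <;> simp [h]
    rw [hj, CoxeterSystem.alternatingWord_succ', CoxeterSystem.wordProd_cons, ← mul_assoc, ← e] at hv
    have h2 := M.toCoxeterSystem.length_mul_le (v * M.toCoxeterSystem.simple (if Even k then s else t))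
        (M.toCoxeterSystem.wordProd (CoxeterSystem.alternatingWord s t j))
    rw [← hv] at h2
    have h3 := M.toCoxeterSystem.length_wordProd_le (CoxeterSystem.alternatingWord s t j)
    rw [CoxeterSystem.length_alternatingWord] at h3
    omega
  -- k < m
  have hkm : M s t ≠ 0 → k + 1 ≤ M s t := by
    intro hm0
    by_contra hcon
    obtain ⟨v', hv', hl'⟩ := alt_strip M s t w k v hv hl (M s t) (by omega)
    apply hs
    have hb := M.toCoxeterSystem.wordProd_braidWord_eq s t
    rw [CoxeterSystem.braidWord, CoxeterSystem.braidWord, M.symmetric t s] at hb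
    rw [hb] at hv'
    obtain ⟨m, hm⟩ : ∃ m, M s t = m + 1 := ⟨M s t - 1, by omega⟩
    rw [hm, CoxeterSystem.alternatingWord_succ, CoxeterSystem.wordProd_concat, ← mul_assoc] at hv'
    have : w * M.toCoxeterSystem.simple s = v' * M.toCoxeterSystem.wordProd (CoxeterSystem.alternatingWord s t m) := by
      rw [hv', CoxeterSystem.simple_mul_simple_cancel_right]
    unfold CoxeterSystem.IsRightDescent
    rw [this]
    have h2 := M.toCoxeterSystem.length_mul_le v' (M.toCoxeterSystem.wordProd (CoxeterSystem.alternatingWord s t m))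
    have h3 := M.toCoxeterSystem.length_wordProd_le (CoxeterSystem.alternatingWord s t m)
    rw [CoxeterSystem.length_alternatingWord] at h3
    omega
  have hvn : M.toCoxeterSystem.length v < n := by omega
  have P1 := IH _ hvn v _ rfl hx
  have P2 := IH _ hvn v _ rfl hy
  have c1 := cf_nonneg (M s t) (M.off_diagonal s t hst) (k + 1) hkm
  have c2 := cf_nonneg (M s t) (M.off_diagonal s t hst) k (fun h => by have := hkm h; omega)
  intro i
  rw [hv, map_mul, Module.End.mul_apply, rep_wordProd, alt_rt, map_add, map_smul, map_smul]
  exact add_nonneg (mul_nonneg c1 (P2 i)) (mul_nonneg c2 (P1 i))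

theorem rep_faithful (g : M.Group) (hg : rep M g = 1) : g = 1 := by
  by_contra hne
  obtain ⟨s, hs⟩ := M.toCoxeterSystem.exists_rightDescent_of_ne_one hne
  have h := rep_nonneg M _ (g * M.toCoxeterSystem.simple s) s rfl
    (M.toCoxeterSystem.isRightDescent_iff_not_isRightDescent_mul.mp hs) s
  rw [map_mul, hg, one_mul, rep_simple, sg_rt_self] at h
  simp [rt] at h
  linarith

end CoxGeom

/-! ### Standard parabolic subgroups inject, and the pushout property -/

namespace CoxGeom

lemma restrict_co {V : Type} (M : CoxeterMatrix V) {S T : Set V} (h : S ⊆ T) (a b : S) :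
    co (M.restrict S) a b = co (M.restrict T) ⟨a, h a.2⟩ ⟨b, h b.2⟩ := rfl

lemma restrictHom_simple {V : Type} (M : CoxeterMatrix V) {S T : Set V} (h : S ⊆ T) (a : S) :
    M.restrictHom h ((M.restrict S).toCoxeterSystem.simple a) =
      (M.restrict T).toCoxeterSystem.simple ⟨a, h a.2⟩ := by
  exact (M.restrict S).toCoxeterSystem.lift_apply_simple
    (f := fun i => (M.restrict T).toCoxeterSystem.simple ⟨↑i, h i.2⟩)
    (fun i i' => (M.restrict T).toCoxeterSystem.simple_mul_simple_pow ⟨↑i, h i.2⟩ ⟨↑i', h i'.2⟩) a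

lemma restrictIncl_simple {V : Type} (M : CoxeterMatrix V) {S : Set V} (a : S) :
    M.restrictIncl S ((M.restrict S).toCoxeterSystem.simple a) =
      M.toCoxeterSystem.simple a := by
  exact (M.restrict S).toCoxeterSystem.lift_apply_simple
    (f := fun i => M.toCoxeterSystem.simple ↑i)
    (fun i i' => M.toCoxeterSystem.simple_mul_simple_pow ↑i ↑i') a

noncomputable def inc {V : Type} {S T : Set V} (h : S ⊆ T) : (S →₀ ℝ) →ₗ[ℝ] (T →₀ ℝ) :=
  Finsupp.lmapDomain ℝ ℝ (Set.inclusion h)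

lemma inc_rt {V : Type} {S T : Set V} (h : S ⊆ T) (a : S) :
    inc h (rt a) = rt ⟨a, h a.2⟩ := by
  simp [inc, rt, Set.inclusion]

lemma inc_sg {V : Type} (M : CoxeterMatrix V) {S T : Set V} (h : S ⊆ T) (a : S) :
    (inc h) ∘ₗ (sg (M.restrict S) a) = (sg (M.restrict T) ⟨a, h a.2⟩) ∘ₗ (inc h) := by
  refine Finsupp.lhom_ext' fun b => LinearMap.ext_ring ?_
  change inc h (sg (M.restrict S) a (rt b)) = sg (M.restrict T) ⟨a, h a.2⟩ (inc h (rt b))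
  rw [sg_rt, map_add, map_smul, inc_rt, inc_rt, sg_rt, restrict_co M h]

lemma inc_rep {V : Type} (M : CoxeterMatrix V) {S T : Set V} (h : S ⊆ T)
    (g : (M.restrict S).Group) : ∀ z,
    inc h (rep (M.restrict S) g z) = rep (M.restrict T) (M.restrictHom h g) (inc h z) := by
  induction g using (M.restrict S).toCoxeterSystem.simple_induction with
  | simple a =>
    intro z
    rw [restrictHom_simple, rep_simple, rep_simple]
    exact congrArg (fun f => f z) (inc_sg M h a)
  | one => intro z; simp
  | mul x y hx hy =>
    intro z
    rw [map_mul, map_mul, map_mul, Module.End.mul_apply, Module.End.mul_apply, hx, hy]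

theorem restrictHom_injective {V : Type} (M : CoxeterMatrix V) {S T : Set V} (h : S ⊆ T) :
    Function.Injective (M.restrictHom h) := by
  rw [injective_iff_map_eq_one]
  intro g hg
  apply rep_faithful
  refine LinearMap.ext fun z => ?_
  have h1 := inc_rep M h g z
  rw [hg, map_one, Module.End.one_apply] at h1
  exact Finsupp.mapDomain_injective (Set.inclusion_injective h) h1

theorem pushout_property {V : Type} (Γ : SimpleGraph V) (M : CoxeterMatrix V)
    (hM : M.IsMatrixOf Γ)
    (S₁ S₂ : Set V) (hcover : S₁ ∪ S₂ = Set.univ)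
    (hedges : ∀ v w : V, Γ.Adj v w → (v ∈ S₁ ∧ w ∈ S₁) ∨ (v ∈ S₂ ∧ w ∈ S₂))
    (Q : Type) [Group Q]
    (k₁ : (M.restrict S₁).Group →* Q) (k₂ : (M.restrict S₂).Group →* Q)
    (hk : k₁.comp (M.restrictHom (Set.inter_subset_left (s := S₁) (t := S₂))) =
         k₂.comp (M.restrictHom (Set.inter_subset_right (s := S₁) (t := S₂)))) :
       ∃! h : M.Group →* Q,
         h.comp (M.restrictIncl S₁) = k₁ ∧ h.comp (M.restrictIncl S₂) = k₂ := by
  classical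
  have hcov : ∀ v, v ∉ S₁ → v ∈ S₂ := by
    intro v hv
    have : v ∈ S₁ ∪ S₂ := by rw [hcover]; trivial
    exact this.resolve_left hv
  let f : V → Q := fun v =>
    if h : v ∈ S₁ then k₁ ((M.restrict S₁).toCoxeterSystem.simple ⟨v, h⟩)
    else k₂ ((M.restrict S₂).toCoxeterSystem.simple ⟨v, hcov v h⟩)
  have f1 : ∀ v (h : v ∈ S₁), f v = k₁ ((M.restrict S₁).toCoxeterSystem.simple ⟨v, h⟩) := by
    intro v h; simp only [f, dif_pos h]
  have f2 : ∀ v (h : v ∈ S₂), f v = k₂ ((M.restrict S₂).toCoxeterSystem.simple ⟨v, h⟩) := by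
    intro v h
    by_cases h1 : v ∈ S₁
    · rw [f1 v h1]
      have := DFunLike.congr_fun hk
        ((M.restrict (S₁ ∩ S₂)).toCoxeterSystem.simple ⟨v, h1, h⟩)
      rw [MonoidHom.comp_apply, MonoidHom.comp_apply, restrictHom_simple, restrictHom_simple] at this
      exact this
    · simp only [f, dif_neg h1]
  have r1 : ∀ v w, v ∈ S₁ → w ∈ S₁ → (f v * f w) ^ M v w = 1 := by
    intro v w hv hw
    rw [f1 v hv, f1 w hw, ← map_mul, ← map_pow]
    have := (M.restrict S₁).toCoxeterSystem.simple_mul_simple_pow ⟨v, hv⟩ ⟨w, hw⟩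
    change (_) ^ M v w = 1 at this
    rw [this, map_one]
  have r2 : ∀ v w, v ∈ S₂ → w ∈ S₂ → (f v * f w) ^ M v w = 1 := by
    intro v w hv hw
    rw [f2 v hv, f2 w hw, ← map_mul, ← map_pow]
    have := (M.restrict S₂).toCoxeterSystem.simple_mul_simple_pow ⟨v, hv⟩ ⟨w, hw⟩
    change (_) ^ M v w = 1 at this
    rw [this, map_one]
  have hlift : M.IsLiftable f := by
    intro v w
    by_cases hvw : v = w
    · subst hvw
      by_cases h1 : v ∈ S₁
      · exact r1 _ _ h1 h1
      · exact r2 _ _ (hcov v h1) (hcov v h1)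
    · by_cases ha : Γ.Adj v w
      · rcases hedges v w ha with h | h
        · exact r1 _ _ h.1 h.2
        · exact r2 _ _ h.1 h.2
      · rw [hM.2 v w hvw ha, pow_zero]
  refine ⟨M.toCoxeterSystem.lift ⟨f, hlift⟩, ⟨?_, ?_⟩, ?_⟩
  · apply (M.restrict S₁).toCoxeterSystem.ext_simple
    intro a
    rw [MonoidHom.comp_apply, restrictIncl_simple, CoxeterSystem.lift_apply_simple, f1 _ a.2]
  · apply (M.restrict S₂).toCoxeterSystem.ext_simple
    intro a
    rw [MonoidHom.comp_apply, restrictIncl_simple, CoxeterSystem.lift_apply_simple, f2 _ a.2]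
  · rintro g ⟨g1, g2⟩
    apply M.toCoxeterSystem.ext_simple
    intro v
    rw [CoxeterSystem.lift_apply_simple]
    by_cases h1 : v ∈ S₁
    · rw [f1 v h1, ← g1, MonoidHom.comp_apply, restrictIncl_simple]
    · rw [f2 v (hcov v h1), ← g2, MonoidHom.comp_apply, restrictIncl_simple]

end CoxGeom

/-! ### Groups acting on trees -/

namespace TreeCoh

open Relation

/-- There is no closed reduced edge path of positive length. -/
def NoCircuit {X : Type*} (Adj : X → X → Prop) : Prop :=
  ∀ (n : ℕ) (f : ℕ → X), 0 < n → (∀ i < n, Adj (f i) (f (i + 1))) →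
    (∀ i, i + 2 ≤ n → f i ≠ f (i + 2)) → f 0 ≠ f n

section Local

variable {K G X : Type*} [Group K] [Group G] [MulAction G X] (φ : K →* G)
  (Adj : X → X → Prop) (Y : Set X) (P : X → X → Set K)

/-- Equality of vertices in the covering graph. -/
def EE (a b : K × X) : Prop := a.1⁻¹ * b.1 ∈ P a.2 b.2

/-- Adjacency in the covering graph. -/
def AA (a b : K × X) : Prop :=
  ∃ g y y', y ∈ Y ∧ y' ∈ Y ∧ Adj y y' ∧ EE P a (g, y) ∧ EE P (g, y') b

def PathN (n : ℕ) (a b : K × X) : Prop :=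
  ∃ f : ℕ → K × X, f 0 = a ∧ EE P (f n) b ∧ ∀ k < n, AA Adj Y P (f k) (f (k + 1))

theorem inj_of_local
    (hsymm : ∀ x y, Adj x y → Adj y x)
    (hinv : ∀ (g : G) x y, Adj x y → Adj (g • x) (g • y))
    (hred : NoCircuit Adj)
    (x0 : X) (hx0 : x0 ∈ Y)
    (hconn : ∀ y ∈ Y, ReflTransGen (fun a b => Adj a b ∧ a ∈ Y ∧ b ∈ Y) x0 y)
    (P1 : ∀ y ∈ Y, 1 ∈ P y y)
    (Pinv : ∀ y y' p, p ∈ P y y' → p⁻¹ ∈ P y' y)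
    (Pmul : ∀ y y' y'' p q, p ∈ P y y' → q ∈ P y' y'' → p * q ∈ P y y'')
    (Pact : ∀ y y' p, p ∈ P y y' → φ p • y' = y)
    (Pinj : ∀ y p, p ∈ P y y → φ p = 1 → p = 1)
    (Pstar : ∀ y ∈ Y, ∀ y1 ∈ Y, ∀ y' ∈ Y, ∀ y2 ∈ Y, Adj y y1 → Adj y' y2 →
      ∀ p ∈ P y y', φ p • y2 = y1 → p ∈ P y1 y2)
    (D : Set K) (hD : Subgroup.closure D = ⊤)
    (hDP : ∀ d ∈ D, φ d • x0 ∈ Y ∧ d ∈ P (φ d • x0) x0) :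
    Function.Injective φ := by
  have Esymm : ∀ a b, EE P a b → EE P b a := by
    intro a b h
    have := Pinv _ _ _ h
    simpa [EE] using this
  have Etrans : ∀ a b c, EE P a b → EE P b c → EE P a c := by
    intro a b c h h'
    have := Pmul _ _ _ _ _ h h'
    simpa [EE, mul_assoc] using this
  have Erefl : ∀ g y, y ∈ Y → EE P (g, y) (g, y) := by
    intro g y hy; simpa [EE] using P1 y hy
  have Epi : ∀ a b, EE P a b → φ a.1 • a.2 = φ b.1 • b.2 := by
    intro a b h
    have := Pact _ _ _ h
    rw [map_mul, map_inv, mul_smul, inv_smul_eq_iff] at this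
    exact this.symm
  have AEl : ∀ a b c, EE P a b → AA Adj Y P b c → AA Adj Y P a c := by
    rintro a b c h ⟨g, y, y', hy, hy', had, h1, h2⟩
    exact ⟨g, y, y', hy, hy', had, Etrans _ _ _ h h1, h2⟩
  have AEr : ∀ a b c, AA Adj Y P a b → EE P b c → AA Adj Y P a c := by
    rintro a b c ⟨g, y, y', hy, hy', had, h1, h2⟩ h
    exact ⟨g, y, y', hy, hy', had, h1, Etrans _ _ _ h2 h⟩
  have Api : ∀ a b, AA Adj Y P a b → Adj (φ a.1 • a.2) (φ b.1 • b.2) := by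
    rintro a b ⟨g, y, y', hy, hy', had, h1, h2⟩
    rw [Epi _ _ h1, ← Epi _ _ h2]
    exact hinv _ _ _ had
  have loc : ∀ a b c, AA Adj Y P a b → AA Adj Y P b c →
      φ a.1 • a.2 = φ c.1 • c.2 → EE P a c := by
    rintro a b c ⟨g, y, y1, hy, hy1, had, h1, h2⟩ ⟨g', y1', y', hy1', hy', had', h1', h2'⟩ hac
    rw [Epi _ _ h1, ← Epi _ _ h2'] at hac
    have hp := Etrans _ _ _ h2 h1'
    have : EE P (g, y) (g', y') := by
      refine Pstar y1 hy1 y hy y1' hy1' y' hy' (hsymm _ _ had) had' _ hp ?_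
      simp only at hac ⊢
      rw [map_mul, map_inv, mul_smul, ← hac, inv_smul_smul]
    exact Etrans _ _ _ h1 (Etrans _ _ _ this h2')
  have path_refl : ∀ a b, EE P a b → PathN Adj Y P 0 a b := by
    intro a b h
    exact ⟨fun _ => a, rfl, h, by simp⟩
  have path_E : ∀ n a b c, PathN Adj Y P n a b → EE P b c → PathN Adj Y P n a c := by
    rintro n a b c ⟨f, h0, hn, hs⟩ h
    exact ⟨f, h0, Etrans _ _ _ hn h, hs⟩
  have path_A : ∀ n a b c, PathN Adj Y P n a b → AA Adj Y P b c → PathN Adj Y P (n + 1) a c := by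
    rintro n a b c ⟨f, h0, hn, hs⟩ h
    refine ⟨fun k => if k ≤ n then f k else c, by simpa using h0, ?_, ?_⟩
    · have hcc : EE P c c := by
        obtain ⟨g, y, y', -, -, -, -, h2⟩ := h
        exact Etrans _ _ _ (Esymm _ _ h2) h2
      simpa using hcc
    · intro k hk
      by_cases hkn : k = n
      · subst hkn
        simpa using AEl _ _ _ hn h
      · have h1 : k ≤ n := by omega
        have h2 : k + 1 ≤ n := by omega
        simp only [h1, h2, if_true]
        exact hs k (by omega)
  -- moving inside Y
  have move : ∀ (g : K) a y y', (∃ n, PathN Adj Y P n a (g, y)) →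
      ReflTransGen (fun a b => Adj a b ∧ a ∈ Y ∧ b ∈ Y) y y' → ∃ n, PathN Adj Y P n a (g, y') := by
    intro g a y y' h hr
    induction hr with
    | refl => exact h
    | tail _ hbc ih =>
      obtain ⟨n, hn⟩ := ih
      exact ⟨n + 1, path_A _ _ _ _ hn
        ⟨g, _, _, hbc.2.1, hbc.2.2, hbc.1, Erefl _ _ hbc.2.1, Erefl _ _ hbc.2.2⟩⟩
  have hconn' : ∀ y ∈ Y, ReflTransGen (fun a b => Adj a b ∧ a ∈ Y ∧ b ∈ Y) y x0 := by
    intro y hy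
    have h := hconn y hy
    clear hy
    induction h with
    | refl => exact ReflTransGen.refl
    | tail _ h ih => exact ReflTransGen.head ⟨hsymm _ _ h.1, h.2.2, h.2.1⟩ ih
  have conn : ∀ g : K, ∃ n, PathN Adj Y P n (1, x0) (g, x0) := by
    intro g
    have hg : g ∈ Subgroup.closure D := by rw [hD]; trivial
    induction hg using Subgroup.closure_induction_right with
    | one => exact ⟨0, path_refl _ _ (Erefl _ _ hx0)⟩
    | mul_right x hx d hd ih =>
      obtain ⟨n, hn⟩ := move x _ _ _ ih (hconn _ (hDP d hd).1)
      exact ⟨n, path_E _ _ _ _ hn (by simpa [EE] using (hDP d hd).2)⟩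
    | mul_inv_cancel x hx d hd ih =>
      obtain ⟨n, hn⟩ := ih
      refine move (x * d⁻¹) _ _ _ ⟨n, path_E _ _ _ _ hn ?_⟩ (hconn' _ (hDP d hd).1)
      refine Esymm _ _ ?_
      simpa [EE] using (hDP d hd).2
  rw [injective_iff_map_eq_one]
  intro g hg
  classical
  have hex := conn g
  let n := Nat.find hex
  obtain ⟨f, h0, hn, hs⟩ : PathN Adj Y P n (1, x0) (g, x0) := Nat.find_spec hex
  have hmin : ∀ m, PathN Adj Y P m (1, x0) (g, x0) → n ≤ m := fun m hm => Nat.find_min' hex hm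
  have hn0 : n = 0 := by
    by_contra hne
    refine hred n (fun k => φ (f k).1 • (f k).2) (Nat.pos_of_ne_zero hne)
      (fun i hi => Api _ _ (hs i hi)) ?_ ?_
    · intro i hi heq
      have hE := loc _ _ _ (hs i (by omega)) (hs (i + 1) (by omega)) heq
      have : PathN Adj Y P (n - 2) (1, x0) (g, x0) := by
        refine ⟨fun k => if k ≤ i then f k else f (k + 2), by simpa using h0, ?_, ?_⟩
        · by_cases h : n - 2 ≤ i
          · have : i + 2 = n := by omega
            simp only [h, if_true]
            have e : n - 2 = i := by omega
            rw [e]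
            rw [this] at hE
            exact Etrans _ _ _ hE hn
          · simp only [h, if_false]
            have e : n - 2 + 2 = n := by omega
            rw [e]; exact hn
        · intro k hk
          by_cases h1 : k + 1 ≤ i
          · have h2 : k ≤ i := by omega
            simp only [h1, h2, if_true]
            exact hs k (by omega)
          · by_cases h2 : k ≤ i
            · have : k = i := by omega
              subst this
              simp only [h1, h2, if_true, if_false]
              exact AEl _ _ _ hE (hs (k + 2) (by omega))
            · simp only [h1, h2, if_false]
              exact hs (k + 2) (by omega)
      have := hmin _ this
      omega
    · have := Epi _ _ hn
      simp only [this, h0, hg, map_one]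
  rw [hn0, h0] at hn
  refine Pinj x0 g ?_ hg
  simpa [EE] using hn

end Local

lemma fp_lift {K F G : Type*} [Group K] [Group F] [Group G] (hK : Group.FinitelyPresented K)
    (φ : F →* G) (f : K →* G) (hf : ∀ k, f k ∈ φ.range) :
    ∃ R : Set F, R.Finite ∧ R ⊆ φ.ker ∧ ∃ σ : K → F, (∀ k, φ (σ k) = f k) ∧
      ∀ k k', (σ (k * k'))⁻¹ * (σ k * σ k') ∈ Subgroup.normalClosure R := by
  obtain ⟨n, rels, hfin, ⟨e⟩⟩ := hK
  choose l hl using fun i : Fin n => hf (e (PresentedGroup.of i))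
  let ψ : FreeGroup (Fin n) →* F := FreeGroup.lift l
  have hψ : φ.comp ψ = (f.comp e.toMonoidHom).comp (PresentedGroup.mk rels) := by
    ext i
    simp [ψ, hl, PresentedGroup.of]
  have hker : ψ '' rels ⊆ φ.ker := by
    rintro _ ⟨x, hx, rfl⟩
    have := DFunLike.congr_fun hψ x
    simp only [MonoidHom.comp_apply] at this
    rw [SetLike.mem_coe, MonoidHom.mem_ker, this]
    have h1 : PresentedGroup.mk rels x = 1 := PresentedGroup.one_of_mem hx
    rw [h1]; simp
  refine ⟨ψ '' rels, hfin.image _, hker, ?_⟩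
  have hle : Subgroup.normalClosure (ψ '' rels) ≤ φ.ker := Subgroup.normalClosure_le_normal hker
  let τ : PresentedGroup rels →* F ⧸ Subgroup.normalClosure (ψ '' rels) :=
    PresentedGroup.toGroup (f := fun i => (QuotientGroup.mk (l i))) (by
      intro r hr
      have h1 : FreeGroup.lift (fun i => (QuotientGroup.mk (l i) :
          F ⧸ Subgroup.normalClosure (ψ '' rels))) = (QuotientGroup.mk' _).comp ψ := by
        ext i; simp [ψ]
      rw [h1, MonoidHom.comp_apply]
      exact (QuotientGroup.eq_one_iff _).mpr (Subgroup.subset_normalClosure ⟨r, hr, rfl⟩))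
  let φb : F ⧸ Subgroup.normalClosure (ψ '' rels) →* G := QuotientGroup.lift _ φ hle
  have hφb : φb.comp τ = f.comp e.toMonoidHom := by
    ext i
    simp [τ, φb, hl]
  have hout : ∀ q, φ (Quotient.out q) = φb q := by
    intro q
    conv_rhs => rw [← QuotientGroup.out_eq' q]
    rfl
  refine ⟨fun k => (τ (e.symm k)).out, ?_, ?_⟩
  · intro k
    rw [hout]
    have := DFunLike.congr_fun hφb (e.symm k)
    simpa using this
  · intro k k'
    rw [← QuotientGroup.eq, QuotientGroup.mk_mul, QuotientGroup.out_eq', QuotientGroup.out_eq',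
      QuotientGroup.out_eq', map_mul, map_mul]

lemma fp_lift_subgroup {F G : Type*} [Group F] [Group G] (K : Subgroup G)
    (hK : Group.FinitelyPresented K) (φ : F →* G) (hf : K ≤ φ.range) :
    ∃ R : Set F, R.Finite ∧ R ⊆ φ.ker ∧ ∃ σ : G → F, (∀ k ∈ K, φ (σ k) = k) ∧
      ∀ k ∈ K, ∀ k' ∈ K, (σ (k * k'))⁻¹ * (σ k * σ k') ∈ Subgroup.normalClosure R := by
  classical
  obtain ⟨R, h1, h2, σ, h3, h4⟩ := fp_lift hK φ K.subtype (fun k => hf k.2)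
  refine ⟨R, h1, h2, fun x => if h : x ∈ K then σ ⟨x, h⟩ else 1, ?_, ?_⟩
  · intro k hk
    simp only [hk, dif_pos]
    exact h3 _
  · intro k hk k' hk'
    simp only [hk, hk', K.mul_mem hk hk', dif_pos]
    exact h4 ⟨k, hk⟩ ⟨k', hk'⟩

end TreeCoh

namespace TreeCoh

open Relation

lemma exists_free_hom {G : Type*} [Group G] (H : Subgroup G) (hH : H.FG) :
    ∃ (n : ℕ) (φ : FreeGroup (Fin n) →* G), φ.range = H := by
  obtain ⟨S, hS⟩ := hH
  refine ⟨S.card, FreeGroup.lift (fun i => (S.equivFin.symm i : G)), ?_⟩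
  rw [FreeGroup.range_lift_eq_closure, ← hS]
  congr 1
  ext x
  constructor
  · rintro ⟨i, rfl⟩; exact (S.equivFin.symm i).2
  · intro hx; exact ⟨S.equivFin ⟨x, hx⟩, by simp⟩

lemma exists_finite_conn {X : Type*} (Adj : X → X → Prop) (x0 y : X)
    (h : ReflTransGen Adj x0 y) :
    ∃ Y : Set X, Y.Finite ∧ x0 ∈ Y ∧ y ∈ Y ∧
      ∀ z ∈ Y, ReflTransGen (fun a b => Adj a b ∧ a ∈ Y ∧ b ∈ Y) x0 z := by
  induction h with
  | refl => exact ⟨{x0}, Set.finite_singleton _, rfl, rfl, by rintro z rfl; exact .refl⟩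
  | @tail b c _ hbc ih =>
    obtain ⟨Y, hf, h0, hb, hY⟩ := ih
    have key : ∀ z ∈ Y, ReflTransGen
        (fun a b => Adj a b ∧ a ∈ insert c Y ∧ b ∈ insert c Y) x0 z := by
      intro z hz
      refine ReflTransGen.mono ?_ _ _ (hY z hz)
      rintro a b ⟨h1, h2, h3⟩
      exact ⟨h1, Set.mem_insert_of_mem _ h2, Set.mem_insert_of_mem _ h3⟩
    refine ⟨insert c Y, hf.insert _, Set.mem_insert_of_mem _ h0, Set.mem_insert _ _, ?_⟩
    rintro z (rfl | hz)
    · exact (key b hb).tail ⟨hbc, Set.mem_insert_of_mem _ hb, Set.mem_insert _ _⟩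
    · exact key z hz

lemma exists_finite_conn_family {X ι : Type*} [Finite ι] (Adj : X → X → Prop) (x0 : X) (y : ι → X)
    (h : ∀ i, ReflTransGen Adj x0 (y i)) :
    ∃ Y : Set X, Y.Finite ∧ x0 ∈ Y ∧ (∀ i, y i ∈ Y) ∧
      ∀ z ∈ Y, ReflTransGen (fun a b => Adj a b ∧ a ∈ Y ∧ b ∈ Y) x0 z := by
  choose Y hf h0 hy hc using fun i => exists_finite_conn Adj x0 (y i) (h i)
  refine ⟨insert x0 (⋃ i, Y i), (Set.finite_iUnion hf).insert _, Set.mem_insert _ _,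
    fun i => Set.mem_insert_of_mem _ (Set.mem_iUnion.mpr ⟨i, hy i⟩), ?_⟩
  rintro z (rfl | hz)
  · exact .refl
  · obtain ⟨i, hi⟩ := Set.mem_iUnion.mp hz
    refine ReflTransGen.mono ?_ _ _ (hc i z hi)
    rintro a b ⟨h1, h2, h3⟩
    exact ⟨h1, Set.mem_insert_of_mem _ (Set.mem_iUnion.mpr ⟨i, h2⟩),
      Set.mem_insert_of_mem _ (Set.mem_iUnion.mpr ⟨i, h3⟩)⟩

lemma exists_orbit_reps {F G X : Type*} [Group F] [Group G] [MulAction G X] (φ : F →* G) :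
    ∃ (r : X → X) (t : X → F), (∀ x, φ (t x) • r x = x) ∧
      ∀ (g : F) x y, φ g • x = y → r x = r y := by
  let s : Setoid X :=
    { r := fun x y => ∃ g : F, φ g • x = y
      iseqv :=
        { refl := fun x => ⟨1, by simp⟩
          symm := by
            rintro x y ⟨g, rfl⟩
            exact ⟨g⁻¹, by simp⟩
          trans := by
            rintro x y z ⟨g, rfl⟩ ⟨h, rfl⟩
            exact ⟨h * g, by simp [mul_smul]⟩ } }
  have hr : ∀ x : X, ∃ g : F, φ g • (Quotient.mk s x).out = x := fun x =>
    Quotient.exact (Quotient.out_eq (Quotient.mk s x))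
  choose t ht using hr
  refine ⟨fun x => (Quotient.mk s x).out, t, ht, ?_⟩
  intro g x y h
  have : Quotient.mk s x = Quotient.mk s y := Quotient.sound ⟨g, h⟩
  simp only [this]

lemma exists_lift_gens {F G : Type*} [Group F] [Group G] (φ : F →* G) (K : Subgroup G)
    (hK : K.FG) (hle : K ≤ φ.range) :
    ∃ D : Set F, D.Finite ∧ Subgroup.closure (φ '' D) = K := by
  obtain ⟨S, hS⟩ := hK
  have hsub : (S : Set G) ⊆ Set.range φ := by
    intro x hx
    have : x ∈ K := by rw [← hS]; exact Subgroup.subset_closure hx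
    exact hle this
  obtain ⟨D, -, hD, hfin⟩ : ∃ D : Set F, True ∧ φ '' D = S ∧ D.Finite := by
    choose g hg using fun x : S => hsub x.2
    refine ⟨Set.range g, trivial, ?_, Set.finite_range g⟩
    ext x
    constructor
    · rintro ⟨_, ⟨y, rfl⟩, rfl⟩
      rw [hg]; exact y.2
    · intro hx
      exact ⟨g ⟨x, hx⟩, ⟨_, rfl⟩, hg _⟩
  exact ⟨D, hfin, by rw [hD, hS]⟩

theorem coherent_of_tree {G X : Type*} [Group G] [MulAction G X] [Nonempty X]
    (Adj : X → X → Prop)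
    (hsymm : ∀ x y, Adj x y → Adj y x)
    (hinv : ∀ (g : G) x y, Adj x y → Adj (g • x) (g • y))
    (hconn : ∀ x y, ReflTransGen Adj x y)
    (hred : NoCircuit Adj)
    (hvert : ∀ x : X, ∀ K : Subgroup G, K ≤ MulAction.stabilizer G x → K.FG →
      Group.FinitelyPresented K)
    (hedge : ∀ x y : X, Adj x y → ∀ K : Subgroup G, K ≤ MulAction.stabilizer G x →
      K ≤ MulAction.stabilizer G y → K.FG) :
    Group.Coherent G := by
  intro H hH
  classical
  obtain ⟨n, φ, rfl⟩ := exists_free_hom H hH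
  obtain ⟨x0⟩ := ‹Nonempty X›
  obtain ⟨Y, hYfin, hx0, hYgen, hYconn⟩ := exists_finite_conn_family Adj x0
    (fun i : Fin n => φ (FreeGroup.of i) • x0) (fun i => hconn _ _)
  obtain ⟨r, t, ht, hr⟩ := exists_orbit_reps (X := X) φ
  -- generators of the edge groups
  have hDg : ∀ y y2 : X, ∃ D : Set (FreeGroup (Fin n)), D.Finite ∧
      (Adj y y2 → Subgroup.closure (φ '' D) =
        φ.range ⊓ (MulAction.stabilizer G y ⊓ MulAction.stabilizer G y2)) := by
    intro y y2
    by_cases h : Adj y y2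
    · obtain ⟨D, h1, h2⟩ := exists_lift_gens φ
        (φ.range ⊓ (MulAction.stabilizer G y ⊓ MulAction.stabilizer G y2))
        (hedge y y2 h _ (inf_le_right.trans inf_le_left) (inf_le_right.trans inf_le_right))
        inf_le_left
      exact ⟨D, h1, fun _ => h2⟩
    · exact ⟨∅, Set.finite_empty, fun h' => absurd h' h⟩
  choose Dg Dgfin Dgcl using hDg
  -- transporters
  have hT : ∀ q : (X × X) × (X × X), ∃ g : FreeGroup (Fin n),
      (∃ g' : FreeGroup (Fin n), φ g' • q.2.1 = q.1.1 ∧ φ g' • q.2.2 = q.1.2) →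
        φ g • q.2.1 = q.1.1 ∧ φ g • q.2.2 = q.1.2 := by
    intro q
    by_cases h : ∃ g' : FreeGroup (Fin n), φ g' • q.2.1 = q.1.1 ∧ φ g' • q.2.2 = q.1.2
    · obtain ⟨g', h'⟩ := h
      exact ⟨g', fun _ => h'⟩
    · exact ⟨1, fun h' => absurd h' h⟩
  choose T hT using hT
  let D : Set (FreeGroup (Fin n)) :=
    Set.range FreeGroup.of ∪ (⋃ y ∈ Y, ⋃ y2 ∈ Y, Dg y y2) ∪ T '' ((Y ×ˢ Y) ×ˢ (Y ×ˢ Y))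
  have hDfin : D.Finite := by
    refine ((Set.finite_range _).union ?_).union ?_
    · exact hYfin.biUnion fun y _ => hYfin.biUnion fun y2 _ => Dgfin y y2
    · exact ((hYfin.prod hYfin).prod (hYfin.prod hYfin)).image _
  -- the vertex groups
  let KS : X → Set G := fun ρ => {x | ∃ d ∈ D, ∃ y ∈ Y, ∃ y' ∈ Y, φ d • y' = y ∧ r y = ρ ∧
    x = φ ((t y)⁻¹ * d * t y')}
  let K : X → Subgroup G := fun ρ => Subgroup.closure (KS ρ)
  have hKSfin : ∀ ρ, (KS ρ).Finite := by
    intro ρ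
    refine ((hDfin.prod (hYfin.prod hYfin)).image
      (fun q => φ ((t q.2.1)⁻¹ * q.1 * t q.2.2))).subset ?_
    rintro x ⟨d, hd, y, hy, y', hy', -, -, rfl⟩
    exact ⟨(d, y, y'), ⟨hd, hy, hy'⟩, rfl⟩
  have hKFG : ∀ ρ, (K ρ).FG := fun ρ => ⟨(hKSfin ρ).toFinset, by simp [K]⟩
  have hKst : ∀ ρ, K ρ ≤ MulAction.stabilizer G ρ := by
    intro ρ
    refine (Subgroup.closure_le _).mpr ?_
    rintro x ⟨d, hd, y, hy, y', hy', hd', rfl, rfl⟩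
    have h1 : r y' = r y := hr d _ _ hd'
    rw [SetLike.mem_coe, MulAction.mem_stabilizer_iff, map_mul, map_mul, map_inv, mul_smul,
      mul_smul, inv_smul_eq_iff, ht, ← h1, ht, hd']
  have hKrange : ∀ ρ, K ρ ≤ φ.range := by
    intro ρ
    refine (Subgroup.closure_le _).mpr ?_
    rintro x ⟨d, hd, y, hy, y', hy', hd', rfl, rfl⟩
    exact ⟨_, rfl⟩
  choose R0 hR0fin hR0ker σ hσ hσmul using fun ρ =>
    fp_lift_subgroup (K ρ) (hvert ρ (K ρ) (hKst ρ) (hKFG ρ)) φ (hKrange ρ)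
  let R1 : Set (FreeGroup (Fin n)) := {x | ∃ d ∈ D, ∃ y ∈ Y, ∃ y' ∈ Y, φ d • y' = y ∧
    x = d⁻¹ * (t y * σ (r y) (φ ((t y)⁻¹ * d * t y')) * (t y')⁻¹)}
  have hR1fin : R1.Finite := by
    refine ((hDfin.prod (hYfin.prod hYfin)).image
      (fun q => q.1⁻¹ * (t q.2.1 * σ (r q.2.1) (φ ((t q.2.1)⁻¹ * q.1 * t q.2.2)) *
        (t q.2.2)⁻¹))).subset ?_
    rintro x ⟨d, hd, y, hy, y', hy', -, rfl⟩
    exact ⟨(d, y, y'), ⟨hd, hy, hy'⟩, rfl⟩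
  have hKmem : ∀ d ∈ D, ∀ y ∈ Y, ∀ y' ∈ Y, φ d • y' = y → φ ((t y)⁻¹ * d * t y') ∈ K (r y) :=
    fun d hd y hy y' hy' h => Subgroup.subset_closure ⟨d, hd, y, hy, y', hy', h, rfl, rfl⟩
  have hR1ker : R1 ⊆ φ.ker := by
    rintro x ⟨d, hd, y, hy, y', hy', h, rfl⟩
    rw [SetLike.mem_coe, MonoidHom.mem_ker]
    simp only [map_mul φ d⁻¹, map_mul φ _ (t y')⁻¹, map_mul φ (t y) (σ _ _)]
    rw [hσ _ _ (hKmem d hd y hy y' hy' h)]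
    simp only [map_mul, map_inv]
    group
  let R : Set (FreeGroup (Fin n)) := (⋃ y ∈ Y, R0 (r y)) ∪ R1
  have hRfin : R.Finite := (hYfin.biUnion fun y _ => hR0fin (r y)).union hR1fin
  have hRker : R ⊆ φ.ker := by
    refine Set.union_subset ?_ hR1ker
    exact Set.iUnion₂_subset fun y _ => hR0ker _
  have hle : Subgroup.normalClosure R ≤ φ.ker := Subgroup.normalClosure_le_normal hRker
  let φb : FreeGroup (Fin n) ⧸ Subgroup.normalClosure R →* G := QuotientGroup.lift _ φ hle
  let mk : FreeGroup (Fin n) →* FreeGroup (Fin n) ⧸ Subgroup.normalClosure R :=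
    QuotientGroup.mk' _
  have hφb : ∀ x, φb (mk x) = φ x := fun x => rfl
  have mkmul : ∀ y ∈ Y, ∀ k ∈ K (r y), ∀ k' ∈ K (r y),
      mk (σ (r y) (k * k')) = mk (σ (r y) k) * mk (σ (r y) k') := by
    intro y hy k hk k' hk'
    rw [← map_mul]
    refine QuotientGroup.eq.mpr ?_
    refine Subgroup.normalClosure_mono ?_ (hσmul _ k hk k' hk')
    exact (Set.subset_biUnion_of_mem (u := fun y => R0 (r y)) hy).trans Set.subset_union_left
  have mkone : ∀ y ∈ Y, mk (σ (r y) 1) = 1 := by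
    intro y hy
    have := mkmul y hy 1 (one_mem _) 1 (one_mem _)
    rw [mul_one] at this
    exact (mul_eq_left.mp this.symm)
  have mkinv : ∀ y ∈ Y, ∀ k ∈ K (r y), mk (σ (r y) k⁻¹) = (mk (σ (r y) k))⁻¹ := by
    intro y hy k hk
    rw [eq_inv_iff_mul_eq_one, ← mkmul y hy _ (inv_mem hk) _ hk, inv_mul_cancel, mkone y hy]
  let P : X → X → Set (FreeGroup (Fin n) ⧸ Subgroup.normalClosure R) := fun y y' =>
    {g | y ∈ Y ∧ y' ∈ Y ∧ r y = r y' ∧ ∃ k ∈ K (r y),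
      g = mk (t y) * mk (σ (r y) k) * (mk (t y'))⁻¹}
  have P1 : ∀ y ∈ Y, 1 ∈ P y y := fun y hy =>
    ⟨hy, hy, rfl, 1, one_mem _, by rw [mkone y hy]; group⟩
  have Pinv : ∀ y y' p, p ∈ P y y' → p⁻¹ ∈ P y' y := by
    rintro y y' p ⟨hy, hy', hrr, k, hk, rfl⟩
    refine ⟨hy', hy, hrr.symm, k⁻¹, by rw [← hrr]; exact inv_mem hk, ?_⟩
    rw [← hrr, mkinv y hy k hk]
    group
  have Pmul : ∀ y y' y'' p q, p ∈ P y y' → q ∈ P y' y'' → p * q ∈ P y y'' := by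
    rintro y y' y'' p q ⟨hy, hy', hrr, k, hk, rfl⟩ ⟨-, hy'', hrr', k', hk', rfl⟩
    rw [← hrr] at hk'
    refine ⟨hy, hy'', hrr.trans hrr', k * k', mul_mem hk hk', ?_⟩
    rw [← hrr, mkmul y hy k hk k' hk']
    group
  have Pact : ∀ y y' p, p ∈ P y y' → φb p • y' = y := by
    rintro y y' p ⟨hy, hy', hrr, k, hk, rfl⟩
    have h1 : (φ (t y'))⁻¹ • y' = r y := by rw [inv_smul_eq_iff, hrr, ht]
    have h2 : k • r y = r y := hKst _ hk
    rw [map_mul, map_mul, map_inv, hφb, hφb, hφb, hσ _ _ hk, mul_smul, mul_smul, h1, h2, ht]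
  have Pinj : ∀ y p, p ∈ P y y → φb p = 1 → p = 1 := by
    rintro y p ⟨hy, -, -, k, hk, rfl⟩ h
    rw [map_mul, map_mul, map_inv, hφb, hφb, hσ _ _ hk, conj_eq_one_iff] at h
    rw [h, mkone y hy]
    group
  have PD : ∀ d ∈ D, ∀ y ∈ Y, ∀ y' ∈ Y, φ d • y' = y → mk d ∈ P y y' := by
    intro d hd y hy y' hy' h
    refine ⟨hy, hy', (hr d _ _ h).symm, _, hKmem d hd y hy y' hy' h, ?_⟩
    rw [← map_inv, ← map_mul, ← map_mul]
    refine QuotientGroup.eq.mpr ?_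
    exact Subgroup.subset_normalClosure (Or.inr ⟨d, hd, y, hy, y', hy', h, rfl⟩)
  have Pstar : ∀ y ∈ Y, ∀ y1 ∈ Y, ∀ y' ∈ Y, ∀ y2 ∈ Y, Adj y y1 → Adj y' y2 →
      ∀ p ∈ P y y', φb p • y2 = y1 → p ∈ P y1 y2 := by
    intro y hy y1 hy1 y' hy' y2 hy2 _ had p hp hp2
    have hp1 := Pact _ _ _ hp
    obtain ⟨g, rfl⟩ : ∃ g, mk g = p := QuotientGroup.mk'_surjective _ p
    rw [hφb] at hp1 hp2
    have hT' := hT ((y, y1), (y', y2)) ⟨g, hp1, hp2⟩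
    set d0 := T ((y, y1), (y', y2)) with hd0
    have hd0D : d0 ∈ D := Or.inr ⟨_, ⟨⟨hy, hy1⟩, ⟨hy', hy2⟩⟩, rfl⟩
    have hu : φ (d0⁻¹ * g) ∈ Subgroup.closure (φ '' Dg y' y2) := by
      rw [Dgcl y' y2 had]
      refine ⟨⟨_, rfl⟩, ?_, ?_⟩
      · change φ (d0⁻¹ * g) • y' = y'
        rw [map_mul, map_inv, mul_smul, hp1,
          inv_smul_eq_iff]
        exact hT'.1.symm
      · change φ (d0⁻¹ * g) • y2 = y2
        rw [map_mul, map_inv, mul_smul, hp2,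
          inv_smul_eq_iff]
        exact hT'.2.symm
    have hq : ∀ u ∈ Subgroup.closure (φ '' Dg y' y2), ∃ q, q ∈ P y' y' ∧ q ∈ P y2 y2 ∧
        φb q = u := by
      intro u hu
      induction hu using Subgroup.closure_induction with
      | mem x hx =>
        obtain ⟨d, hd, rfl⟩ := hx
        have hdD : d ∈ D := Or.inl (Or.inr (Set.mem_biUnion hy' (Set.mem_biUnion hy2 hd)))
        have hst : φ d ∈ φ.range ⊓ (MulAction.stabilizer G y' ⊓ MulAction.stabilizer G y2) := by
          rw [← Dgcl y' y2 had]
          exact Subgroup.subset_closure ⟨d, hd, rfl⟩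
        exact ⟨mk d, PD d hdD y' hy' y' hy' hst.2.1, PD d hdD y2 hy2 y2 hy2 hst.2.2, hφb d⟩
      | one => exact ⟨1, P1 _ hy', P1 _ hy2, map_one _⟩
      | mul a b _ _ ha hb =>
        obtain ⟨q, h1, h2, h3⟩ := ha
        obtain ⟨q', h1', h2', h3'⟩ := hb
        exact ⟨q * q', Pmul _ _ _ _ _ h1 h1', Pmul _ _ _ _ _ h2 h2', by rw [map_mul, h3, h3']⟩
      | inv a _ ha =>
        obtain ⟨q, h1, h2, h3⟩ := ha
        exact ⟨q⁻¹, Pinv _ _ _ h1, Pinv _ _ _ h2, by rw [map_inv, h3]⟩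
    obtain ⟨q, hq1, hq2, hqu⟩ := hq _ hu
    have e1 : mk d0 ∈ P y y' := PD d0 hd0D y hy y' hy' hT'.1
    have e2 : mk d0 ∈ P y1 y2 := PD d0 hd0D y1 hy1 y2 hy2 hT'.2
    have e3 : (mk g)⁻¹ * (mk d0 * q) = 1 := by
      refine Pinj y' _ (Pmul _ _ _ _ _ (Pinv _ _ _ hp) (Pmul _ _ _ _ _ e1 hq1)) ?_
      rw [map_mul, map_mul, map_inv, hqu, hφb, hφb, map_mul, map_inv]
      group
    rw [inv_mul_eq_one] at e3
    rw [e3]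
    exact Pmul _ _ _ _ _ e2 hq2
  have hgen : Subgroup.closure (Set.range fun i : Fin n => mk (FreeGroup.of i)) = ⊤ := by
    rw [Set.range_comp' mk, ← MonoidHom.map_closure, FreeGroup.closure_range_of,
      Subgroup.map_top_of_surjective _ (QuotientGroup.mk'_surjective _)]
  have hinj : Function.Injective φb := by
    refine inj_of_local φb Adj Y P hsymm hinv hred x0 hx0 hYconn P1 Pinv Pmul Pact Pinj Pstar
      _ hgen ?_
    rintro _ ⟨i, rfl⟩
    refine ⟨hYgen i, ?_⟩
    exact PD _ (Or.inl (Or.inl ⟨i, rfl⟩)) _ (hYgen i) _ hx0 rfl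
  have hkereq : Subgroup.normalClosure R = φ.ker := by
    refine le_antisymm hle ?_
    intro x hx
    have : mk x = 1 := hinj (by rw [hφb, map_one]; exact hx)
    exact (QuotientGroup.eq_one_iff _).mp this
  refine ⟨n, R, hRfin, ⟨?_⟩⟩
  exact (QuotientGroup.quotientMulEquivOfEq hkereq).trans (QuotientGroup.quotientKerEquivRange φ)

end TreeCoh

namespace AmalgTree

open Monoid Relation

lemma fp_of_equiv {G H : Type*} [Group G] [Group H] (e : G ≃* H)
    (h : Group.FinitelyPresented G) : Group.FinitelyPresented H := by
  obtain ⟨n, rels, hf, ⟨f⟩⟩ := h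
  exact ⟨n, rels, hf, ⟨f.trans e⟩⟩

lemma fg_comap {A G : Type*} [Group A] [Group G] (ψ : A →* G) (hψ : Function.Injective ψ)
    (K : Subgroup G) (hK : K ≤ ψ.range) (hfg : K.FG) : (K.comap ψ).FG := by
  have hm : (K.comap ψ).map ψ = K := Subgroup.map_comap_eq_self hK
  have e : (K.comap ψ) ≃* K :=
    ((K.comap ψ).equivMapOfInjective ψ hψ).trans (MulEquiv.subgroupCongr hm)
  rw [← Group.fg_iff_subgroup_fg] at hfg ⊢
  exact Group.fg_of_surjective (f := e.symm.toMonoidHom) e.symm.surjective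

lemma fp_of_le_range {A G : Type*} [Group A] [Group G] (ψ : A →* G) (hψ : Function.Injective ψ)
    (hA : Group.Coherent A) (K : Subgroup G) (hK : K ≤ ψ.range) (hfg : K.FG) :
    Group.FinitelyPresented K := by
  have hm : (K.comap ψ).map ψ = K := Subgroup.map_comap_eq_self hK
  exact fp_of_equiv (((K.comap ψ).equivMapOfInjective ψ hψ).trans (MulEquiv.subgroupCongr hm))
    (hA _ (fg_comap ψ hψ K hK hfg))

lemma fg_of_le_range {A G : Type*} [Group A] [Group G] (ψ : A →* G)
    (hA : Group.Slender A) (K : Subgroup G) (hK : K ≤ ψ.range) : K.FG := by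
  have hm : (K.comap ψ).map ψ = K := Subgroup.map_comap_eq_self hK
  rw [← hm]
  have := hA (K.comap ψ)
  rw [← Group.fg_iff_subgroup_fg] at this ⊢
  exact Group.fg_of_surjective (f := ψ.subgroupMap (K.comap ψ)) (ψ.subgroupMap_surjective _)

lemma coherent_of_injective {G P : Type*} [Group G] [Group P] (h : G →* P)
    (hh : Function.Injective h) (hP : Group.Coherent P) : Group.Coherent G := by
  intro K hK
  refine fp_of_equiv (K.equivMapOfInjective h hh).symm (hP _ ?_)
  rw [← Group.fg_iff_subgroup_fg] at hK ⊢
  exact Group.fg_of_surjective (f := h.subgroupMap K) (h.subgroupMap_surjective _)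

section

variable {A : Bool → Type} {C : Type} [∀ i, Group (A i)] [Group C] (φ : ∀ i, C →* A i)

abbrev W (i : Bool) : Subgroup (PushoutI φ) := (PushoutI.of (φ := φ) i).range

def TV : Type := Σ i : Bool, (PushoutI φ ⧸ W φ i)

def vtx (i : Bool) (g : PushoutI φ) : TV φ := ⟨i, (g : PushoutI φ ⧸ W φ i)⟩

instance : MulAction (PushoutI φ) (TV φ) where
  smul g x := ⟨x.1, g • x.2⟩
  one_smul x := by
    change (⟨x.1, (1 : PushoutI φ) • x.2⟩ : TV φ) = x
    rw [one_smul]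
    rfl
  mul_smul g h x := by
    change (⟨x.1, (g * h) • x.2⟩ : TV φ) = ⟨x.1, g • h • x.2⟩
    rw [mul_smul]

lemma smul_vtx (g h : PushoutI φ) (i : Bool) : g • vtx φ i h = vtx φ i (g * h) := rfl

lemma exists_vtx (x : TV φ) : ∃ g, x = vtx φ x.1 g := by
  obtain ⟨i, q⟩ := x
  obtain ⟨g, rfl⟩ := QuotientGroup.mk_surjective q
  exact ⟨g, rfl⟩

lemma vtx_eq_iff (i : Bool) (g h : PushoutI φ) : vtx φ i g = vtx φ i h ↔ g⁻¹ * h ∈ W φ i := by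
  unfold vtx
  constructor
  · intro H
    have := eq_of_heq (Sigma.mk.inj H).2
    exact QuotientGroup.eq.mp this
  · intro H
    rw [QuotientGroup.eq.mpr H]

def TAdj (x y : TV φ) : Prop := ∃ (g : PushoutI φ) (i : Bool), x = vtx φ i g ∧ y = vtx φ (!i) g

lemma tadj_symm (x y : TV φ) (h : TAdj φ x y) : TAdj φ y x := by
  obtain ⟨g, i, rfl, rfl⟩ := h
  exact ⟨g, !i, rfl, by rw [Bool.not_not]⟩

lemma tadj_inv (g : PushoutI φ) (x y : TV φ) (h : TAdj φ x y) : TAdj φ (g • x) (g • y) := by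
  obtain ⟨k, i, rfl, rfl⟩ := h
  exact ⟨g * k, i, rfl, rfl⟩

lemma base_mem_W (c : C) (i : Bool) : PushoutI.base φ c ∈ W φ i :=
  ⟨φ i c, PushoutI.of_apply_eq_base φ i c⟩

lemma path_same (g : PushoutI φ) : ∀ (h : PushoutI φ) (i : Bool),
    ReflTransGen (TAdj φ) (vtx φ i h) (vtx φ i (h * g)) := by
  induction g using PushoutI.induction_on with
  | of j a =>
    intro h i
    by_cases hij : i = j
    · subst hij
      rw [(vtx_eq_iff φ i h (h * PushoutI.of i a)).mpr (by simp [W])]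
    · have hj : j = !i := by cases i <;> cases j <;> simp_all
      subst hj
      have e : vtx φ (!i) h = vtx φ (!i) (h * PushoutI.of (!i) a) :=
        (vtx_eq_iff φ _ _ _).mpr (by simp [W])
      refine (ReflTransGen.single ⟨h, i, rfl, rfl⟩).tail ?_
      rw [e]
      exact tadj_symm φ _ _ ⟨_, i, rfl, rfl⟩
  | base c =>
    intro h i
    rw [(vtx_eq_iff φ i h (h * PushoutI.base φ c)).mpr (by
      rw [inv_mul_cancel_left]; exact base_mem_W φ c i)]
  | mul x y hx hy =>
    intro h i
    rw [← mul_assoc]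
    exact (hx h i).trans (hy _ i)

lemma tconn (x y : TV φ) : ReflTransGen (TAdj φ) x y := by
  obtain ⟨g, hg⟩ := exists_vtx φ x
  obtain ⟨h, hh⟩ := exists_vtx φ y
  have key := path_same φ (g⁻¹ * h) g x.1
  rw [mul_inv_cancel_left, ← hg] at key
  by_cases e : y.1 = x.1
  · rw [hh, e]; exact key
  · have e' : y.1 = !x.1 := by
      cases h1 : y.1 <;> cases h2 : x.1 <;> simp_all
    refine key.tail ?_
    rw [hh, e']
    exact ⟨h, _, rfl, rfl⟩

lemma mem_stab (i : Bool) (g k : PushoutI φ) :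
    k ∈ MulAction.stabilizer (PushoutI φ) (vtx φ i g) ↔ g⁻¹ * k * g ∈ W φ i := by
  rw [MulAction.mem_stabilizer_iff, smul_vtx, eq_comm, vtx_eq_iff, mul_assoc]

def conjHom {B G : Type*} [Group B] [Group G] (f : B →* G) (g : G) : B →* G :=
  (MulAut.conj g).toMonoidHom.comp f

lemma conjHom_apply {B G : Type*} [Group B] [Group G] (f : B →* G) (g : G) (b : B) :
    conjHom f g b = g * f b * g⁻¹ := rfl

lemma conjHom_inj {B G : Type*} [Group B] [Group G] (f : B →* G) (g : G)
    (hf : Function.Injective f) : Function.Injective (conjHom f g) :=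
  (MulAut.conj g).injective.comp hf

lemma mem_conjHom {B G : Type*} [Group B] [Group G] (f : B →* G) (g k : G)
    (h : g⁻¹ * k * g ∈ f.range) : k ∈ (conjHom f g).range := by
  obtain ⟨b, hb⟩ := h
  refine ⟨b, ?_⟩
  rw [conjHom_apply, hb]
  group

/-- existence of a reduced word for an alternating sequence -/
lemma exists_word (m : ℕ) : ∀ (g : ℕ → PushoutI φ) (i : Bool),
    (∀ k < m, (g k)⁻¹ * g (k + 1) ∈ W φ (xor i (k % 2 == 1))) →
    (∀ k < m, (g k)⁻¹ * g (k + 1) ∉ (PushoutI.base φ).range) →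
    ∃ w : CoprodI.Word A, PushoutI.Reduced φ w ∧
      PushoutI.ofCoprodI (φ := φ) w.prod = (g 0)⁻¹ * g m ∧
      w.fstIdx = if m = 0 then none else some i := by
  induction m with
  | zero =>
    intro g i _ _
    refine ⟨.empty, ?_, by simp, rfl⟩
    intro x hx
    simp [CoprodI.Word.empty] at hx
  | succ m ih =>
    intro g i hW hB
    obtain ⟨w, hw, hp, hi⟩ := ih (fun k => g (k + 1)) (!i)
      (fun k hk => by
        have := hW (k + 1) (by omega)
        have e : (xor i ((k + 1) % 2 == 1)) = xor (!i) (k % 2 == 1) := by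
          rcases Nat.mod_two_eq_zero_or_one k with h | h
          · have : (k + 1) % 2 = 1 := by omega
            rw [h, this]; cases i <;> rfl
          · have : (k + 1) % 2 = 0 := by omega
            rw [h, this]; cases i <;> rfl
        rw [e] at this
        exact this)
      (fun k hk => hB (k + 1) (by omega))
    have h0 := hW 0 (by omega)
    have e0 : (xor i (0 % 2 == 1)) = i := by cases i <;> rfl
    rw [e0] at h0
    obtain ⟨a, ha⟩ := h0
    have hb0 := hB 0 (by omega)
    rw [← ha] at hb0
    have ha' : a ∉ (φ i).range := by
      rintro ⟨c, rfl⟩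
      exact hb0 ⟨c, (PushoutI.of_apply_eq_base φ i c).symm⟩
    have ha1 : a ≠ 1 := by
      rintro rfl
      exact ha' (one_mem _)
    have hne : w.fstIdx ≠ some i := by
      rw [hi]
      split_ifs
      · simp
      · cases i <;> simp
    refine ⟨CoprodI.Word.cons a w hne ha1, ?_, ?_, ?_⟩
    · intro x hx
      simp only [CoprodI.Word.cons, List.mem_cons] at hx
      rcases hx with rfl | hx
      · exact ha'
      · exact hw x hx
    · rw [CoprodI.Word.prod_cons, map_mul, hp, PushoutI.ofCoprodI_of, ha]
      group
    · rw [CoprodI.Word.fstIdx_cons]; simp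

lemma no_base (hφ : ∀ i, Function.Injective (φ i)) (m : ℕ) (hm : 0 < m) (g : ℕ → PushoutI φ) (i : Bool)
    (hW : ∀ k < m, (g k)⁻¹ * g (k + 1) ∈ W φ (xor i (k % 2 == 1)))
    (hB : ∀ k < m, (g k)⁻¹ * g (k + 1) ∉ (PushoutI.base φ).range) :
    (g 0)⁻¹ * g m ∉ (PushoutI.base φ).range := by
  intro h
  obtain ⟨w, hw, hp, hi⟩ := exists_word φ m g i hW hB
  have := PushoutI.Reduced.eq_empty_of_mem_range hφ hw (by rw [hp]; exact h)
  rw [this, if_neg (by omega)] at hi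
  simp [CoprodI.Word.fstIdx, CoprodI.Word.empty] at hi

lemma W_inter (hφ : ∀ i, Function.Injective (φ i)) (i : Bool) (x : PushoutI φ) (h1 : x ∈ W φ i) (h2 : x ∈ W φ (!i)) :
    x ∈ (PushoutI.base φ).range := by
  rw [← PushoutI.inf_of_range_eq_base_range hφ (show i ≠ !i by cases i <;> simp)]
  exact ⟨h1, h2⟩

lemma tree_noCircuit (hφ : ∀ i, Function.Injective (φ i)) : TreeCoh.NoCircuit (TAdj φ) := by
  intro n f hn hadj hback hclosed
  choose! g i hg using hadj
  -- types of the vertices alternate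
  have ht : ∀ k ≤ n, (f k).1 = xor (f 0).1 (k % 2 == 1) := by
    intro k
    induction k with
    | zero => intro _; simp
    | succ k ih =>
      intro hk
      have h1 := congrArg Sigma.fst (hg k (by omega)).1
      have h2 := congrArg Sigma.fst (hg k (by omega)).2
      change (f k).1 = i k at h1
      change (f (k + 1)).1 = !(i k) at h2
      rw [h2, ← h1, ih (by omega)]
      rcases Nat.mod_two_eq_zero_or_one k with h | h
      · have h' : (k + 1) % 2 = 1 := by omega
        rw [h, h']; cases (f 0).1 <;> rfl
      · have h' : (k + 1) % 2 = 0 := by omega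
        rw [h, h']; cases (f 0).1 <;> rfl
  have hi : ∀ k < n, i k = xor (f 0).1 (k % 2 == 1) := by
    intro k hk
    rw [← ht k hk.le]
    exact (congrArg Sigma.fst (hg k hk).1).symm
  have hnot : ∀ k, (!(xor (f 0).1 (k % 2 == 1))) = xor (!(f 0).1) (k % 2 == 1) := by
    intro k; cases (f 0).1 <;> cases (k % 2 == 1) <;> rfl
  have hnot' : ∀ k, (xor (f 0).1 ((k + 1) % 2 == 1)) = !(xor (f 0).1 (k % 2 == 1)) := by
    intro k
    rcases Nat.mod_two_eq_zero_or_one k with h | h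
    · have h' : (k + 1) % 2 = 1 := by omega
      rw [h, h']; cases (f 0).1 <;> rfl
    · have h' : (k + 1) % 2 = 0 := by omega
      rw [h, h']; cases (f 0).1 <;> rfl
  have hpar : n % 2 = 0 := by
    have := ht n le_rfl
    rw [← hclosed] at this
    rcases Nat.mod_two_eq_zero_or_one n with h | h
    · exact h
    · rw [h] at this
      cases h0 : (f 0).1 <;> rw [h0] at this <;> simp at this
  have hW : ∀ k, k + 1 < n → (g k)⁻¹ * g (k + 1) ∈ W φ (xor (!(f 0).1) (k % 2 == 1)) := by
    intro k hk
    have h1 := (hg k (by omega)).2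
    have h2 := (hg (k + 1) hk).1
    rw [h1, hi k (by omega), hi (k + 1) hk, hnot', vtx_eq_iff, hnot] at h2
    exact h2
  have hB : ∀ k, k + 1 < n → (g k)⁻¹ * g (k + 1) ∉ (PushoutI.base φ).range := by
    rintro k hk ⟨c, hc⟩
    apply hback k (by omega)
    rw [(hg k (by omega)).1, (hg (k + 1) hk).2, hi k (by omega), hi (k + 1) hk, hnot',
      Bool.not_not, vtx_eq_iff, ← hc]
    exact base_mem_W φ c _
  -- closing edge
  have hcl : (g (n - 1))⁻¹ * g 0 ∈ W φ (f 0).1 := by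
    have h1 := (hg (n - 1) (by omega)).2
    have h2 := (hg 0 hn).1
    have e : n - 1 + 1 = n := by omega
    have o : (n - 1) % 2 = 1 := by omega
    rw [e, ← hclosed, h2, hi 0 hn, hi (n - 1) (by omega), o] at h1
    have e1 : (!(xor (f 0).1 (1 == 1))) = (f 0).1 := by cases (f 0).1 <;> rfl
    have e2 : (xor (f 0).1 (0 % 2 == 1)) = (f 0).1 := by cases (f 0).1 <;> rfl
    rw [e1, e2] at h1
    exact (vtx_eq_iff φ _ _ _).mp h1.symm
  by_cases hb : (g (n - 1))⁻¹ * g 0 ∈ (PushoutI.base φ).range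
  · refine no_base φ hφ (n - 1) (by omega) g (!(f 0).1) (fun k hk => hW k (by omega))
      (fun k hk => hB k (by omega)) ?_
    have := inv_mem hb
    rwa [mul_inv_rev, inv_inv] at this
  · let g' : ℕ → PushoutI φ := fun k => if k < n then g k else g 0
    have g'1 : ∀ k, k < n → g' k = g k := fun k hk => if_pos hk
    have g'2 : g' n = g 0 := if_neg (lt_irrefl n)
    have e : n - 1 + 1 = n := by omega
    have o : (n - 1) % 2 = 1 := by omega
    refine no_base φ hφ n hn g' (!(f 0).1) ?_ ?_ ?_
    · intro k hk
      by_cases hk' : k + 1 < n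
      · rw [g'1 k hk, g'1 _ hk']; exact hW k hk'
      · obtain rfl : k = n - 1 := by omega
        rw [g'1 _ hk, e, g'2, o]
        have e1 : (xor (!(f 0).1) (1 == 1)) = (f 0).1 := by cases (f 0).1 <;> rfl
        rw [e1]; exact hcl
    · intro k hk
      by_cases hk' : k + 1 < n
      · rw [g'1 k hk, g'1 _ hk']; exact hB k hk'
      · obtain rfl : k = n - 1 := by omega
        rw [g'1 _ hk, e, g'2]
        exact hb
    · rw [g'1 0 hn, g'2, inv_mul_cancel]
      exact one_mem _

theorem pushout_coherent (hφ : ∀ i, Function.Injective (φ i))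
    (hA : ∀ i, Group.Coherent (A i)) (hC : Group.Slender C) :
    Group.Coherent (PushoutI φ) := by
  have : Nonempty (TV φ) := ⟨vtx φ true 1⟩
  refine TreeCoh.coherent_of_tree (X := TV φ) (TAdj φ) (tadj_symm φ) (tadj_inv φ) (tconn φ)
    (tree_noCircuit φ hφ) ?_ ?_
  · intro x K hK hfg
    obtain ⟨g, hg⟩ := exists_vtx φ x
    refine fp_of_le_range (conjHom (PushoutI.of (φ := φ) x.1) g)
      (conjHom_inj _ _ (PushoutI.of_injective hφ _)) (hA _) K ?_ hfg
    intro k hk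
    have := hK hk
    rw [hg, mem_stab] at this
    exact mem_conjHom _ _ _ this
  · rintro x y ⟨g, i, rfl, rfl⟩ K hx hy
    refine fg_of_le_range (conjHom (PushoutI.base φ) g) hC K ?_
    intro k hk
    exact mem_conjHom _ _ _ (W_inter φ hφ i _ ((mem_stab φ _ _ _).mp (hx hk))
      ((mem_stab φ _ _ _).mp (hy hk)))

end

theorem coxeter_coherent {V : Type} (Γ : SimpleGraph V) (M : CoxeterMatrix V)
    (hM : M.IsMatrixOf Γ)
    (S₁ S₂ : Set V) (hcover : S₁ ∪ S₂ = Set.univ)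
    (hedges : ∀ v w : V, Γ.Adj v w → (v ∈ S₁ ∧ w ∈ S₁) ∨ (v ∈ S₂ ∧ w ∈ S₂))
    (h1 : Group.Coherent (M.restrict S₁).Group) (h2 : Group.Coherent (M.restrict S₂).Group)
    (h12 : Group.Slender (M.restrict (S₁ ∩ S₂)).Group) : Group.Coherent M.Group := by
  let S : Bool → Set V := fun b => match b with
    | true => S₁
    | false => S₂
  have hS : ∀ b, S₁ ∩ S₂ ⊆ S b := fun b => match b with
    | true => Set.inter_subset_left
    | false => Set.inter_subset_right
  let φ : ∀ b, (M.restrict (S₁ ∩ S₂)).Group →* (M.restrict (S b)).Group :=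
    fun b => M.restrictHom (hS b)
  have hφ : ∀ b, Function.Injective (φ b) := fun b => CoxGeom.restrictHom_injective M (hS b)
  have hP : Group.Coherent (PushoutI φ) := by
    refine pushout_coherent φ hφ ?_ h12
    intro b
    cases b
    · exact h2
    · exact h1
  let k₁ : (M.restrict S₁).Group →* PushoutI φ := PushoutI.of (φ := φ) true
  let k₂ : (M.restrict S₂).Group →* PushoutI φ := PushoutI.of (φ := φ) false
  obtain ⟨h, ⟨hh1, hh2⟩, -⟩ := CoxGeom.pushout_property Γ M hM S₁ S₂ hcover hedges (PushoutI φ)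
    k₁ k₂ ((PushoutI.of_comp_eq_base (φ := φ) true).trans
      (PushoutI.of_comp_eq_base (φ := φ) false).symm)
  have hcomp : ∀ b, (M.restrictIncl (S b)).comp (φ b) = M.restrictIncl (S₁ ∩ S₂) := by
    intro b
    apply (M.restrict (S₁ ∩ S₂)).toCoxeterSystem.ext_simple
    intro a
    rw [MonoidHom.comp_apply]
    simp only [φ]
    rw [CoxGeom.restrictHom_simple, CoxGeom.restrictIncl_simple, CoxGeom.restrictIncl_simple]
  let r : PushoutI φ →* M.Group :=
    PushoutI.lift (fun b => M.restrictIncl (S b)) (M.restrictIncl (S₁ ∩ S₂)) hcomp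
  have hr1 : r.comp k₁ = M.restrictIncl S₁ := by
    ext x
    exact PushoutI.lift_of (i := true) _ _ hcomp x
  have hr2 : r.comp k₂ = M.restrictIncl S₂ := by
    ext x
    exact PushoutI.lift_of (i := false) _ _ hcomp x
  have hid : r.comp h = MonoidHom.id _ := by
    have hk : (M.restrictIncl S₁).comp
        (M.restrictHom (Set.inter_subset_left (s := S₁) (t := S₂))) =
        (M.restrictIncl S₂).comp
        (M.restrictHom (Set.inter_subset_right (s := S₁) (t := S₂))) :=
      (hcomp true).trans (hcomp false).symm
    refine (CoxGeom.pushout_property Γ M hM S₁ S₂ hcover hedges M.Group _ _ hk).unique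
      ⟨?_, ?_⟩ ⟨?_, ?_⟩
    · rw [MonoidHom.comp_assoc, hh1, hr1]
    · rw [MonoidHom.comp_assoc, hh2, hr2]
    · rfl
    · rfl
  refine coherent_of_injective h ?_ hP
  intro x y hxy
  have := congrArg r hxy
  rw [← MonoidHom.comp_apply, ← MonoidHom.comp_apply, hid] at this
  exact this

end AmalgTree

/-- Let `Γ` be a finite simplicial graph with edge labels in `{2,3,4,...}`
(recorded by the Coxeter matrix `M`), and let `Γ₁ = Γ.induce S₁`, `Γ₂ = Γ.induce S₂` be
induced subgraphs with `Γ = Γ₁ ∪ Γ₂` (every vertex and every edge of `Γ` lies in `Γ₁` or in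
`Γ₂`).  Then `C(Γ)`, via the canonical maps, is the amalgamated free product
`C(Γ₁) ∗_{C(Γ₁ ∩ Γ₂)} C(Γ₂)` (the canonical maps `C(Γ₁ ∩ Γ₂) → C(Γᵢ)` are injective and
`C(Γ)` is the pushout); consequently, if `C(Γ₁)` and `C(Γ₂)` are coherent and `C(Γ₁ ∩ Γ₂)` is
slender, then `C(Γ)` is coherent. -/
theorem coxeterGroup_amalgam_decomposition_and_coherent
    {V : Type} [Fintype V] (Γ : SimpleGraph V) (M : CoxeterMatrix V)
    (hM : M.IsMatrixOf Γ)
    (S₁ S₂ : Set V) (hcover : S₁ ∪ S₂ = Set.univ)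
    (hedges : ∀ v w : V, Γ.Adj v w → (v ∈ S₁ ∧ w ∈ S₁) ∨ (v ∈ S₂ ∧ w ∈ S₂)) :
    (Function.Injective (M.restrictHom (Set.inter_subset_left (s := S₁) (t := S₂))) ∧
     Function.Injective (M.restrictHom (Set.inter_subset_right (s := S₁) (t := S₂))) ∧
     ∀ (Q : Type) [Group Q]
       (k₁ : (M.restrict S₁).Group →* Q) (k₂ : (M.restrict S₂).Group →* Q),
       k₁.comp (M.restrictHom (Set.inter_subset_left (s := S₁) (t := S₂))) =
         k₂.comp (M.restrictHom (Set.inter_subset_right (s := S₁) (t := S₂))) →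
       ∃! h : M.Group →* Q,
         h.comp (M.restrictIncl S₁) = k₁ ∧ h.comp (M.restrictIncl S₂) = k₂) ∧
    (Group.Coherent (M.restrict S₁).Group → Group.Coherent (M.restrict S₂).Group →
     Group.Slender (M.restrict (S₁ ∩ S₂)).Group →
     Group.Coherent M.Group) := by
  refine ⟨⟨CoxGeom.restrictHom_injective M _, CoxGeom.restrictHom_injective M _, ?_⟩, ?_⟩
  · intro Q _ k₁ k₂ hk
    exact CoxGeom.pushout_property Γ M hM S₁ S₂ hcover hedges Q k₁ k₂ hk
  · exact AmalgTree.coxeter_coherent Γ M hM S₁ S₂ hcover hedges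
end
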